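/- Let q ≥ 4 be an even integer, λ = 2cos(π/q), 1/2 ≤ α ≤ 1/λ, and set ℒ_α = min{ λ/(λ+2), λ(2 − αλ²)/(4 − λ²) } and C_{q,α} = 1/log((1 + cos(π/q))/sin(π/q)). For x ∈ [λ(α−1), αλ] with T_α^n(x) ≠ 0 for all n ≥ 0, define the approximation coefficients Θ_n(x) = S_n²·|x − R_n/S_n|, where R_n/S_n are the α-Rosen convergents of x. Then for Lebesgue-almost every such x and for every c ≥ 1/ℒ_α, the limit lim_{N→∞} (1/N)·#{ n : 1 ≤ n ≤ N, Θ_n(x) < 1/c } exists and equals λ·C_{q,α}/c. -/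

import Mathlib

open Set MeasureTheory

/-- The digit function `d(x) = ⌊|1/(xλ)| + 1 - α⌋` of the α-Rosen continued fraction. -/
noncomputable def dfun (lam α x : ℝ) : ℤ := ⌊|1 / (x * lam)| + 1 - α⌋

/-- The α-Rosen continued fraction map `T_α`. -/
noncomputable def Tmap (lam α x : ℝ) : ℝ :=
  if x = 0 then 0 else |1 / x| - lam * (dfun lam α x : ℝ)

/-- The two-dimensional natural extension map `𝒯_α(x, y) = (T_α(x), 1/(d(x)λ + ε(x)y))`. -/
noncomputable def Tnat (lam α : ℝ) (z : ℝ × ℝ) : ℝ × ℝ :=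
  (Tmap lam α z.1, 1 / ((dfun lam α z.1 : ℝ) * lam + Real.sign z.1 * z.2))

open scoped Classical

/-- The pair `(Rₙ, R_{n-1})` of numerators of the α-Rosen convergents of `x`. -/
noncomputable def Rpair (lam α x : ℝ) : ℕ → ℝ × ℝ
  | 0 => (0, 1)
  | n + 1 =>
    ((dfun lam α ((Tmap lam α)^[n] x) : ℝ) * lam * (Rpair lam α x n).1
        + Real.sign ((Tmap lam α)^[n] x) * (Rpair lam α x n).2,
      (Rpair lam α x n).1)

/-- The pair `(Sₙ, S_{n-1})` of denominators of the α-Rosen convergents of `x`. -/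
noncomputable def Spair (lam α x : ℝ) : ℕ → ℝ × ℝ
  | 0 => (1, 0)
  | n + 1 =>
    ((dfun lam α ((Tmap lam α)^[n] x) : ℝ) * lam * (Spair lam α x n).1
        + Real.sign ((Tmap lam α)^[n] x) * (Spair lam α x n).2,
      (Spair lam α x n).1)

/-- The approximation coefficients `Θₙ(x) = Sₙ² |x - Rₙ/Sₙ|`. -/
noncomputable def Theta (lam α x : ℝ) (n : ℕ) : ℝ :=
  (Spair lam α x n).1 ^ 2 * |x - (Rpair lam α x n).1 / (Spair lam α x n).1|

/-- Maximal function used in the maximal ergodic theorem. -/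
noncomputable def maxFn {X : Type*} (T : X → X) (f : X → ℝ) : ℕ → X → ℝ
  | 0 => fun _ => 0
  | n + 1 => fun x => max 0 (f x + maxFn T f n (T x))

lemma maxFn_nonneg {X : Type*} (T : X → X) (f : X → ℝ) (n : ℕ) (x : X) : 0 ≤ maxFn T f n x := by
  cases n <;> simp [maxFn]

lemma maxFn_mono {X : Type*} (T : X → X) (f : X → ℝ) (n : ℕ) :
    ∀ x, maxFn T f n x ≤ maxFn T f (n + 1) x := by
  induction n with
  | zero => intro x; exact maxFn_nonneg T f 1 x
  | succ n ih => intro x; exact max_le_max le_rfl (by linarith [ih (T x)])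

lemma birkhoffSum_le_maxFn {X : Type*} (T : X → X) (f : X → ℝ) (n : ℕ) :
    ∀ x, birkhoffSum T f n x ≤ maxFn T f n x := by
  induction n with
  | zero => intro x; simp [maxFn]
  | succ n ih =>
    intro x
    rw [birkhoffSum_succ']
    exact le_trans (by linarith [ih (T x)]) (le_max_right _ _)

lemma maxFn_integrable {X : Type*} [MeasurableSpace X] {μ : Measure X} {T : X → X}
    (hT : MeasurePreserving T μ μ) {f : X → ℝ} (hf : Integrable f μ) (n : ℕ) :
    Integrable (maxFn T f n) μ := by
  induction n with
  | zero => exact integrable_zero _ _ _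
  | succ n ih =>
    exact (integrable_zero X ℝ μ).sup (hf.add (hT.integrable_comp_of_integrable ih))

lemma maxFn_measurable {X : Type*} [MeasurableSpace X] {T : X → X}
    (hT : Measurable T) {f : X → ℝ} (hf : Measurable f) (n : ℕ) :
    Measurable (maxFn T f n) := by
  induction n with
  | zero => exact measurable_const
  | succ n ih =>
    exact measurable_const.max (hf.add (ih.comp hT))

/-- Maximal ergodic theorem (in the form: if a.e. orbit has a positive Birkhoff sum then
the integral is nonnegative). -/
theorem maximal_ergodic {X : Type*} [MeasurableSpace X] {μ : Measure X} {T : X → X}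
    (hT : MeasurePreserving T μ μ) {f : X → ℝ} (hfm : Measurable f) (hf : Integrable f μ)
    (hpos : ∀ᵐ x ∂μ, ∃ n, 0 < birkhoffSum T f n x) : 0 ≤ ∫ x, f x ∂μ := by
  set E : ℕ → Set X := fun n => {x | 0 < maxFn T f (n + 1) x} with hE
  have hEm : ∀ n, MeasurableSet (E n) := fun n =>
    measurableSet_lt measurable_const (maxFn_measurable hT.measurable hfm (n + 1))
  have hmono : Monotone E := by
    apply monotone_nat_of_le_succ
    intro n x hx
    exact lt_of_lt_of_le hx (maxFn_mono T f (n + 1) x)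
  have hstep : ∀ n, 0 ≤ ∫ x in E n, f x ∂μ := by
    intro n
    set M := maxFn T f (n + 1) with hM
    have hMi : Integrable M μ := maxFn_integrable hT hf (n + 1)
    have hMT : Integrable (M ∘ T) μ := hT.integrable_comp_of_integrable hMi
    have h1 : ∫ x in E n, M x ∂μ = ∫ x, M x ∂μ := by
      apply setIntegral_eq_integral_of_forall_compl_eq_zero
      intro x hx
      exact le_antisymm (not_lt.mp hx) (maxFn_nonneg T f (n + 1) x)
    have h2 : ∫ x in E n, (M ∘ T) x ∂μ ≤ ∫ x, (M ∘ T) x ∂μ :=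
      setIntegral_le_integral hMT (Filter.Eventually.of_forall fun x => maxFn_nonneg T f _ _)
    have h3 : ∫ x, (M ∘ T) x ∂μ = ∫ x, M x ∂μ := by
      have := integral_map (μ := μ) hT.measurable.aemeasurable (f := M)
        (by rw [hT.map_eq]; exact hMi.aestronglyMeasurable)
      rw [hT.map_eq] at this
      exact this.symm
    have h4 : ∫ x in E n, (M x - (M ∘ T) x) ∂μ ≤ ∫ x in E n, f x ∂μ := by
      apply setIntegral_mono_on (hMi.sub hMT).integrableOn hf.integrableOn (hEm n)
      intro x hx
      have hx' : 0 < max 0 (f x + maxFn T f n (T x)) := hx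
      have hx2 : M x = max 0 (f x + maxFn T f n (T x)) := rfl
      have h5 := maxFn_mono T f n (T x)
      have h6 : max 0 (f x + maxFn T f n (T x)) = f x + maxFn T f n (T x) := by
        apply max_eq_right
        by_contra h
        push Not at h
        rw [max_eq_left h.le] at hx'
        exact lt_irrefl _ hx'
      rw [Pi.sub_apply, hx2, h6]
      have : (M ∘ T) x = maxFn T f (n + 1) (T x) := rfl
      rw [this]; linarith
    rw [integral_sub hMi.integrableOn hMT.integrableOn] at h4
    linarith
  have hlim := tendsto_setIntegral_of_monotone hEm hmono (f := f) (μ := μ) hf.integrableOn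
  have hU : ∫ x in ⋃ n, E n, f x ∂μ = ∫ x, f x ∂μ := by
    have : (⋃ n, E n) =ᵐ[μ] univ := by
      filter_upwards [hpos] with x hx
      obtain ⟨n, hn⟩ := hx
      have : x ∈ ⋃ n, E n := mem_iUnion.mpr ⟨n, lt_of_lt_of_le
        (lt_of_lt_of_le hn (birkhoffSum_le_maxFn T f n x)) (maxFn_mono T f n x)⟩
      exact (iff_true_right trivial).mpr this |> propext
    rw [setIntegral_congr_set this, setIntegral_univ]
  rw [hU] at hlim
  exact ge_of_tendsto' hlim hstep

/-- The function `s(θ) = sin θ / sin (θ + 2β)` used to linearize the elliptic element. -/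
noncomputable def sfn (β θ : ℝ) : ℝ := Real.sin θ / Real.sin (θ + 2 * β)

/-- Parameters of the system in angular form. -/
structure Par (p : ℕ) (lam α β δ : ℝ) : Prop where
  hp : 2 ≤ p
  hβ : 2 * p * β = Real.pi / 2
  hδ0 : 0 ≤ δ
  hδ1 : δ ≤ β
  hlam : lam = 2 * Real.cos (2 * β)
  hα : lam * α = Real.cos (2 * β - δ) / Real.cos δ

/-- angles of the break points -/
noncomputable def ang (p : ℕ) (β δ : ℝ) (m : ℕ) : ℝ :=
  (2 * p - 2 - m) * β + (if Even m then δ else β - δ)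

/-- break points -/
noncomputable def aseq (p : ℕ) (β δ : ℝ) (m : ℕ) : ℝ := - sfn β (ang p β δ m)

/-- heights -/
noncomputable def Hseq (β : ℝ) (m : ℕ) : ℝ := sfn β (m * β)

lemma sfn_sub {β x y : ℝ} (hx : Real.sin (x + 2 * β) ≠ 0) (hy : Real.sin (y + 2 * β) ≠ 0) :
    sfn β y - sfn β x = Real.sin (2 * β) * Real.sin (y - x) /
      (Real.sin (x + 2 * β) * Real.sin (y + 2 * β)) := by
  unfold sfn
  rw [div_sub_div _ _ hy hx, mul_comm (Real.sin (x + 2 * β))]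
  congr 1
  rw [Real.sin_add, Real.sin_add, Real.sin_sub]
  ring

namespace Par

variable {p : ℕ} {lam α β δ : ℝ}

lemma p_pos (h : Par p lam α β δ) : (2 : ℝ) ≤ p := by exact_mod_cast h.hp

lemma β_pos (h : Par p lam α β δ) : 0 < β := by
  have h1 := h.hβ
  have h2 := h.p_pos
  have h3 := Real.pi_pos
  by_contra hb
  push Not at hb
  nlinarith

lemma four_β (h : Par p lam α β δ) : 8 * β ≤ Real.pi := by
  have h1 := h.hβ
  have h2 := h.p_pos
  have h3 := h.β_pos
  nlinarith

lemma sin_pos (h : Par p lam α β δ) {x : ℝ} (h1 : 0 < x) (h2 : x < Real.pi) : 0 < Real.sin x :=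
  Real.sin_pos_of_pos_of_lt_pi h1 h2

lemma sin2β (h : Par p lam α β δ) : 0 < Real.sin (2 * β) :=
  h.sin_pos (by linarith [h.β_pos]) (by linarith [h.β_pos, h.four_β])

lemma cosδ (h : Par p lam α β δ) : 0 < Real.cos δ :=
  Real.cos_pos_of_mem_Ioo ⟨by linarith [h.hδ0, Real.pi_pos],
    by linarith [h.hδ1, h.β_pos, h.four_β]⟩

lemma sfn_lt (h : Par p lam α β δ) {x y : ℝ} (h1 : -(2 * β) < x) (h2 : x < y)
    (h3 : y < Real.pi - 2 * β) : sfn β x < sfn β y := by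
  have a1 : 0 < Real.sin (x + 2 * β) := h.sin_pos (by linarith) (by linarith)
  have a2 : 0 < Real.sin (y + 2 * β) := h.sin_pos (by linarith) (by linarith)
  have a3 : 0 < Real.sin (y - x) := h.sin_pos (by linarith) (by linarith)
  have := sfn_sub a1.ne' a2.ne'
  have h4 : 0 < sfn β y - sfn β x := by
    rw [this]; have := h.sin2β; positivity
  linarith

lemma sfn_le (h : Par p lam α β δ) {x y : ℝ} (h1 : -(2 * β) < x) (h2 : x ≤ y)
    (h3 : y < Real.pi - 2 * β) : sfn β x ≤ sfn β y := by
  rcases h2.eq_or_lt with rfl | h2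
  · exact le_rfl
  · exact (h.sfn_lt h1 h2 h3).le

lemma sfn_lt_iff (h : Par p lam α β δ) {x y : ℝ} (h1 : -(2 * β) < x) (h2 : x < Real.pi - 2 * β)
    (h1' : -(2 * β) < y) (h3 : y < Real.pi - 2 * β) : sfn β x < sfn β y ↔ x < y := by
  constructor
  · intro hh
    by_contra hc
    push Not at hc
    exact absurd (h.sfn_le h1' hc h2) (not_le.mpr hh)
  · intro hh; exact h.sfn_lt h1 hh h3

lemma lam_lt (h : Par p lam α β δ) : lam < 2 := by
  have : Real.cos (2 * β) < Real.cos 0 :=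
    Real.cos_lt_cos_of_nonneg_of_le_pi (le_refl 0) (by linarith [h.four_β, h.β_pos])
      (by linarith [h.β_pos])
  rw [Real.cos_zero] at this
  linarith [h.hlam]

lemma lam_pos (h : Par p lam α β δ) : 0 < lam := by
  have := Real.cos_pos_of_mem_Ioo (x := 2 * β)
    ⟨by linarith [h.β_pos, Real.pi_pos], by linarith [h.four_β, h.β_pos]⟩
  linarith [h.hlam]

lemma lam_sq (h : Par p lam α β δ) : 2 ≤ lam ^ 2 := by
  have h1 : Real.cos (Real.pi / 4) ≤ Real.cos (2 * β) :=
    Real.cos_le_cos_of_nonneg_of_le_pi (by linarith [h.β_pos]) (by linarith [Real.pi_pos])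
      (by linarith [h.four_β])
  rw [Real.cos_pi_div_four] at h1
  have h2 : Real.sqrt 2 ^ 2 = 2 := Real.sq_sqrt (by norm_num)
  have h3 : 0 < Real.sqrt 2 := by positivity
  rw [h.hlam]; nlinarith

lemma lam_gt (h : Par p lam α β δ) : 1.4 < lam := by
  have := h.lam_sq; have := h.lam_pos; nlinarith

lemma r0_le (h : Par p lam α β δ) : lam * α ≤ 1 := by
  rw [h.hα, div_le_one h.cosδ]
  exact Real.cos_le_cos_of_nonneg_of_le_pi h.hδ0 (by linarith [h.four_β, h.hδ0, h.β_pos])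
    (by linarith [h.hδ1])

lemma r0_ge (h : Par p lam α β δ) : lam / 2 ≤ lam * α := by
  rw [h.hα, h.hlam, le_div_iff₀ h.cosδ, Real.cos_sub]
  have h1 := h.sin2β
  have h2 : 0 ≤ Real.sin δ := Real.sin_nonneg_of_nonneg_of_le_pi h.hδ0
    (by linarith [h.hδ1, h.β_pos, h.four_β])
  nlinarith

lemma α_ge (h : Par p lam α β δ) : 1 / 2 ≤ α := by
  have := h.r0_ge; have := h.lam_pos; nlinarith

lemma α_lt (h : Par p lam α β δ) : α < 1 := by
  have := h.r0_le; have := h.lam_gt; nlinarith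

/-- shift by `2β` -/
lemma sfn_shift (h : Par p lam α β δ) {x : ℝ} (hx : Real.sin (x + 2 * β) ≠ 0) :
    sfn β (x + 2 * β) = 1 / (lam - sfn β x) := by
  unfold sfn
  have e : Real.sin (x + 2 * β + 2 * β) = lam * Real.sin (x + 2 * β) - Real.sin x := by
    rw [h.hlam, Real.sin_add (x + 2 * β)]
    have : Real.sin x = Real.sin (x + 2 * β - 2 * β) := by ring_nf
    rw [this, Real.sin_sub]; ring
  rw [e]
  rw [sub_div' hx, one_div_div]

lemma sfn_unshift (h : Par p lam α β δ) {x : ℝ} (hx : Real.sin x ≠ 0)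
    : - sfn β (x - 2 * β) = -1 / (- sfn β x) - lam := by
  unfold sfn
  have e : Real.sin (x - 2 * β) = lam * Real.sin x - Real.sin (x + 2 * β) := by
    rw [h.hlam, Real.sin_add, Real.sin_sub]; ring
  rw [e]
  have e2 : x - 2 * β + 2 * β = x := by ring
  rw [e2, neg_div_neg_eq, one_div_div]
  field_simp
  ring

lemma ang_succ_succ (m : ℕ) : ang p β δ (m + 2) = ang p β δ m - 2 * β := by
  unfold ang
  have : Even (m + 2) ↔ Even m := by simp [Nat.even_add]
  simp only [this]
  push_cast; ring

lemma ang_succ_le (h : Par p lam α β δ) (m : ℕ) : ang p β δ (m + 1) ≤ ang p β δ m := by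
  unfold ang
  have := h.hδ0; have := h.hδ1
  by_cases hm : Even m
  · have h2 : ¬ Even (m + 1) := by simpa [Nat.even_add_one] using hm
    simp only [hm, h2, if_true, if_false]; push_cast; linarith
  · have h2 : Even (m + 1) := by simpa [Nat.even_add_one] using hm
    simp only [hm, h2, if_true, if_false]; push_cast; linarith

lemma ang_anti (h : Par p lam α β δ) : Antitone (ang p β δ) := antitone_nat_of_succ_le h.ang_succ_le

lemma ang_zero (h : Par p lam α β δ) : ang p β δ 0 = Real.pi / 2 - 2 * β + δ := by
  unfold ang; simp; linarith [h.hβ]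

lemma ang_one (h : Par p lam α β δ) : ang p β δ 1 = Real.pi / 2 - 2 * β - δ := by
  unfold ang; simp; linarith [h.hβ]

lemma ang_a (h : Par p lam α β δ) : ang p β δ (2 * p - 2) = δ := by
  obtain ⟨k, rfl⟩ : ∃ k, p = k + 1 := ⟨p - 1, by have := h.hp; omega⟩
  have : 2 * (k + 1) - 2 = 2 * k := by omega
  rw [this]; unfold ang; simp; ring_nf; simp

lemma ang_b (h : Par p lam α β δ) : ang p β δ (2 * p - 1) = - δ := by
  obtain ⟨k, rfl⟩ : ∃ k, p = k + 1 := ⟨p - 1, by have := h.hp; omega⟩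
  have : 2 * (k + 1) - 1 = 2 * k + 1 := by omega
  rw [this]; unfold ang; simp; ring_nf

lemma ang_lt (h : Par p lam α β δ) (m : ℕ) : ang p β δ m < Real.pi - 2 * β := by
  have := h.ang_anti (Nat.zero_le m)
  rw [h.ang_zero] at this
  linarith [h.hδ1, h.β_pos, h.four_β]

lemma ang_gt (h : Par p lam α β δ) {m : ℕ} (hm : m ≤ 2 * p - 1) : - δ ≤ ang p β δ m := by
  have := h.ang_anti hm
  rwa [h.ang_b] at this

lemma ang_gt' (h : Par p lam α β δ) {m : ℕ} (hm : m ≤ 2 * p - 1) : - (2 * β) < ang p β δ m := by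
  linarith [h.ang_gt hm, h.hδ1, h.β_pos]

lemma aseq_mono (h : Par p lam α β δ) {m n : ℕ} (hmn : m ≤ n) (hn : n ≤ 2 * p - 1) :
    aseq p β δ m ≤ aseq p β δ n := by
  unfold aseq
  exact neg_le_neg (h.sfn_le (h.ang_gt' hn) (h.ang_anti hmn) (h.ang_lt _))

lemma aseq_zero (h : Par p lam α β δ) : aseq p β δ 0 = -(lam * α) := by
  unfold aseq sfn
  rw [h.ang_zero, h.hα]
  have e1 : Real.pi / 2 - 2 * β + δ = Real.pi / 2 - (2 * β - δ) := by ring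
  have e2 : Real.pi / 2 - 2 * β + δ + 2 * β = δ + Real.pi / 2 := by ring
  rw [e2, e1, Real.sin_pi_div_two_sub, Real.sin_add_pi_div_two]

lemma aseq_one (h : Par p lam α β δ) : aseq p β δ 1 = lam * (α - 1) := by
  unfold aseq sfn
  rw [h.ang_one, mul_sub, h.hα, h.hlam]
  have e1 : Real.pi / 2 - 2 * β - δ = Real.pi / 2 - (2 * β + δ) := by ring
  have e2 : Real.pi / 2 - 2 * β - δ + 2 * β = Real.pi / 2 - δ := by ring
  rw [e2, e1, Real.sin_pi_div_two_sub, Real.sin_pi_div_two_sub, Real.cos_add, Real.cos_sub]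
  have := h.cosδ.ne'
  field_simp
  ring

lemma aseq_neg (h : Par p lam α β δ) {m : ℕ} (hm : m ≤ 2 * p - 3) : aseq p β δ m < 0 := by
  have h1 : ang p β δ (2 * p - 3) = 2 * β - δ := by
    have h2 := h.ang_b
    have : 2 * p - 1 = (2 * p - 3) + 2 := by have := h.hp; omega
    rw [this, ang_succ_succ] at h2
    linarith
  have h3 := h.ang_anti hm
  rw [h1] at h3
  have h4 := h.hδ1
  have h5 := h.β_pos
  have h6 := h.ang_lt m
  unfold aseq sfn
  rw [neg_lt_zero]
  exact div_pos (h.sin_pos (by linarith) (by linarith)) (h.sin_pos (by linarith) (by linarith))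

lemma aseq_rec (h : Par p lam α β δ) {m : ℕ} (hm : m ≤ 2 * p - 3) :
    aseq p β δ (m + 2) = -1 / aseq p β δ m - lam := by
  unfold aseq
  rw [ang_succ_succ]
  apply h.sfn_unshift
  intro h0
  have := h.aseq_neg hm
  unfold aseq sfn at this
  rw [h0] at this; simp at this

lemma aseq_two (h : Par p lam α β δ) : aseq p β δ 2 = 1 / (lam * α) - lam := by
  have := h.aseq_rec (m := 0) (by omega)
  rw [h.aseq_zero, neg_div_neg_eq] at this
  simpa using this

lemma aseq_a (h : Par p lam α β δ) :
    aseq p β δ (2 * p - 2) = - (Real.sin δ / Real.sin (2 * β + δ)) := by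
  unfold aseq sfn; rw [h.ang_a]; ring_nf

lemma aseq_b (h : Par p lam α β δ) :
    aseq p β δ (2 * p - 1) = Real.sin δ / Real.sin (2 * β - δ) := by
  unfold aseq sfn; rw [h.ang_b, Real.sin_neg]; ring_nf

lemma sinδ (h : Par p lam α β δ) : 0 ≤ Real.sin δ :=
  Real.sin_nonneg_of_nonneg_of_le_pi h.hδ0 (by linarith [h.hδ1, h.β_pos, h.four_β])

lemma sinA (h : Par p lam α β δ) : 0 < Real.sin (2 * β + δ) :=
  h.sin_pos (by linarith [h.β_pos, h.hδ0]) (by linarith [h.hδ1, h.β_pos, h.four_β])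

lemma sinB (h : Par p lam α β δ) : 0 < Real.sin (2 * β - δ) :=
  h.sin_pos (by linarith [h.β_pos, h.hδ1]) (by linarith [h.hδ0, h.β_pos, h.four_β])

lemma a_nonpos (h : Par p lam α β δ) : aseq p β δ (2 * p - 2) ≤ 0 := by
  rw [h.aseq_a, neg_nonpos]; exact div_nonneg h.sinδ h.sinA.le

lemma b_nonneg (h : Par p lam α β δ) : 0 ≤ aseq p β δ (2 * p - 1) := by
  rw [h.aseq_b]; exact div_nonneg h.sinδ h.sinB.le

lemma ab_rel (h : Par p lam α β δ) :
    aseq p β δ (2 * p - 1) + aseq p β δ (2 * p - 2)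
      + lam * aseq p β δ (2 * p - 1) * aseq p β δ (2 * p - 2) = 0 := by
  rw [h.aseq_a, h.aseq_b]
  have h1 := h.sinA.ne'
  have h2 := h.sinB.ne'
  field_simp
  rw [Real.sin_add, Real.sin_sub, h.hlam]; ring

lemma b_le (h : Par p lam α β δ) : aseq p β δ (2 * p - 1) ≤ lam * α := by
  rw [h.aseq_b, h.hα, div_le_div_iff₀ h.sinB h.cosδ]
  have e : Real.sin (2 * δ) ≤ Real.sin (2 * (2 * β - δ)) := by
    apply Real.sin_le_sin_of_le_of_le_pi_div_two
    · linarith [h.hδ0, Real.pi_pos]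
    · linarith [h.hδ0, h.four_β]
    · linarith [h.hδ1]
  rw [Real.sin_two_mul, Real.sin_two_mul] at e
  linarith

lemma Hseq_zero : Hseq β 0 = 0 := by simp [Hseq, sfn]

lemma mβ_lt (h : Par p lam α β δ) {m : ℕ} (hm : m ≤ 2 * p - 1) :
    (m : ℝ) * β ≤ Real.pi / 2 - β := by
  have h1 : (m : ℝ) ≤ 2 * p - 1 := by
    have : m + 1 ≤ 2 * p := by have := h.hp; omega
    have : ((m + 1 : ℕ) : ℝ) ≤ ((2 * p : ℕ) : ℝ) := by exact_mod_cast this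
    push_cast at this; linarith
  have := mul_le_mul_of_nonneg_right h1 h.β_pos.le
  linarith [h.hβ]

lemma sinH (h : Par p lam α β δ) {m : ℕ} (hm : m ≤ 2 * p - 1) :
    0 < Real.sin (m * β + 2 * β) := by
  have h1 := h.mβ_lt hm
  have h2 := h.β_pos
  have : 0 ≤ (m : ℝ) * β := by positivity
  exact h.sin_pos (by linarith) (by linarith [h.four_β])

lemma Hseq_mono (h : Par p lam α β δ) {m n : ℕ} (hmn : m ≤ n) (hn : n ≤ 2 * p - 1) :
    Hseq β m ≤ Hseq β n := by
  have h1 := h.mβ_lt hn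
  have h2 := h.β_pos
  have h3 : 0 ≤ (m : ℝ) * β := by positivity
  apply h.sfn_le
  · linarith
  · have : (m : ℝ) ≤ n := by exact_mod_cast hmn
    exact mul_le_mul_of_nonneg_right this h2.le
  · linarith [h.four_β]

lemma Hseq_one (h : Par p lam α β δ) : Hseq β 1 = 1 / (lam + 1) := by
  unfold Hseq sfn
  have e : Real.sin ((1 : ℕ) * β + 2 * β) = Real.sin β * (lam + 1) := by
    have : ((1 : ℕ) : ℝ) * β + 2 * β = 3 * β := by push_cast; ring
    rw [this, Real.sin_three_mul, h.hlam, Real.cos_two_mul]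
    have := Real.sin_sq_add_cos_sq β
    have h2 : Real.cos β ^ 2 = 1 - Real.sin β ^ 2 := by linarith
    rw [h2]; ring
  rw [e]
  have h1 : 0 < Real.sin β := h.sin_pos h.β_pos (by linarith [h.β_pos, h.four_β])
  have h2 := h.lam_pos
  simp only [Nat.cast_one, one_mul]
  field_simp

lemma Hseq_rec (h : Par p lam α β δ) {m : ℕ} (hm : m ≤ 2 * p - 1) :
    Hseq β (m + 2) = 1 / (lam - Hseq β m) := by
  unfold Hseq
  rw [← h.sfn_shift (h.sinH hm).ne']
  push_cast; ring_nf

lemma Hseq_two (h : Par p lam α β δ) : Hseq β 2 = 1 / lam := by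
  have := h.Hseq_rec (m := 0) (by omega)
  simpa [Hseq_zero] using this

lemma Hseq_a (h : Par p lam α β δ) : Hseq β (2 * p - 2) = lam / 2 := by
  unfold Hseq sfn
  have e : ((2 * p - 2 : ℕ) : ℝ) * β = Real.pi / 2 - 2 * β := by
    have : 2 ≤ 2 * p := by have := h.hp; omega
    push_cast [Nat.cast_sub this]; linarith [h.hβ]
  rw [e]
  have e2 : Real.pi / 2 - 2 * β + 2 * β = Real.pi / 2 := by ring
  rw [e2, Real.sin_pi_div_two_sub, Real.sin_pi_div_two, h.hlam]; ring

lemma Hseq_b (h : Par p lam α β δ) : Hseq β (2 * p - 1) = 1 := by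
  unfold Hseq sfn
  have e : ((2 * p - 1 : ℕ) : ℝ) * β = Real.pi / 2 - β := by
    have : 1 ≤ 2 * p := by have := h.hp; omega
    push_cast [Nat.cast_sub this]; linarith [h.hβ]
  rw [e]
  have e2 : Real.pi / 2 - β + 2 * β = β + Real.pi / 2 := by ring
  rw [e2, Real.sin_pi_div_two_sub, Real.sin_add_pi_div_two, div_self]
  exact (Real.cos_pos_of_mem_Ioo ⟨by linarith [h.β_pos, Real.pi_pos],
    by linarith [h.β_pos, h.four_β]⟩).ne'

lemma Hseq_c (h : Par p lam α β δ) : Hseq β (2 * p - 3) = lam - 1 := by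
  have h1 := h.Hseq_rec (m := 2 * p - 3) (by omega)
  have : 2 * p - 3 + 2 = 2 * p - 1 := by have := h.hp; omega
  rw [this, h.Hseq_b] at h1
  have h2 : lam - Hseq β (2 * p - 3) ≠ 0 := by
    intro h0; rw [h0] at h1; simp at h1
  field_simp at h1
  linarith

lemma Hseq_nonneg (h : Par p lam α β δ) {m : ℕ} (hm : m ≤ 2 * p - 1) : 0 ≤ Hseq β m := by
  have := h.Hseq_mono (Nat.zero_le m) hm
  rwa [Hseq_zero] at this

lemma Hseq_le_one (h : Par p lam α β δ) {m : ℕ} (hm : m ≤ 2 * p - 1) : Hseq β m ≤ 1 := by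
  have := h.Hseq_mono hm le_rfl
  rwa [h.Hseq_b] at this

end Par

lemma exists_par (q : ℕ) (hq : 4 ≤ q) (hqeven : Even q) (lam α : ℝ)
    (hlam : lam = 2 * Real.cos (Real.pi / q))
    (hα1 : 1 / 2 ≤ α) (hα2 : α ≤ 1 / lam) :
    ∃ p δ, q = 2 * p ∧ Par p lam α (Real.pi / q / 2) δ := by
  obtain ⟨p, hp⟩ := hqeven
  have hp2 : 2 ≤ p := by omega
  have hpR : (2 : ℝ) ≤ p := by exact_mod_cast hp2
  have hqR : (q : ℝ) = 2 * p := by rw [hp]; push_cast; ring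
  set b := Real.pi / q / 2 with hb
  have hb2 : Real.pi / q = 2 * b := by rw [hb]; ring
  have hbp : 2 * p * b = Real.pi / 2 := by
    rw [hb, hqR]; field_simp
  have hpi := Real.pi_pos
  have hb0 : 0 < b := by rw [hb, hqR]; positivity
  have hb8 : 8 * b ≤ Real.pi := by nlinarith
  have hs : 0 < Real.sin (2 * b) := Real.sin_pos_of_pos_of_lt_pi (by linarith) (by linarith)
  have hc : 0 < Real.cos (2 * b) := Real.cos_pos_of_mem_Ioo ⟨by linarith, by linarith⟩
  have hsb : 0 < Real.sin b := Real.sin_pos_of_pos_of_lt_pi (by linarith) (by linarith)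
  have hcb : 0 < Real.cos b := Real.cos_pos_of_mem_Ioo ⟨by linarith, by linarith⟩
  rw [hb2] at hlam
  have hl : 0 < lam := by rw [hlam]; linarith
  have hαl : lam * α ≤ 1 := by
    rw [le_div_iff₀ hl] at hα2; linarith
  set u := (2 * α - 1) * Real.cos (2 * b) / Real.sin (2 * b) with hu
  refine ⟨p, Real.arctan u, by omega, hp2, hbp, ?_, ?_, hlam, ?_⟩
  · rw [Real.arctan_nonneg]
    apply div_nonneg _ hs.le
    apply mul_nonneg (by linarith) hc.le
  · have : b = Real.arctan (Real.tan b) := (Real.arctan_tan (by linarith) (by linarith)).symm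
    rw [this]
    apply Real.arctan_mono
    rw [hu, Real.tan_eq_sin_div_cos, div_le_div_iff₀ hs hcb]
    have e1 : Real.sin (2 * b) = 2 * Real.sin b * Real.cos b := Real.sin_two_mul b
    have e2 : Real.cos (2 * b) = 2 * Real.cos b ^ 2 - 1 := Real.cos_two_mul b
    have e3 := Real.sin_sq_add_cos_sq b
    have e4 : (2 * α - 1) * Real.cos (2 * b) ≤ 1 - Real.cos (2 * b) := by
      rw [hlam] at hαl; linarith
    have e5 : 1 - Real.cos (2 * b) = 2 * Real.sin b ^ 2 := by rw [e2]; linarith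
    rw [e5] at e4
    calc _ ≤ 2 * Real.sin b ^ 2 * Real.cos b := mul_le_mul_of_nonneg_right e4 hcb.le
      _ = _ := by rw [e1]; ring
  · have hcu : 0 < Real.cos (Real.arctan u) := Real.cos_arctan_pos u
    have ht : Real.sin (Real.arctan u) = u * Real.cos (Real.arctan u) := by
      have := Real.tan_arctan u
      rw [Real.tan_eq_sin_div_cos] at this
      field_simp at this; linarith
    rw [Real.cos_sub, ht, hlam, hu]
    field_simp
    ring

/-- The domain of the natural extension. -/
def Om (p : ℕ) (lam α β δ : ℝ) : Set (ℝ × ℝ) :=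
  {z | lam * (α - 1) ≤ z.1 ∧ z.1 ≤ lam * α ∧ 0 ≤ z.2 ∧
    ∃ m, 1 ≤ m ∧ m ≤ 2 * p - 1 ∧ aseq p β δ m ≤ z.1 ∧ z.2 ≤ Hseq β m}

lemma Tmap_of_ne {lam α x : ℝ} (hx : x ≠ 0) :
    Tmap lam α x = |1 / x| - lam * (dfun lam α x : ℝ) := by simp [Tmap, hx]

lemma one_div_inj {a b : ℝ} (h : 1 / a = 1 / b) : a = b := by
  simpa using h

namespace Par

variable {p : ℕ} {lam α β δ : ℝ}

lemma abs_div_eq (h : Par p lam α β δ) (x : ℝ) : |1 / (x * lam)| = |1 / x| / lam := by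
  rw [← div_div, abs_div, abs_of_pos h.lam_pos]

lemma Tmap_ge (h : Par p lam α β δ) {x : ℝ} (hx : x ≠ 0) : lam * (α - 1) ≤ Tmap lam α x := by
  rw [Tmap_of_ne hx]
  have h1 : (dfun lam α x : ℝ) ≤ |1 / (x * lam)| + 1 - α := Int.floor_le _
  rw [h.abs_div_eq] at h1
  have h2 := mul_le_mul_of_nonneg_left h1 h.lam_pos.le
  have h3 : lam * (|1 / x| / lam + 1 - α) = |1 / x| + lam * (1 - α) := by
    have := h.lam_pos.ne'; field_simp; ring
  linarith

lemma Tmap_lt (h : Par p lam α β δ) {x : ℝ} (hx : x ≠ 0) : Tmap lam α x < lam * α := by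
  rw [Tmap_of_ne hx]
  have h1 : |1 / (x * lam)| + 1 - α < (dfun lam α x : ℝ) + 1 := Int.lt_floor_add_one _
  rw [h.abs_div_eq] at h1
  have h2 := mul_lt_mul_of_pos_left h1 h.lam_pos
  have h3 : lam * (|1 / x| / lam + 1 - α) = |1 / x| + lam * (1 - α) := by
    have := h.lam_pos.ne'; field_simp; ring
  linarith

lemma abs_le_r0 (h : Par p lam α β δ) {x : ℝ} (h1 : lam * (α - 1) ≤ x) (h2 : x ≤ lam * α) :
    |x| ≤ lam * α := by
  rw [abs_le]
  exact ⟨by linarith [h.r0_ge], h2⟩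

lemma dfun_ge (h : Par p lam α β δ) {x : ℝ} (hx : x ≠ 0) (h1 : lam * (α - 1) ≤ x)
    (h2 : x ≤ lam * α) : 1 ≤ dfun lam α x := by
  unfold dfun
  rw [Int.le_floor, h.abs_div_eq]
  have h3 := h.abs_le_r0 h1 h2
  have h4 : 1 ≤ |1 / x| := by
    rw [abs_div, abs_one, one_le_div (abs_pos.mpr hx)]
    linarith [h.r0_le]
  have h5 : α ≤ |1 / x| / lam := by
    rw [le_div_iff₀ h.lam_pos]
    linarith [h.r0_le]
  push_cast
  linarith

/-- invariance of the domain -/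
lemma Tnat_mem (h : Par p lam α β δ) {z : ℝ × ℝ} (hz : z ∈ Om p lam α β δ) (hne : z.1 ≠ 0) :
    Tnat lam α z ∈ Om p lam α β δ := by
  obtain ⟨t, v⟩ := z
  obtain ⟨h1, h2, h3, m, hm1, hm2, ham, hHm⟩ := hz
  simp only at h1 h2 h3 ham hHm hne
  have hT1 := h.Tmap_ge (x := t) hne
  have hT2 := h.Tmap_lt (x := t) hne
  have hd := h.dfun_ge hne h1 h2
  have hp := h.hp
  have hl := h.lam_gt
  have hl2 := h.lam_lt
  have hv1 : v ≤ 1 := hHm.trans (h.Hseq_le_one hm2)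
  have hr0 : 0 < lam * α := by linarith [h.r0_ge]
  have hTt := Tmap_of_ne (lam := lam) (α := α) hne
  unfold Tnat
  simp only
  set D := dfun lam α t with hD
  have hD1 : (1 : ℝ) ≤ D := by exact_mod_cast hd
  rcases lt_or_gt_of_ne hne with ht | ht
  · -- negative case
    rw [Real.sign_of_neg ht]
    have habs : |1 / t| = -1 / t := by
      rw [abs_of_neg (one_div_neg.mpr ht)]; ring
    rw [habs] at hTt
    have hden : 0 < D * lam + -1 * v := by nlinarith
    refine ⟨hT1, hT2.le, by positivity, ?_⟩
    have hm3 : m ≤ 2 * p - 2 := by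
      by_contra hc
      have : m = 2 * p - 1 := by omega
      rw [this] at ham
      linarith [h.b_nonneg]
    -- bound in the case m = 2p-2
    have key : m = 2 * p - 2 → 1 / (lam * α) + lam ≤ -1 / t := by
      intro hm
      rw [hm] at ham
      set a := aseq p β δ (2 * p - 2) with ha
      set b := aseq p β δ (2 * p - 1) with hb
      have hab := h.ab_rel
      have hb0 := h.b_nonneg
      have hbl := h.b_le
      rw [← ha, ← hb] at hab
      have ha0 : a < 0 := by linarith
      have hb0' : 0 < b := by
        rcases hb0.eq_or_lt with h0 | h0
        · rw [← hb] at h0; rw [← h0] at hab; simp at hab; linarith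
        · exact h0
      have e1 : -1 / a = 1 / b + lam := by
        have hane := ha0.ne
        have hbne := hb0'.ne'
        field_simp; linarith
      have e2 : -1 / a ≤ -1 / t := by
        rw [neg_div, neg_div]
        exact neg_le_neg (one_div_le_one_div_of_neg_of_le ht ham)
      have e3 : 1 / (lam * α) ≤ 1 / b := one_div_le_one_div_of_le hb0' hbl
      linarith
    rcases hd.eq_or_lt with hd1 | hd1
    · have hDR : (D : ℝ) = 1 := by exact_mod_cast hd1.symm
      rw [hDR] at hTt ⊢
      have hm4 : m ≤ 2 * p - 3 := by
        by_contra hc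
        have hk := key (by omega)
        have : 1 ≤ 1 / (lam * α) := by rw [one_le_div hr0]; exact h.r0_le
        linarith [h.r0_le]
      refine ⟨m + 2, by omega, by omega, ?_, ?_⟩
      · simp only
        rw [h.aseq_rec hm4, hTt]
        have e2 : -1 / aseq p β δ m ≤ -1 / t := by
          rw [neg_div, neg_div]
          exact neg_le_neg (one_div_le_one_div_of_neg_of_le ht ham)
        linarith
      · simp only
        rw [h.Hseq_rec hm2]
        apply one_div_le_one_div_of_le
        · linarith [h.Hseq_le_one hm2]
        · linarith
    · have hd2 : 2 ≤ D := hd1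
      have hD2 : (2 : ℝ) ≤ D := by exact_mod_cast hd2
      by_cases hm4 : m ≤ 2 * p - 3
      · refine ⟨1, le_rfl, by omega, ?_, ?_⟩
        · simpa only [h.aseq_one] using hT1
        · simp only
          rw [h.Hseq_one]
          have : v ≤ lam - 1 := by
            rw [← h.Hseq_c]; exact hHm.trans (h.Hseq_mono hm4 (by omega))
          apply one_div_le_one_div_of_le
          · linarith
          · nlinarith
      · have hm5 : m = 2 * p - 2 := by omega
        have hk := key hm5
        have hv : v ≤ lam / 2 := by rw [hm5, h.Hseq_a] at hHm; exact hHm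
        rcases hd2.eq_or_lt with hd3 | hd3
        · have hDR : (D : ℝ) = 2 := by exact_mod_cast hd3.symm
          rw [hDR] at hTt ⊢
          refine ⟨2, by omega, by omega, ?_, ?_⟩
          · simp only; rw [h.aseq_two, hTt]; linarith
          · simp only; rw [h.Hseq_two]
            apply one_div_le_one_div_of_le <;> linarith
        · have hd3' : 3 ≤ D := hd3
          have hD3 : (3 : ℝ) ≤ D := by exact_mod_cast hd3'
          refine ⟨1, le_rfl, by omega, ?_, ?_⟩
          · simpa only [h.aseq_one] using hT1
          · simp only
            rw [h.Hseq_one]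
            apply one_div_le_one_div_of_le
            · linarith
            · nlinarith
  · -- positive case
    rw [Real.sign_of_pos ht]
    have habs : |1 / t| = 1 / t := abs_of_pos (one_div_pos.mpr ht)
    rw [habs] at hTt
    have hden : 0 < D * lam + 1 * v := by nlinarith
    refine ⟨hT1, hT2.le, by positivity, ?_⟩
    rcases hd.eq_or_lt with hd1 | hd1
    · have hDR : (D : ℝ) = 1 := by exact_mod_cast hd1.symm
      rw [hDR] at hTt ⊢
      refine ⟨2, by omega, by omega, ?_, ?_⟩
      · simp only; rw [h.aseq_two, hTt]
        have := one_div_le_one_div_of_le ht h2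
        linarith
      · simp only; rw [h.Hseq_two]
        apply one_div_le_one_div_of_le <;> linarith
    · have hd2 : 2 ≤ D := hd1
      have hD2 : (2 : ℝ) ≤ D := by exact_mod_cast hd2
      refine ⟨1, le_rfl, by omega, ?_, ?_⟩
      · simpa only [h.aseq_one] using hT1
      · simp only
        rw [h.Hseq_one]
        apply one_div_le_one_div_of_le
        · linarith
        · nlinarith

lemma Om_bounds (h : Par p lam α β δ) {z : ℝ × ℝ} (hz : z ∈ Om p lam α β δ) :
    lam * (α - 1) ≤ z.1 ∧ z.1 ≤ lam * α ∧ 0 ≤ z.2 ∧ z.2 ≤ 1 := by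
  obtain ⟨h1, h2, h3, m, hm1, hm2, ham, hHm⟩ := hz
  exact ⟨h1, h2, h3, hHm.trans (h.Hseq_le_one hm2)⟩

lemma Om_zero (h : Par p lam α β δ) {x : ℝ} (h1 : lam * (α - 1) ≤ x) (h2 : x ≤ lam * α) :
    (x, (0 : ℝ)) ∈ Om p lam α β δ := by
  have hp := h.hp
  refine ⟨h1, h2, le_rfl, 1, le_rfl, by omega, ?_, h.Hseq_nonneg (by omega)⟩
  rw [h.aseq_one]; exact h1

lemma Om_down (h : Par p lam α β δ) {x y y' : ℝ} (hz : (x, y) ∈ Om p lam α β δ) (h0 : 0 ≤ y')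
    (h1 : y' ≤ y) : (x, y') ∈ Om p lam α β δ := by
  obtain ⟨h1, h2, h3, m, hm1, hm2, ham, hHm⟩ := hz
  exact ⟨h1, h2, h0, m, hm1, hm2, ham, le_trans ‹_› hHm⟩

/-- lower bound for `1 + t v` -/
lemma one_add_ge (h : Par p lam α β δ) {t v : ℝ} (h1 : lam * (α - 1) ≤ t)
    (h3 : 0 ≤ v) (h4 : v ≤ 1) : 1 - lam / 2 ≤ 1 + t * v := by
  have h5 : - (lam / 2) ≤ t := by linarith [h.r0_ge]
  have := h.lam_pos
  nlinarith

lemma one_add_pos (h : Par p lam α β δ) {t v : ℝ} (h1 : lam * (α - 1) ≤ t)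
    (h3 : 0 ≤ v) (h4 : v ≤ 1) : 0 < 1 + t * v := by
  have := h.one_add_ge h1 h3 h4
  linarith [h.lam_lt]

/-- the exceptional lines -/
def good (p : ℕ) (lam α β δ : ℝ) : Set (ℝ × ℝ) :=
  {z | z.1 ≠ 0 ∧ z.1 ≠ aseq p β δ (2 * p - 2) ∧ z.2 ≠ 0 ∧ z.2 ≠ 1 ∧ z.2 ≠ lam / 2 ∧
    |1 / (z.1 * lam)| + 1 - α ≠ (dfun lam α z.1 : ℝ)}

lemma inj_mixed (h : Par p lam α β δ) {t₁ v₁ t₂ v₂ : ℝ}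
    (hz : (t₁, v₁) ∈ Om p lam α β δ) (hw : (t₂, v₂) ∈ Om p lam α β δ)
    (hv0 : v₁ ≠ 0) (hv1 : v₁ ≠ 1) (hvl : v₁ ≠ lam / 2) (ht2 : t₂ ≠ aseq p β δ (2 * p - 2))
    (hpos : 0 < t₁) (hneg : t₂ < 0)
    (hT : Tmap lam α t₁ = Tmap lam α t₂)
    (hv : (dfun lam α t₁ : ℝ) * lam + v₁ = (dfun lam α t₂ : ℝ) * lam - v₂) : False := by
  have hl := h.lam_gt
  have hl2 := h.lam_lt
  have hp := h.hp
  obtain ⟨h1, h2, h3, m, hm1, hm2, ham, hHm⟩ := hz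
  obtain ⟨h1', h2', h3', n, hn1, hn2, han, hHn⟩ := hw
  simp only at *
  rw [Tmap_of_ne hpos.ne', Tmap_of_ne hneg.ne, abs_of_pos (one_div_pos.mpr hpos),
    abs_of_neg (one_div_neg.mpr hneg)] at hT
  set D := dfun lam α t₁
  set E := dfun lam α t₂
  have hv1' : v₁ ≤ 1 := hHm.trans (h.Hseq_le_one hm2)
  have hv2' : v₂ ≤ 1 := hHn.trans (h.Hseq_le_one hn2)
  have hv1p : 0 < v₁ := lt_of_le_of_ne h3 (Ne.symm hv0)
  have hE1 : (D : ℝ) < E := by nlinarith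
  have hE2 : (E : ℝ) < D + 2 := by nlinarith
  have hE3 : E = D + 1 := by
    have a1 : D < E := by exact_mod_cast hE1
    have a2 : E < D + 2 := by exact_mod_cast hE2
    omega
  have hE4 : (E : ℝ) = D + 1 := by exact_mod_cast hE3
  rw [hE4] at hv hT
  have hsum : v₁ + v₂ = lam := by linarith
  have hn3 : n ≤ 2 * p - 2 := by
    by_contra hc
    have : n = 2 * p - 1 := by omega
    rw [this] at han
    linarith [h.b_nonneg]
  have hv2l : v₂ ≤ lam / 2 := by
    rw [← h.Hseq_a]; exact hHn.trans (h.Hseq_mono hn3 (by omega))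
  have hv1l : lam / 2 < v₁ := lt_of_le_of_ne (by linarith) (Ne.symm hvl)
  have hm3 : m = 2 * p - 1 := by
    by_contra hc
    have := hHm.trans (h.Hseq_mono (show m ≤ 2 * p - 2 by omega) (by omega))
    rw [h.Hseq_a] at this
    linarith
  rw [hm3] at ham
  set a := aseq p β δ (2 * p - 2) with ha
  set b := aseq p β δ (2 * p - 1) with hb
  have hab := h.ab_rel
  rw [← ha, ← hb] at hab
  have hb0 : 0 ≤ b := h.b_nonneg
  have ha0 : a ≤ 0 := h.a_nonpos
  -- t₂ ≤ a
  have ht2a : t₂ < a := by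
    refine lt_of_le_of_ne ?_ ht2
    rcases ha0.eq_or_lt with h0 | h0
    · rw [h0]; exact hneg.le
    · have hb0' : 0 < b := by
        rcases hb0.eq_or_lt with h0' | h0'
        · rw [← h0'] at hab; simp at hab; linarith
        · exact h0'
      have e1 : 1 / a = - (1 / b + lam) := by
        have hane := h0.ne
        have hbne := hb0'.ne'
        field_simp; linarith
      have e3 : 1 / t₁ ≤ 1 / b := one_div_le_one_div_of_le hb0' ham
      have e4 : 1 / a ≤ 1 / t₂ := by rw [e1]; linarith
      exact (one_div_le_one_div_of_neg h0 hneg).mp e4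
  have hn4 : n ≤ 2 * p - 3 := by
    by_contra hc
    have : n = 2 * p - 2 := by omega
    rw [this] at han
    linarith
  have := hHn.trans (h.Hseq_mono hn4 (by omega))
  rw [h.Hseq_c] at this
  exact hv1 (by linarith)

lemma Tnat_inj (h : Par p lam α β δ) :
    InjOn (Tnat lam α) (Om p lam α β δ ∩ good p lam α β δ) := by
  rintro ⟨t₁, v₁⟩ ⟨hz, hg1, hg2, hg3, hg4, hg5, -⟩ ⟨t₂, v₂⟩ ⟨hw, hk1, hk2, hk3, hk4, hk5, -⟩ he
  simp only at hg1 hg2 hg3 hg4 hg5 hk1 hk2 hk3 hk4 hk5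
  have hl := h.lam_gt
  obtain ⟨b1, b2, b3, b4⟩ := h.Om_bounds hz
  obtain ⟨c1, c2, c3, c4⟩ := h.Om_bounds hw
  simp only at b1 b2 b3 b4 c1 c2 c3 c4
  unfold Tnat at he
  simp only [Prod.mk.injEq] at he
  obtain ⟨hT, hv⟩ := he
  have hv' := one_div_inj hv
  have same : dfun lam α t₁ = dfun lam α t₂ → |t₁| = |t₂| := by
    intro hd
    rw [Tmap_of_ne hg1, Tmap_of_ne hk1, hd, abs_div, abs_div, abs_one] at hT
    have : 1 / |t₁| = 1 / |t₂| := by linarith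
    simpa using this
  have dd : ∀ d e : ℤ, (d : ℝ) * lam - e * lam ≤ 1 → -1 ≤ (d : ℝ) * lam - e * lam → d = e := by
    intro d e h1 h2
    have a1 : (d : ℝ) < e + 1 := by nlinarith
    have a2 : (e : ℝ) < d + 1 := by nlinarith
    have a1' : d < e + 1 := by exact_mod_cast a1
    have a2' : e < d + 1 := by exact_mod_cast a2
    omega
  rcases lt_or_gt_of_ne hg1 with ht | ht <;> rcases lt_or_gt_of_ne hk1 with ht' | ht'
  · rw [Real.sign_of_neg ht, Real.sign_of_neg ht'] at hv'
    have hd := dd (dfun lam α t₁) (dfun lam α t₂) (by linarith) (by linarith)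
    have ha := same hd
    rw [hd] at hv'
    rw [abs_of_neg ht, abs_of_neg ht'] at ha
    ext <;> simp only <;> linarith
  · exfalso
    rw [Real.sign_of_neg ht, Real.sign_of_pos ht'] at hv'
    exact h.inj_mixed hw hz hk3 hk4 hk5 hg2 ht' ht hT.symm (by linarith)
  · exfalso
    rw [Real.sign_of_pos ht, Real.sign_of_neg ht'] at hv'
    exact h.inj_mixed hz hw hg3 hg4 hg5 hk2 ht ht' hT (by linarith)
  · rw [Real.sign_of_pos ht, Real.sign_of_pos ht'] at hv'
    have hd := dd (dfun lam α t₁) (dfun lam α t₂) (by linarith) (by linarith)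
    have ha := same hd
    rw [hd] at hv'
    rw [abs_of_pos ht, abs_of_pos ht'] at ha
    ext <;> simp only <;> linarith

end Par

/-- invariant density -/
noncomputable def rho (z : ℝ × ℝ) : ENNReal := ENNReal.ofReal (1 / (1 + z.1 * z.2) ^ 2)

lemma rho_measurable : Measurable rho := by
  unfold rho
  fun_prop

/-- invariant measure of the natural extension -/
noncomputable def mu (p : ℕ) (lam α β δ : ℝ) : Measure (ℝ × ℝ) :=
  (volume.withDensity rho).restrict (Om p lam α β δ)

lemma sign_measurable : Measurable Real.sign := by
  unfold Real.sign
  exact Measurable.ite measurableSet_Iio measurable_const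
    (Measurable.ite measurableSet_Ioi measurable_const measurable_const)

lemma dfun_measurable (lam α : ℝ) : Measurable (fun x => (dfun lam α x : ℝ)) := by
  unfold dfun
  have : Measurable fun x : ℝ => ⌊|1 / (x * lam)| + 1 - α⌋ := by
    apply Measurable.floor
    have : Measurable fun x : ℝ => 1 / (x * lam) := by fun_prop
    exact ((measurable_norm.comp this).add_const 1).sub_const α
  exact (measurable_from_top (f := fun n : ℤ => (n : ℝ))).comp this

lemma Tmap_measurable (lam α : ℝ) : Measurable (Tmap lam α) := by
  unfold Tmap
  apply Measurable.ite (measurableSet_singleton 0) measurable_const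
  have : Measurable fun x : ℝ => 1 / x := by fun_prop
  exact (measurable_norm.comp this).sub ((dfun_measurable lam α).const_mul lam)

lemma Tnat_measurable (lam α : ℝ) : Measurable (Tnat lam α) := by
  unfold Tnat
  apply Measurable.prodMk ((Tmap_measurable lam α).comp measurable_fst)
  have h1 : Measurable fun z : ℝ × ℝ => (dfun lam α z.1 : ℝ) :=
    (dfun_measurable lam α).comp measurable_fst
  have h2 : Measurable fun z : ℝ × ℝ => Real.sign z.1 := sign_measurable.comp measurable_fst
  exact measurable_const.div ((h1.mul_const lam).add (h2.mul measurable_snd))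

lemma Om_measurable (p : ℕ) (lam α β δ : ℝ) : MeasurableSet (Om p lam α β δ) := by
  have : Om p lam α β δ = {z : ℝ × ℝ | lam * (α - 1) ≤ z.1} ∩ {z | z.1 ≤ lam * α} ∩ {z | 0 ≤ z.2} ∩
      ⋃ m ∈ {m : ℕ | 1 ≤ m ∧ m ≤ 2 * p - 1}, ({z | aseq p β δ m ≤ z.1} ∩ {z | z.2 ≤ Hseq β m}) := by
    ext z
    simp only [Om, mem_ofPred_eq, mem_inter_iff, mem_iUnion, exists_prop, and_assoc]
  rw [this]
  refine (((measurableSet_le measurable_const measurable_fst).inter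
    (measurableSet_le measurable_fst measurable_const)).inter
    (measurableSet_le measurable_const measurable_snd)).inter ?_
  refine MeasurableSet.biUnion (Set.to_countable _) fun m _ => ?_
  exact (measurableSet_le measurable_const measurable_fst).inter
    (measurableSet_le measurable_snd measurable_const)

lemma mu_apply {p : ℕ} {lam α β δ : ℝ} {A : Set (ℝ × ℝ)} (hA : MeasurableSet A) :
    mu p lam α β δ A = ∫⁻ z in A ∩ Om p lam α β δ, rho z := by
  unfold mu
  rw [Measure.restrict_apply hA, withDensity_apply _ (hA.inter (Om_measurable _ _ _ _ _))]

lemma mu_absolutelyContinuous {p : ℕ} {lam α β δ : ℝ} :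
    mu p lam α β δ ≪ (volume : Measure (ℝ × ℝ)) :=
  Measure.absolutelyContinuous_of_le Measure.restrict_le_self |>.trans
    (withDensity_absolutelyContinuous _ _)

lemma abs_one_div_eq {x : ℝ} : |1 / x| = Real.sign x / x := by
  rcases lt_trichotomy x 0 with h | h | h
  · rw [Real.sign_of_neg h, abs_of_neg (one_div_neg.mpr h)]; ring
  · simp [h]
  · rw [Real.sign_of_pos h, abs_of_pos (one_div_pos.mpr h)]

lemma sign_sq {x : ℝ} (hx : x ≠ 0) : Real.sign x * Real.sign x = 1 := by
  rcases lt_or_gt_of_ne hx with h | h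
  · rw [Real.sign_of_neg h]; norm_num
  · rw [Real.sign_of_pos h]; norm_num

lemma dfun_eventually {lam α t : ℝ} (hl : lam ≠ 0) (ht : t ≠ 0)
    (hg : |1 / (t * lam)| + 1 - α ≠ (dfun lam α t : ℝ)) :
    ∀ᶠ s in nhds t, dfun lam α s = dfun lam α t := by
  have hc : ContinuousAt (fun s : ℝ => |1 / (s * lam)| + 1 - α) t := by
    have : ContinuousAt (fun s : ℝ => 1 / (s * lam)) t := by
      apply ContinuousAt.div continuousAt_const (by fun_prop)
      exact mul_ne_zero ht hl
    exact (this.abs.add continuousAt_const).sub continuousAt_const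
  have hmem : (fun s : ℝ => |1 / (s * lam)| + 1 - α) t ∈
      Ioo (dfun lam α t : ℝ) ((dfun lam α t : ℝ) + 1) := by
    refine ⟨lt_of_le_of_ne (Int.floor_le _) (Ne.symm hg), Int.lt_floor_add_one _⟩
  filter_upwards [hc.eventually (Ioo_mem_nhds hmem.1 hmem.2)] with s hs
  unfold dfun at *
  rw [Int.floor_eq_iff]
  exact ⟨hs.1.le, hs.2⟩

lemma sign_eventually {t : ℝ} (ht : t ≠ 0) : ∀ᶠ s in nhds t, Real.sign s = Real.sign t := by
  rcases lt_or_gt_of_ne ht with h | h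
  · filter_upwards [Iio_mem_nhds h] with s hs
    rw [Real.sign_of_neg h, Real.sign_of_neg hs]
  · filter_upwards [Ioi_mem_nhds h] with s hs
    rw [Real.sign_of_pos h, Real.sign_of_pos hs]

/-- derivative of the natural extension map -/
noncomputable def Tder (lam α : ℝ) (z : ℝ × ℝ) : (ℝ × ℝ) →L[ℝ] (ℝ × ℝ) :=
  (ContinuousLinearMap.toSpanSingleton ℝ (- Real.sign z.1 / z.1 ^ 2)).prodMap
    (ContinuousLinearMap.toSpanSingleton ℝ
      (- Real.sign z.1 / ((dfun lam α z.1 : ℝ) * lam + Real.sign z.1 * z.2) ^ 2))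

lemma Tder_det (lam α : ℝ) (z : ℝ × ℝ) : (Tder lam α z).det =
    (- Real.sign z.1 / z.1 ^ 2) *
      (- Real.sign z.1 / ((dfun lam α z.1 : ℝ) * lam + Real.sign z.1 * z.2) ^ 2) := by
  unfold Tder
  rw [ContinuousLinearMap.det, ContinuousLinearMap.coe_prodMap, LinearMap.det_prodMap,
    LinearMap.det_ring, LinearMap.det_ring]
  simp

lemma Tnat_hasFDerivAt {lam α : ℝ} {z : ℝ × ℝ} (hl : lam ≠ 0) (ht : z.1 ≠ 0)
    (hg : |1 / (z.1 * lam)| + 1 - α ≠ (dfun lam α z.1 : ℝ))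
    (hden : (dfun lam α z.1 : ℝ) * lam + Real.sign z.1 * z.2 ≠ 0) :
    HasFDerivAt (Tnat lam α) (Tder lam α z) z := by
  obtain ⟨t, v⟩ := z
  simp only at ht hg hden
  set e := Real.sign t with he
  set d : ℝ := (dfun lam α t : ℝ) with hd
  have h1 : HasDerivAt (fun s : ℝ => e / s - lam * d) (- e / t ^ 2) t := by
    have := ((hasDerivAt_inv ht).const_mul e).sub_const (lam * d)
    have e1 : (fun s : ℝ => e / s - lam * d) = fun s => e * s⁻¹ - lam * d := by
      funext s; rw [div_eq_mul_inv]
    rw [e1]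
    refine this.congr_deriv ?_
    rw [div_eq_mul_inv, neg_mul, mul_neg]
  have h2 : HasDerivAt (fun s : ℝ => 1 / (d * lam + e * s)) (- e / (d * lam + e * v) ^ 2) v := by
    have h3 : HasDerivAt (fun s : ℝ => d * lam + e * s) e v := by
      simpa using ((hasDerivAt_id v).const_mul e).const_add (d * lam)
    have h5 := h3.inv hden
    have e1 : (fun s : ℝ => 1 / (d * lam + e * s)) = (fun s => d * lam + e * s)⁻¹ := by
      funext s; simp
    rw [e1]
    exact h5
  have h4 := HasFDerivAt.prodMap (p := (t, v)) (f := fun s : ℝ => e / s - lam * d)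
    (f₂ := fun s : ℝ => 1 / (d * lam + e * s)) h1.hasFDerivAt h2.hasFDerivAt
  apply h4.congr_of_eventuallyEq
  have hf : Filter.Tendsto Prod.fst (nhds (t, v)) (nhds t) := continuous_fst.tendsto (t, v)
  filter_upwards [hf.eventually (dfun_eventually hl ht hg), hf.eventually (sign_eventually ht),
    hf.eventually (isOpen_ne.mem_nhds ht)] with w hw1 hw2 hw3
  unfold Tnat
  rw [Tmap_of_ne hw3, abs_one_div_eq, hw1, hw2]
  rfl

namespace Par

variable {p : ℕ} {lam α β δ : ℝ}

lemma den_pos (h : Par p lam α β δ) {z : ℝ × ℝ} (hz : z ∈ Om p lam α β δ) (hne : z.1 ≠ 0) :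
    0 < (dfun lam α z.1 : ℝ) * lam + Real.sign z.1 * z.2 := by
  obtain ⟨h1, h2, h3, h4⟩ := h.Om_bounds hz
  have hd : (1 : ℝ) ≤ dfun lam α z.1 := by exact_mod_cast h.dfun_ge hne h1 h2
  have hl := h.lam_gt
  rcases lt_or_gt_of_ne hne with ht | ht
  · rw [Real.sign_of_neg ht]; nlinarith
  · rw [Real.sign_of_pos ht]; nlinarith

lemma rho_det (h : Par p lam α β δ) {z : ℝ × ℝ} (hz : z ∈ Om p lam α β δ) (hne : z.1 ≠ 0) :
    ENNReal.ofReal |(Tder lam α z).det| * rho (Tnat lam α z) = rho z := by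
  obtain ⟨h1, h2, h3, h4⟩ := h.Om_bounds hz
  have hden := h.den_pos hz hne
  have hpos := h.one_add_pos h1 h3 h4
  have hs := sign_sq hne
  unfold rho
  rw [← ENNReal.ofReal_mul (abs_nonneg _)]
  congr 1
  rw [Tder_det]
  unfold Tnat
  simp only
  rw [Tmap_of_ne hne, abs_one_div_eq]
  set e := Real.sign z.1
  set d : ℝ := (dfun lam α z.1 : ℝ)
  set g := d * lam + e * z.2 with hg
  have e1 : 1 + (e / z.1 - lam * d) * (1 / g) = e * (1 + z.1 * z.2) / (z.1 * g) := by
    have : g ≠ 0 := hden.ne'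
    field_simp
    rw [hg]; ring
  rw [e1]
  have e2 : - e / z.1 ^ 2 * (- e / g ^ 2) = 1 / (z.1 * g) ^ 2 := by
    have : - e / z.1 ^ 2 * (- e / g ^ 2) = (e * e) / (z.1 * g) ^ 2 := by ring
    rw [this, hs]
  rw [e2, abs_of_nonneg (by positivity)]
  have he : e ≠ 0 := by intro h0; rw [h0] at hs; simp at hs
  have e3 : (e * (1 + z.1 * z.2) / (z.1 * g)) ^ 2 = (1 + z.1 * z.2) ^ 2 / (z.1 * g) ^ 2 := by
    rw [div_pow, mul_pow, sq e, hs, one_mul]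
  rw [e3]
  have : g ≠ 0 := hden.ne'
  have : 1 + z.1 * z.2 ≠ 0 := hpos.ne'
  field_simp

lemma good_ae (h : Par p lam α β δ) :
    ∀ᵐ z ∂(volume : Measure (ℝ × ℝ)), z ∈ good p lam α β δ := by
  set S : Set ℝ := {0, aseq p β δ (2 * p - 2)} ∪
    (range (fun n : ℤ => 1 / (lam * ((n : ℝ) - 1 + α))) ∪
      range (fun n : ℤ => - (1 / (lam * ((n : ℝ) - 1 + α)))))
  have hS : S.Countable := by
    apply Countable.union
    · exact (Set.toFinite _).countable
    · exact (countable_range _).union (countable_range _)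
  have hS2 : ({0, 1, lam / 2} : Set ℝ).Countable := (Set.toFinite _).countable
  have q1 : ∀ᵐ z ∂(volume : Measure (ℝ × ℝ)), z.1 ∉ S :=
    Measure.quasiMeasurePreserving_fst.ae (hS.ae_notMem (volume : Measure ℝ))
  have q2 : ∀ᵐ z ∂(volume : Measure (ℝ × ℝ)), z.2 ∉ ({0, 1, lam / 2} : Set ℝ) :=
    Measure.quasiMeasurePreserving_snd.ae (hS2.ae_notMem (volume : Measure ℝ))
  filter_upwards [q1, q2] with z hz1 hz2
  simp only [mem_insert_iff, mem_singleton_iff, not_or] at hz2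
  refine ⟨fun h0 => hz1 (Or.inl (by simp [h0])), fun h0 => hz1 (Or.inl (by simp [h0])),
    hz2.1, hz2.2.1, hz2.2.2, ?_⟩
  intro h0
  apply hz1
  right
  have hl := h.lam_pos.ne'
  have h1 : |1 / (z.1 * lam)| = (dfun lam α z.1 : ℝ) - 1 + α := by linarith
  have inv : ∀ c : ℝ, 1 / (z.1 * lam) = c → z.1 = 1 / (lam * c) := by
    intro c hc
    rw [← hc]
    by_cases hz : z.1 = 0
    · simp [hz]
    · field_simp
  rcases eq_or_eq_neg_of_abs_eq h1 with h2 | h2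
  · left; exact ⟨_, (inv _ h2).symm⟩
  · right
    refine ⟨dfun lam α z.1, ?_⟩
    have h3 := inv _ h2
    rw [mul_neg, div_neg] at h3
    exact h3.symm

lemma good_measurable (p : ℕ) (lam α β δ : ℝ) : MeasurableSet (good p lam α β δ) := by
  unfold good
  have hm : Measurable fun z : ℝ × ℝ => |1 / (z.1 * lam)| + 1 - α := by
    have : Measurable fun z : ℝ × ℝ => 1 / (z.1 * lam) := by fun_prop
    exact ((measurable_norm.comp this).add_const 1).sub_const α
  have hd : Measurable fun z : ℝ × ℝ => (dfun lam α z.1 : ℝ) :=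
    (dfun_measurable lam α).comp measurable_fst
  have c1 : ∀ c : ℝ, MeasurableSet {z : ℝ × ℝ | z.1 ≠ c} := fun c =>
    (measurableSet_eq_fun measurable_fst measurable_const).compl
  have c2 : ∀ c : ℝ, MeasurableSet {z : ℝ × ℝ | z.2 ≠ c} := fun c =>
    (measurableSet_eq_fun measurable_snd measurable_const).compl
  exact (c1 _).inter ((c1 _).inter ((c2 _).inter ((c2 _).inter ((c2 _).inter
    (measurableSet_eq_fun hm hd).compl))))

lemma mu_finite (h : Par p lam α β δ) : IsFiniteMeasure (mu p lam α β δ) := by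
  constructor
  rw [mu_apply MeasurableSet.univ, univ_inter]
  set c : ENNReal := ENNReal.ofReal (1 / (1 - lam / 2) ^ 2)
  have hb : ∀ z ∈ Om p lam α β δ, rho z ≤ c := by
    intro z hz
    obtain ⟨h1, h2, h3, h4⟩ := h.Om_bounds hz
    apply ENNReal.ofReal_le_ofReal
    have := h.one_add_ge h1 h3 h4
    have h5 : 0 < 1 - lam / 2 := by linarith [h.lam_lt]
    apply one_div_le_one_div_of_le (by positivity)
    exact pow_le_pow_left₀ h5.le this 2
  have hv : volume (Om p lam α β δ) < ⊤ := by
    have hsub : Om p lam α β δ ⊆ Icc (lam * (α - 1), 0) (lam * α, 1) := by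
      intro z hz
      obtain ⟨h1, h2, h3, h4⟩ := h.Om_bounds hz
      exact ⟨⟨h1, h3⟩, ⟨h2, h4⟩⟩
    exact lt_of_le_of_lt (measure_mono hsub) isCompact_Icc.measure_lt_top
  calc ∫⁻ z in Om p lam α β δ, rho z ≤ ∫⁻ z in Om p lam α β δ, c :=
        setLIntegral_mono measurable_const hb
    _ = c * volume (Om p lam α β δ) := by rw [setLIntegral_const]
    _ < ⊤ := ENNReal.mul_lt_top ENNReal.ofReal_lt_top hv

lemma Om_ae : ∀ᵐ z ∂(mu p lam α β δ), z ∈ Om p lam α β δ :=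
  ae_restrict_mem (Om_measurable _ _ _ _ _)

theorem measurePreserving (h : Par p lam α β δ) :
    MeasurePreserving (Tnat lam α) (mu p lam α β δ) (mu p lam α β δ) := by
  have hfin := h.mu_finite
  refine ⟨Tnat_measurable lam α, ?_⟩
  have hTm := Tnat_measurable lam α
  apply Measure.eq_of_le_of_measure_univ_eq
  · rw [Measure.le_iff]
    intro B hB
    rw [Measure.map_apply hTm hB]
    set A := (Tnat lam α ⁻¹' B ∩ Om p lam α β δ) ∩ good p lam α β δ with hA
    have hAm : MeasurableSet A :=
      ((hTm hB).inter (Om_measurable _ _ _ _ _)).inter (good_measurable _ _ _ _ _)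
    have e1 : mu p lam α β δ (Tnat lam α ⁻¹' B) = ∫⁻ z in A, rho z := by
      rw [mu_apply (hTm hB)]
      apply setLIntegral_congr
      filter_upwards [h.good_ae] with z hz
      apply propext
      constructor
      · intro hh
        exact (show z ∈ A from ⟨hh, hz⟩)
      · intro hh
        exact (show z ∈ A from hh).1
    have hAO : A ⊆ Om p lam α β δ := fun z hz => hz.1.2
    have e2 : ∫⁻ z in Tnat lam α '' A, rho z =
        ∫⁻ z in A, ENNReal.ofReal |(Tder lam α z).det| * rho (Tnat lam α z) := by
      apply lintegral_image_eq_lintegral_abs_det_fderiv_mul _ hAm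
      · intro z hz
        apply HasFDerivAt.hasFDerivWithinAt
        have hg := hz.2
        exact Tnat_hasFDerivAt h.lam_pos.ne' hg.1 hg.2.2.2.2.2 (h.den_pos (hAO hz) hg.1).ne'
      · have hsub : A ⊆ Om p lam α β δ ∩ good p lam α β δ := fun z hz => ⟨hz.1.2, hz.2⟩
        exact h.Tnat_inj.mono hsub
    have e3 : ∫⁻ z in A, ENNReal.ofReal |(Tder lam α z).det| * rho (Tnat lam α z) =
        ∫⁻ z in A, rho z := by
      apply setLIntegral_congr_fun hAm
      intro z hz
      exact h.rho_det (hAO hz) hz.2.1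
    rw [e1, ← e3, ← e2, mu_apply hB]
    apply lintegral_mono_set
    rintro _ ⟨z, hz, rfl⟩
    exact ⟨hz.1.1, h.Tnat_mem (hAO hz) hz.2.1⟩
  · rw [Measure.map_apply hTm MeasurableSet.univ, preimage_univ]

end Par

/-- slice coordinate -/
noncomputable def Ffn (v t : ℝ) : ℝ := t / (1 + t * v)

lemma Ffn_hasDerivAt {v t : ℝ} (h : 1 + t * v ≠ 0) :
    HasDerivAt (Ffn v) (1 / (1 + t * v) ^ 2) t := by
  have h1 : HasDerivAt (fun s : ℝ => 1 + s * v) v t := by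
    simpa using ((hasDerivAt_id t).mul_const v).const_add 1
  have := (hasDerivAt_id t).div h1 h
  refine this.congr_deriv ?_
  simp

lemma Ffn_sub {v s t : ℝ} (hs : 1 + s * v ≠ 0) (ht : 1 + t * v ≠ 0) :
    Ffn v t - Ffn v s = (t - s) / ((1 + t * v) * (1 + s * v)) := by
  unfold Ffn
  rw [div_sub_div _ _ ht hs]
  congr 1
  ring

lemma slice_pos {v a t : ℝ} (hv : 0 ≤ v) (ha : 0 < 1 + a * v) (hat : a ≤ t) : 0 < 1 + t * v := by
  nlinarith

lemma Ffn_le {v s t : ℝ} (hv : 0 ≤ v) (hs : 0 < 1 + s * v) (hst : s ≤ t) :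
    Ffn v s ≤ Ffn v t := by
  have ht := slice_pos hv hs hst
  have := Ffn_sub hs.ne' ht.ne'
  have : 0 ≤ (t - s) / ((1 + t * v) * (1 + s * v)) := by
    apply div_nonneg (by linarith) (by positivity)
  linarith

lemma Ffn_measurable (v : ℝ) : Measurable (Ffn v) := by
  unfold Ffn; fun_prop

lemma slice_lint {a b v : ℝ} (hv : 0 ≤ v) (ha : 0 < 1 + a * v) (hab : a ≤ b) {B : Set ℝ}
    (hB : MeasurableSet B) :
    ∫⁻ t in Icc a b ∩ (Ffn v) ⁻¹' B, rho (t, v) = volume (Icc (Ffn v a) (Ffn v b) ∩ B) := by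
  have him : Ffn v '' Icc a b = Icc (Ffn v a) (Ffn v b) := by
    apply ContinuousOn.image_Icc_of_monotoneOn hab
    · intro t ht
      exact (Ffn_hasDerivAt (slice_pos hv ha ht.1).ne').continuousAt.continuousWithinAt
    · intro s hs t ht hst
      exact Ffn_le hv (slice_pos hv ha hs.1) hst
  have hm : MeasurableSet (Icc a b ∩ (Ffn v) ⁻¹' B) := measurableSet_Icc.inter (Ffn_measurable v hB)
  have := lintegral_image_eq_lintegral_abs_deriv_mul (s := Icc a b ∩ (Ffn v) ⁻¹' B)
    (f := Ffn v) (f' := fun t => 1 / (1 + t * v) ^ 2) hm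
    (fun t ht => (Ffn_hasDerivAt (slice_pos hv ha ht.1.1).ne').hasDerivWithinAt) ?_ (fun _ => 1)
  · rw [image_inter_preimage, him] at this
    simp only [lintegral_const, mul_one, one_mul, Measure.restrict_apply, MeasurableSet.univ,
      univ_inter] at this
    rw [this]
    apply setLIntegral_congr_fun hm
    intro t _
    simp only [rho]
    rw [abs_of_nonneg (by positivity)]
  · intro s hs t ht hst
    have h1 := slice_pos hv ha hs.1.1
    have h2 := slice_pos hv ha ht.1.1
    have h3 := Ffn_sub h1.ne' h2.ne'
    rw [hst, sub_self] at h3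
    have h4 : (t - s) = 0 := by
      rcases div_eq_zero_iff.mp h3.symm with h5 | h5
      · exact h5
      · exact absurd h5 (by positivity)
    linarith

/-- slice measure -/
noncomputable def sl (p : ℕ) (lam α β δ : ℝ) (B : Set ℝ) (v : ℝ) : ENNReal :=
  ∫⁻ t, ({z : ℝ × ℝ | Ffn z.2 z.1 ∈ B} ∩ Om p lam α β δ).indicator rho (t, v)

lemma FfnSet_measurable {B : Set ℝ} (hB : MeasurableSet B) :
    MeasurableSet {z : ℝ × ℝ | Ffn z.2 z.1 ∈ B} := by
  have : Measurable fun z : ℝ × ℝ => Ffn z.2 z.1 := by unfold Ffn; fun_prop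
  exact this hB

namespace Par

variable {p : ℕ} {lam α β δ : ℝ}

lemma l0_le (h : Par p lam α β δ) {m : ℕ} (hm1 : 1 ≤ m) (hm2 : m ≤ 2 * p - 1) :
    lam * (α - 1) ≤ aseq p β δ m := by
  rw [← h.aseq_one]; exact h.aseq_mono hm1 hm2

lemma aseq_le_r0 (h : Par p lam α β δ) {m : ℕ} (hm2 : m ≤ 2 * p - 1) :
    aseq p β δ m ≤ lam * α :=
  (h.aseq_mono hm2 le_rfl).trans h.b_le

lemma mu_sl (h : Par p lam α β δ) {B : Set ℝ} (hB : MeasurableSet B) :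
    mu p lam α β δ {z : ℝ × ℝ | Ffn z.2 z.1 ∈ B} = ∫⁻ v in Ioc 0 1, sl p lam α β δ B v := by
  have hA := FfnSet_measurable hB
  have hO := Om_measurable p lam α β δ
  rw [mu_apply hA, ← lintegral_indicator (hA.inter hO), Measure.volume_eq_prod,
    lintegral_prod_symm _ ((rho_measurable.indicator (hA.inter hO)).aemeasurable)]
  rw [← lintegral_indicator measurableSet_Ioc]
  apply lintegral_congr_ae
  have h0 : ∀ᵐ v : ℝ, v ≠ 0 := by simp [ae_iff]
  filter_upwards [h0] with v hv
  by_cases hv1 : v ∈ Ioc (0 : ℝ) 1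
  · rw [indicator_of_mem hv1]; rfl
  · rw [indicator_of_notMem hv1]
    have : ∀ t, ({z : ℝ × ℝ | Ffn z.2 z.1 ∈ B} ∩ Om p lam α β δ).indicator rho (t, v) = 0 := by
      intro t
      apply indicator_of_notMem
      rintro ⟨-, hz⟩
      obtain ⟨-, -, h3, h4⟩ := h.Om_bounds hz
      exact hv1 ⟨lt_of_le_of_ne h3 (Ne.symm hv), h4⟩
    simp [this]

lemma sl_eq (h : Par p lam α β δ) {B : Set ℝ} (hB : MeasurableSet B) {m : ℕ} (hm1 : 1 ≤ m)
    (hm2 : m ≤ 2 * p - 1) {v : ℝ} (hv : v ∈ Ioc (Hseq β (m - 1)) (Hseq β m)) :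
    sl p lam α β δ B v =
      volume (Icc (Ffn v (aseq p β δ m)) (Ffn v (lam * α)) ∩ B) := by
  have hv0 : 0 ≤ v := (h.Hseq_nonneg (by omega)).trans hv.1.le
  have hv1 : v ≤ 1 := hv.2.trans (h.Hseq_le_one hm2)
  rw [← slice_lint hv0 (h.one_add_pos (h.l0_le hm1 hm2) hv0 hv1) (h.aseq_le_r0 hm2) hB]
  rw [← lintegral_indicator (measurableSet_Icc.inter (Ffn_measurable v hB))]
  unfold sl
  apply lintegral_congr
  intro t
  have : (t, v) ∈ ({z : ℝ × ℝ | Ffn z.2 z.1 ∈ B} ∩ Om p lam α β δ) ↔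
      t ∈ Icc (aseq p β δ m) (lam * α) ∩ Ffn v ⁻¹' B := by
    constructor
    · rintro ⟨hz1, hz2⟩
      refine ⟨⟨?_, (h.Om_bounds hz2).2.1⟩, hz1⟩
      obtain ⟨h1, h2, h3, k, hk1, hk2, hak, hHk⟩ := hz2
      refine le_trans (h.aseq_mono ?_ hk2) hak
      by_contra hc
      have : Hseq β k ≤ Hseq β (m - 1) := h.Hseq_mono (by omega) (by omega)
      have h5 := hv.1
      simp only at hHk
      linarith
    · rintro ⟨hz1, hz2⟩
      exact ⟨hz2, (h.l0_le hm1 hm2).trans hz1.1, hz1.2, hv0, m, hm1, hm2, hz1.1, hv.2⟩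
  by_cases hmem : (t, v) ∈ ({z : ℝ × ℝ | Ffn z.2 z.1 ∈ B} ∩ Om p lam α β δ)
  · rw [indicator_of_mem hmem, indicator_of_mem (this.mp hmem)]
  · rw [indicator_of_notMem hmem, indicator_of_notMem (fun hh => hmem (this.mpr hh))]

lemma one_add_aH (h : Par p lam α β δ) {m k : ℕ} (hm : m ≤ 2 * p - 1) (hk : k ≤ 2 * p - 1) :
    1 + aseq p β δ m * Hseq β k = Real.sin (2 * β) * Real.sin (ang p β δ m + (k + 2) * β) /
      (Real.sin (ang p β δ m + 2 * β) * Real.sin ((k + 2) * β)) := by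
  have h1 : Real.sin (ang p β δ m + 2 * β) ≠ 0 :=
    (h.sin_pos (by linarith [h.ang_gt' hm]) (by linarith [h.ang_lt m])).ne'
  have h2 := (h.sinH hk).ne'
  unfold aseq Hseq sfn
  rw [add_mul]
  have e : Real.sin (k * β + 2 * β) * Real.sin (ang p β δ m + 2 * β) -
      Real.sin (ang p β δ m) * Real.sin (k * β) =
      Real.sin (2 * β) * Real.sin (ang p β δ m + (k * β + 2 * β)) := by
    generalize ang p β δ m = θ
    generalize (k : ℝ) * β = φ
    rw [← add_assoc]
    simp only [Real.sin_add, Real.cos_add]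
    linear_combination (Real.sin θ * Real.sin φ) * (Real.sin_sq_add_cos_sq (2 * β))
  have e4 : ∀ A B X Y Z : ℝ, A ≠ 0 → B ≠ 0 → B * A - X * Y = Z →
      1 + -(X / A) * (Y / B) = Z / (A * B) := by
    intro A B X Y Z hA hB hh
    rw [← hh]
    field_simp
    ring
  exact e4 _ _ _ _ _ h1 h2 e

lemma sinK (h : Par p lam α β δ) {m : ℕ} (hm : m ≤ 2 * p - 1) : 0 < Real.sin ((m + 2) * β) := by
  have := h.sinH hm
  rwa [← add_mul] at this

/-- correction factor -/
noncomputable def Dfac (β δ : ℝ) (m : ℕ) : ℝ :=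
  if Even m then 1 else Real.cos δ / Real.cos (β - δ)

lemma cosβδ (h : Par p lam α β δ) : 0 < Real.cos (β - δ) :=
  Real.cos_pos_of_mem_Ioo ⟨by linarith [h.hδ1, Real.pi_pos],
    by linarith [h.hδ0, h.β_pos, h.four_β]⟩

lemma Dfac_pos (h : Par p lam α β δ) (m : ℕ) : 0 < Dfac β δ m := by
  unfold Dfac
  split_ifs
  · exact one_pos
  · exact div_pos h.cosδ h.cosβδ

lemma ratio (h : Par p lam α β δ) {m : ℕ} (hm : m + 1 ≤ 2 * p - 1) :
    Dfac β δ (m + 1) * Real.sin ((m + 3) * β) * (1 + aseq p β δ (m + 1) * Hseq β (m + 1)) =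
    Dfac β δ m * Real.sin ((m + 2) * β) * (1 + aseq p β δ (m + 1) * Hseq β m) := by
  rw [h.one_add_aH hm hm, h.one_add_aH hm (by omega)]
  have h1 : Real.sin (ang p β δ (m + 1) + 2 * β) ≠ 0 :=
    (h.sin_pos (by linarith [h.ang_gt' hm]) (by linarith [h.ang_lt (m + 1)])).ne'
  have h2 := (h.sinK hm).ne'
  have h3 := (h.sinK (m := m) (by omega)).ne'
  have hc1 := h.cosδ.ne'
  have hc2 := h.cosβδ.ne'
  push_cast at *
  have e0 : ((m : ℝ) + 3) * β = (m + 1 + 2) * β := by ring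
  rw [e0]
  have key : Dfac β δ (m + 1) * Real.sin (ang p β δ (m + 1) + (m + 1 + 2) * β) =
      Dfac β δ m * Real.sin (ang p β δ (m + 1) + (m + 2) * β) := by
    have hb := h.hβ
    by_cases hm' : Even m
    · have hm2 : ¬ Even (m + 1) := by simpa [Nat.even_add_one] using hm'
      unfold Dfac ang
      rw [if_neg hm2, if_neg hm2, if_pos hm']
      push_cast
      have a1 : (2 * (p : ℝ) - 2 - (m + 1)) * β + (β - δ) + (m + 1 + 2) * β =
          (β - δ) + Real.pi / 2 := by linear_combination hb
      have a2 : (2 * (p : ℝ) - 2 - (m + 1)) * β + (β - δ) + (m + 2) * β =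
          Real.pi / 2 - δ := by linear_combination hb
      rw [a1, a2, Real.sin_add_pi_div_two, Real.sin_pi_div_two_sub]
      field_simp
    · have hm2 : Even (m + 1) := by simpa [Nat.even_add_one] using hm'
      unfold Dfac ang
      rw [if_pos hm2, if_pos hm2, if_neg hm']
      push_cast
      have a1 : (2 * (p : ℝ) - 2 - (m + 1)) * β + δ + (m + 1 + 2) * β =
          δ + Real.pi / 2 := by linear_combination hb
      have a2 : (2 * (p : ℝ) - 2 - (m + 1)) * β + δ + (m + 2) * β =
          Real.pi / 2 - (β - δ) := by linear_combination hb
      rw [a1, a2, Real.sin_add_pi_div_two, Real.sin_pi_div_two_sub]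
      field_simp
  have e4 : ∀ A B C X Y Z D E : ℝ, A ≠ 0 → B ≠ 0 → C ≠ 0 → D * X = E * Y →
      D * B * (Z * X / (A * B)) = E * C * (Z * Y / (A * C)) := by
    intro A B C X Y Z D E hA hB hC hh
    field_simp
    linear_combination Z * hh
  exact e4 _ _ _ _ _ _ _ _ h1 h2 h3 key

lemma lint_Ffn (h : Par p lam α β δ) {a b u w : ℝ} (ha : lam * (α - 1) ≤ a) (hab : a ≤ b)
    (hu : 0 ≤ u) (huw : u ≤ w) (hw : w ≤ 1) :
    ∫⁻ v in Ioc u w, ENNReal.ofReal (Ffn v b - Ffn v a) =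
      ENNReal.ofReal ((Real.log (1 + b * w) - Real.log (1 + a * w)) -
        (Real.log (1 + b * u) - Real.log (1 + a * u))) := by
  have hpos : ∀ t, a ≤ t → ∀ v ∈ Icc u w, 0 < 1 + t * v := fun t ht v hv =>
    h.one_add_pos (ha.trans ht) (hu.trans hv.1) (hv.2.trans hw)
  have hcont : ContinuousOn (fun v => Ffn v b - Ffn v a) (Icc u w) := by
    unfold Ffn
    apply ContinuousOn.sub
    · exact ContinuousOn.div continuousOn_const (by fun_prop) fun v hv => (hpos b hab v hv).ne'
    · exact ContinuousOn.div continuousOn_const (by fun_prop) fun v hv => (hpos a le_rfl v hv).ne'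
  have hintf : IntegrableOn (fun v => Ffn v b - Ffn v a) (Ioc u w) :=
    (hcont.integrableOn_compact isCompact_Icc).mono_set Ioc_subset_Icc_self
  rw [← ofReal_integral_eq_lintegral_ofReal hintf]
  · congr 1
    rw [← intervalIntegral.integral_of_le huw]
    have hder : ∀ c, a ≤ c → ∀ v ∈ uIcc u w,
        HasDerivAt (fun v => Real.log (1 + c * v)) (Ffn v c) v := by
      intro c hc v hv
      rw [uIcc_of_le huw] at hv
      have h1 : HasDerivAt (fun s : ℝ => 1 + c * s) c v := by
        simpa using ((hasDerivAt_id v).const_mul c).const_add 1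
      exact h1.log (hpos c hc v hv).ne'
    exact intervalIntegral.integral_eq_sub_of_hasDerivAt
      (fun v hv => (hder b hab v hv).sub (hder a le_rfl v hv))
      (by rw [intervalIntegrable_iff_integrableOn_Ioc_of_le huw]; exact hintf)
  · filter_upwards [ae_restrict_mem measurableSet_Ioc] with v hv
    have := Ffn_le (v := v) (hu.trans hv.1.le) (hpos a le_rfl v ⟨hv.1.le, hv.2⟩) hab
    simp only [Pi.zero_apply]
    linarith

lemma total_aux (h : Par p lam α β δ) (m : ℕ) (hm : m ≤ 2 * p - 1) :
    0 ≤ Real.log (1 + lam * α * Hseq β m) +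
      Real.log (Dfac β δ m * Real.sin ((m + 2) * β) / Real.sin (2 * β)) ∧
    ∫⁻ v in Ioc 0 (Hseq β m), sl p lam α β δ univ v =
      ENNReal.ofReal (Real.log (1 + lam * α * Hseq β m) +
        Real.log (Dfac β δ m * Real.sin ((m + 2) * β) / Real.sin (2 * β))) := by
  induction m with
  | zero =>
    have := h.sin2β.ne'
    simp [Hseq_zero, Dfac, div_self this]
  | succ m ih =>
    obtain ⟨ih0, ih⟩ := ih (by omega)
    have hH := h.Hseq_mono (Nat.le_succ m) hm
    have hH0 := h.Hseq_nonneg (m := m) (by omega)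
    have hH1 := h.Hseq_le_one hm
    have hu : Ioc 0 (Hseq β (m + 1)) = Ioc 0 (Hseq β m) ∪ Ioc (Hseq β m) (Hseq β (m + 1)) :=
      (Ioc_union_Ioc_eq_Ioc hH0 hH).symm
    have hl0 := h.l0_le (m := m + 1) (by omega) hm
    have har := h.aseq_le_r0 hm
    have step : ∫⁻ v in Ioc (Hseq β m) (Hseq β (m + 1)), sl p lam α β δ univ v =
        ∫⁻ v in Ioc (Hseq β m) (Hseq β (m + 1)),
          ENNReal.ofReal (Ffn v (lam * α) - Ffn v (aseq p β δ (m + 1))) := by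
      apply setLIntegral_congr_fun measurableSet_Ioc
      intro v hv
      simp only
      rw [h.sl_eq MeasurableSet.univ (m := m + 1) (by omega) hm (by simpa using hv), inter_univ,
        Real.volume_Icc]
    have hpos1 : 0 < 1 + aseq p β δ (m + 1) * Hseq β m := h.one_add_pos hl0 hH0 (hH.trans hH1)
    have hpos2 : 0 < 1 + aseq p β δ (m + 1) * Hseq β (m + 1) :=
      h.one_add_pos hl0 (hH0.trans hH) hH1
    have hr : lam * (α - 1) ≤ lam * α := by linarith [h.lam_pos]
    have e := h.ratio hm
    have hD0 := h.Dfac_pos m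
    have hD1 := h.Dfac_pos (m + 1)
    have hs := h.sin2β
    have hk0 := h.sinK (m := m) (by omega)
    have hk1 := h.sinK hm
    push_cast at hk1 ⊢
    have e0 : ((m : ℝ) + 3) * β = (m + 1 + 2) * β := by ring
    rw [e0] at e
    have elog : Real.log (Dfac β δ (m + 1) * Real.sin ((m + 1 + 2) * β) / Real.sin (2 * β)) =
        Real.log (Dfac β δ m * Real.sin ((m + 2) * β) / Real.sin (2 * β)) +
        (Real.log (1 + aseq p β δ (m + 1) * Hseq β m) -
          Real.log (1 + aseq p β δ (m + 1) * Hseq β (m + 1))) := by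
      rw [← Real.log_div hpos1.ne' hpos2.ne', ← Real.log_mul (by positivity) (by positivity)]
      congr 1
      rw [div_mul_div_comm, div_eq_div_iff hs.ne' (by positivity)]
      linear_combination Real.sin (2 * β) * e
    have hn : 0 ≤ (Real.log (1 + lam * α * Hseq β (m + 1)) -
        Real.log (1 + aseq p β δ (m + 1) * Hseq β (m + 1))) -
        (Real.log (1 + lam * α * Hseq β m) - Real.log (1 + aseq p β δ (m + 1) * Hseq β m)) := by
      have r1 : 0 < 1 + lam * α * Hseq β m := h.one_add_pos hr hH0 (hH.trans hH1)
      have r2 : 0 < 1 + lam * α * Hseq β (m + 1) := h.one_add_pos hr (hH0.trans hH) hH1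
      have : Real.log ((1 + lam * α * Hseq β m) * (1 + aseq p β δ (m + 1) * Hseq β (m + 1))) ≤
        Real.log ((1 + lam * α * Hseq β (m + 1)) * (1 + aseq p β δ (m + 1) * Hseq β m)) := by
        apply Real.log_le_log (by positivity)
        nlinarith [mul_nonneg (sub_nonneg.mpr har) (sub_nonneg.mpr hH)]
      rw [Real.log_mul r1.ne' hpos2.ne', Real.log_mul r2.ne' hpos1.ne'] at this
      linarith
    constructor
    · rw [elog]; linarith
    · rw [hu, lintegral_union measurableSet_Ioc (Ioc_disjoint_Ioc_of_le le_rfl), ih, step,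
        h.lint_Ffn hl0 har hH0 hH hH1, ← ENNReal.ofReal_add ih0 hn, elog]
      congr 1
      ring

theorem mu_univ (h : Par p lam α β δ) : mu p lam α β δ univ =
    ENNReal.ofReal (Real.log ((1 + Real.cos (2 * β)) / Real.sin (2 * β))) := by
  have h1 := h.mu_sl MeasurableSet.univ
  have h2 := (h.total_aux (2 * p - 1) le_rfl).2
  rw [h.Hseq_b] at h2
  simp only [mem_univ] at h1
  have h3 : {z : ℝ × ℝ | True} = univ := by ext; simp
  rw [h3] at h1
  rw [h1, h2]
  congr 1
  have hp := h.hp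
  have hodd : ¬ Even (2 * p - 1) := by
    rw [Nat.not_even_iff_odd]; exact ⟨p - 1, by omega⟩
  have hc := h.cosδ
  have hc2 := h.cosβδ
  have hs := h.sin2β
  have hr : 0 < 1 + lam * α * 1 := by linarith [h.r0_ge, h.lam_pos]
  unfold Dfac
  rw [if_neg hodd]
  have e1 : (((2 * p - 1 : ℕ) : ℝ) + 2) * β = β + Real.pi / 2 := by
    have : 1 ≤ 2 * p := by omega
    push_cast [Nat.cast_sub this]
    linear_combination h.hβ
  have hcb : 0 < Real.cos β := Real.cos_pos_of_mem_Ioo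
    ⟨by linarith [h.β_pos, Real.pi_pos], by linarith [h.β_pos, h.four_β]⟩
  rw [e1, Real.sin_add_pi_div_two, ← Real.log_mul hr.ne' (by positivity)]
  congr 1
  have e2 : Real.cos δ + Real.cos (2 * β - δ) = 2 * Real.cos β * Real.cos (β - δ) := by
    have a1 : Real.cos δ = Real.cos (β - (β - δ)) := by ring_nf
    have a2 : Real.cos (2 * β - δ) = Real.cos (β + (β - δ)) := by ring_nf
    rw [a1, a2, Real.cos_sub β, Real.cos_add β]; ring
  have e3 : 1 + lam * α * 1 = 2 * Real.cos β * Real.cos (β - δ) / Real.cos δ := by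
    rw [h.hα, ← e2]; field_simp
  rw [e3, Real.cos_two_mul]
  field_simp
  ring

end Par

lemma vol_slice_le {A R κ : ℝ} :
    volume (Icc A R ∩ Ioo (-κ) κ) ≤ ENNReal.ofReal (κ - max A (-κ)) := by
  rw [← Real.volume_Icc]
  apply measure_mono
  rintro t ⟨h1, h2⟩
  exact ⟨max_le h1.1 h2.1.le, h2.2.le⟩

lemma vol_slice_eq {A R κ : ℝ} (hR : κ ≤ R) :
    volume (Icc A R ∩ Ioo (-κ) κ) = ENNReal.ofReal (κ - max A (-κ)) := by
  apply le_antisymm vol_slice_le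
  rw [← Real.volume_Ioo]
  apply measure_mono
  rintro t ⟨h1, h2⟩
  rw [max_lt_iff] at h1
  exact ⟨⟨h1.1.le, h2.le.trans hR⟩, h1.2, h2⟩

lemma cancel_aux {κ x : ℝ} (hκ : 0 ≤ κ) (hx : 0 ≤ x) :
    ENNReal.ofReal (κ - max (-x) (-κ)) + ENNReal.ofReal (κ - max x (-κ)) =
      ENNReal.ofReal (2 * κ) := by
  rw [max_eq_left (a := x) (by linarith)]
  rcases le_total x κ with h | h
  · rw [max_eq_left (by linarith), ← ENNReal.ofReal_add (by linarith) (by linarith)]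
    congr 1; ring
  · rw [max_eq_right (by linarith), ENNReal.ofReal_of_nonpos (p := κ - x) (by linarith), add_zero]
    congr 1; ring

lemma Ffn_meas_v (t : ℝ) : Measurable fun v => Ffn v t := by unfold Ffn; fun_prop

namespace Par

variable {p : ℕ} {lam α β δ : ℝ}

/-- the model slice function -/
noncomputable def gsl (κ v a : ℝ) : ENNReal := ENNReal.ofReal (κ - max (Ffn v a) (-κ))

lemma gsl_meas (κ a : ℝ) : Measurable fun v => gsl κ v a := by
  unfold gsl
  exact ENNReal.measurable_ofReal.comp (measurable_const.sub ((Ffn_meas_v a).max measurable_const))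

lemma gsl_cancel (h : Par p lam α β δ) {κ : ℝ} (hκ : 0 ≤ κ) {v : ℝ}
    (hv : v ∈ Ioc (lam - 1) (lam / 2)) :
    gsl κ v (aseq p β δ (2 * p - 2)) + gsl κ (lam - v) (aseq p β δ (2 * p - 1)) =
      ENNReal.ofReal (2 * κ) := by
  have hl := h.lam_gt
  have hl2 := h.lam_lt
  have hp := h.hp
  have hv0 : 0 ≤ v := by linarith [hv.1]
  have hv1 : v ≤ 1 := by linarith [hv.2]
  have hA : 0 < 1 + aseq p β δ (2 * p - 2) * v :=
    h.one_add_pos (h.l0_le (by omega) (by omega)) hv0 hv1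
  have hb := h.b_nonneg
  have ha := h.a_nonpos
  have hr := h.ab_rel
  have hB : 0 < 1 + aseq p β δ (2 * p - 1) * (lam - v) := by
    have : 0 ≤ aseq p β δ (2 * p - 1) * (lam - v) := mul_nonneg hb (by linarith)
    linarith
  have e : Ffn (lam - v) (aseq p β δ (2 * p - 1)) = - Ffn v (aseq p β δ (2 * p - 2)) := by
    unfold Ffn
    rw [← neg_div, div_eq_div_iff hB.ne' hA.ne']
    linear_combination hr
  unfold gsl
  rw [e]
  have hx : 0 ≤ - Ffn v (aseq p β δ (2 * p - 2)) := by
    unfold Ffn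
    rw [← neg_div]
    exact div_nonneg (by linarith) hA.le
  have := cancel_aux hκ hx
  rwa [neg_neg] at this

lemma gsl_int (h : Par p lam α β δ) {κ : ℝ} (hκ : 0 ≤ κ) :
    (∫⁻ v in Ioc (lam - 1) (lam / 2), gsl κ v (aseq p β δ (2 * p - 2))) +
      ∫⁻ v in Ioc (lam / 2) 1, gsl κ v (aseq p β δ (2 * p - 1)) =
      ENNReal.ofReal (2 * κ) * ENNReal.ofReal (lam / 2 - (lam - 1)) := by
  have e1 : ∫⁻ v in Ioc (lam / 2) 1, gsl κ v (aseq p β δ (2 * p - 1)) =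
      ∫⁻ v in Ioc (lam - 1) (lam / 2), gsl κ (lam - v) (aseq p β δ (2 * p - 1)) := by
    rw [← lintegral_indicator measurableSet_Ioc, ← lintegral_sub_left_eq_self _ lam,
      setLIntegral_congr (Ico_ae_eq_Ioc (a := lam - 1) (b := lam / 2)).symm,
      ← lintegral_indicator measurableSet_Ico]
    apply lintegral_congr
    intro v
    by_cases hv : v ∈ Ico (lam - 1) (lam / 2)
    · rw [indicator_of_mem hv, indicator_of_mem]
      exact ⟨by linarith [hv.2], by linarith [hv.1]⟩
    · rw [indicator_of_notMem hv, indicator_of_notMem]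
      intro hh
      exact hv ⟨by linarith [hh.2], by linarith [hh.1]⟩
  rw [e1, ← lintegral_add_left (gsl_meas _ _)]
  rw [setLIntegral_congr_fun measurableSet_Ioc (fun v hv => h.gsl_cancel hκ hv),
    setLIntegral_const, Real.volume_Ioc]

lemma level_exists (h : Par p lam α β δ) {M : ℕ} (hM : M ≤ 2 * p - 1) {v : ℝ} (hv0 : 0 < v)
    (hv : v ≤ Hseq β M) : ∃ m, 1 ≤ m ∧ m ≤ M ∧ v ∈ Ioc (Hseq β (m - 1)) (Hseq β m) := by
  have hex : ∃ m, v ≤ Hseq β m := ⟨M, hv⟩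
  have h1 := Nat.find_spec hex
  have h2 : Nat.find hex ≤ M := Nat.find_min' hex hv
  have h3 : 1 ≤ Nat.find hex := by
    by_contra hc
    have : Nat.find hex = 0 := by omega
    rw [this, Hseq_zero] at h1
    linarith
  refine ⟨_, h3, h2, ?_, h1⟩
  have := Nat.find_min hex (m := Nat.find hex - 1) (by omega)
  linarith

lemma mu_split (h : Par p lam α β δ) {B : Set ℝ} (hB : MeasurableSet B) :
    mu p lam α β δ {z : ℝ × ℝ | Ffn z.2 z.1 ∈ B} =
      (∫⁻ v in Ioc 0 (lam - 1), sl p lam α β δ B v) +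
      ((∫⁻ v in Ioc (lam - 1) (lam / 2), sl p lam α β δ B v) +
      ∫⁻ v in Ioc (lam / 2) 1, sl p lam α β δ B v) := by
  have hl := h.lam_gt
  have hl2 := h.lam_lt
  rw [h.mu_sl hB, ← Ioc_union_Ioc_eq_Ioc (a := 0) (b := lam - 1) (c := 1) (by linarith)
    (by linarith), lintegral_union measurableSet_Ioc (Ioc_disjoint_Ioc_of_le le_rfl),
    ← Ioc_union_Ioc_eq_Ioc (a := lam - 1) (b := lam / 2) (c := 1) (by linarith)
    (by linarith), lintegral_union measurableSet_Ioc (Ioc_disjoint_Ioc_of_le le_rfl)]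

lemma sl_mid (h : Par p lam α β δ) {B : Set ℝ} (hB : MeasurableSet B) {v : ℝ}
    (hv : v ∈ Ioc (lam - 1) (lam / 2)) : sl p lam α β δ B v =
      volume (Icc (Ffn v (aseq p β δ (2 * p - 2))) (Ffn v (lam * α)) ∩ B) := by
  have hp := h.hp
  apply h.sl_eq hB (m := 2 * p - 2) (by omega) (by omega)
  have : 2 * p - 2 - 1 = 2 * p - 3 := by omega
  rw [this, h.Hseq_a, h.Hseq_c]
  exact hv

lemma sl_top (h : Par p lam α β δ) {B : Set ℝ} (hB : MeasurableSet B) {v : ℝ}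
    (hv : v ∈ Ioc (lam / 2) 1) : sl p lam α β δ B v =
      volume (Icc (Ffn v (aseq p β δ (2 * p - 1))) (Ffn v (lam * α)) ∩ B) := by
  have hp := h.hp
  apply h.sl_eq hB (m := 2 * p - 1) (by omega) (by omega)
  have : 2 * p - 1 - 1 = 2 * p - 2 := by omega
  rw [this, h.Hseq_a, h.Hseq_b]
  exact hv

lemma final_sum (h : Par p lam α β δ) {κ : ℝ} (hκ : 0 ≤ κ) :
    ENNReal.ofReal (2 * κ) * ENNReal.ofReal (lam - 1) +
      ENNReal.ofReal (2 * κ) * ENNReal.ofReal (lam / 2 - (lam - 1)) =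
    ENNReal.ofReal (lam * κ) := by
  have hl := h.lam_gt
  have hl2 := h.lam_lt
  rw [← mul_add, ← ENNReal.ofReal_add (by linarith) (by linarith),
    ← ENNReal.ofReal_mul (by linarith)]
  congr 1; ring

theorem M_upper (h : Par p lam α β δ) {κ : ℝ} (hκ : 0 ≤ κ) :
    mu p lam α β δ {z : ℝ × ℝ | Ffn z.2 z.1 ∈ Ioo (-κ) κ} ≤ ENNReal.ofReal (lam * κ) := by
  have hl := h.lam_gt
  have hl2 := h.lam_lt
  have hB : MeasurableSet (Ioo (-κ) κ) := measurableSet_Ioo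
  have hp := h.hp
  rw [h.mu_split hB, ← h.final_sum hκ, ← h.gsl_int hκ]
  refine add_le_add ?_ (add_le_add ?_ ?_)
  · calc ∫⁻ v in Ioc 0 (lam - 1), sl p lam α β δ (Ioo (-κ) κ) v
        ≤ ∫⁻ v in Ioc 0 (lam - 1), ENNReal.ofReal (2 * κ) := by
          apply setLIntegral_mono measurable_const
          intro v hv
          obtain ⟨m, hm1, hm2, hvm⟩ := h.level_exists (M := 2 * p - 3) (by omega) hv.1
            (by rw [h.Hseq_c]; exact hv.2)
          rw [h.sl_eq hB hm1 (by omega) hvm]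
          refine (measure_mono inter_subset_right).trans ?_
          rw [Real.volume_Ioo]
          apply le_of_eq; congr 1; ring
      _ = _ := by rw [setLIntegral_const, Real.volume_Ioc, sub_zero]
  · apply setLIntegral_mono (gsl_meas _ _)
    intro v hv
    rw [h.sl_mid hB hv]
    exact vol_slice_le
  · apply setLIntegral_mono (gsl_meas _ _)
    intro v hv
    rw [h.sl_top hB hv]
    exact vol_slice_le

lemma b_formula (h : Par p lam α β δ) :
    aseq p β δ (2 * p - 1) * (2 - α * lam ^ 2) = lam * (2 * α - 1) ∧ 0 < 2 - α * lam ^ 2 := by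
  have hs := h.sin2β
  have hc := h.cosδ
  have e1 : (2 - α * lam ^ 2) * Real.cos δ = 2 * Real.sin (2 * β) * Real.sin (2 * β - δ) := by
    have : α * lam ^ 2 = lam * (lam * α) := by ring
    rw [this, h.hα, h.hlam, Real.cos_sub, Real.sin_sub]
    field_simp
    linear_combination (- Real.cos δ) * Real.sin_sq_add_cos_sq (2 * β)
  have e2 : lam * (2 * α - 1) * Real.cos δ = 2 * Real.sin (2 * β) * Real.sin δ := by
    have : lam * (2 * α - 1) = 2 * (lam * α) - lam := by ring
    rw [this, h.hα, h.hlam, Real.cos_sub]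
    field_simp
    ring
  constructor
  · have hB := h.sinB.ne'
    have : aseq p β δ (2 * p - 1) * ((2 - α * lam ^ 2) * Real.cos δ) =
      lam * (2 * α - 1) * Real.cos δ := by
      rw [e1, e2, h.aseq_b]; field_simp
    apply mul_right_cancel₀ hc.ne'
    rw [mul_assoc]; exact this
  · have : 0 < (2 - α * lam ^ 2) * Real.cos δ := by
      rw [e1]; have := h.sinB; positivity
    exact pos_of_mul_pos_left this hc.le

lemma kap_b (h : Par p lam α β δ) {κ : ℝ} 
    (h2 : κ ≤ lam * (2 - α * lam ^ 2) / (4 - lam ^ 2)) :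
    κ * (aseq p β δ (2 * p - 1) + 2 / lam) ≤ 1 := by
  obtain ⟨e1, e2⟩ := h.b_formula
  have hl := h.lam_pos
  have hl2 := h.lam_lt
  have h4 : 0 < 4 - lam ^ 2 := by nlinarith
  have e3 : aseq p β δ (2 * p - 1) + 2 / lam = (4 - lam ^ 2) / (lam * (2 - α * lam ^ 2)) := by
    have : aseq p β δ (2 * p - 1) = lam * (2 * α - 1) / (2 - α * lam ^ 2) := by
      rw [eq_div_iff e2.ne', e1]
    rw [this]
    rw [div_add_div _ _ e2.ne' hl.ne', mul_comm lam (2 - α * lam ^ 2)]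
    congr 1; ring
  rw [e3]
  rw [le_div_iff₀ h4] at h2
  rw [mul_div_assoc', div_le_one (by positivity)]
  exact h2

lemma left_ok (h : Par p lam α β δ) {κ : ℝ} (hκ : 0 < κ) (h1 : κ ≤ lam / (lam + 2))
    (h2 : κ ≤ lam * (2 - α * lam ^ 2) / (4 - lam ^ 2)) {m : ℕ} (hm1 : 1 ≤ m)
    (hm2 : m ≤ 2 * p - 3) {v : ℝ} (hv : v ∈ Ioc (Hseq β (m - 1)) (Hseq β m)) :
    Ffn v (aseq p β δ m) ≤ -κ := by
  have hp := h.hp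
  have hl := h.lam_gt
  have hl2 := h.lam_lt
  have hv0 : 0 ≤ v := (h.Hseq_nonneg (by omega)).trans hv.1.le
  have hv1 : v ≤ 1 := hv.2.trans (h.Hseq_le_one (by omega))
  have hpos := h.one_add_pos (h.l0_le hm1 (by omega)) hv0 hv1
  have hneg := h.aseq_neg hm2
  have hrec := h.aseq_rec hm2
  have key : κ * (aseq p β δ (m + 2) + lam - v) ≤ 1 := by
    by_cases hm3 : m = 2 * p - 3
    · have e1 : m + 2 = 2 * p - 1 := by omega
      rw [e1]
      have h3 := h.kap_b h2
      have h5 := h.Hseq_rec (m := 2 * p - 4) (by omega)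
      have e2 : 2 * p - 4 + 2 = 2 * p - 2 := by omega
      rw [e2, h.Hseq_a] at h5
      have h6 : lam - Hseq β (2 * p - 4) = 2 / lam := by
        have : lam - Hseq β (2 * p - 4) = 1 / (1 / (lam - Hseq β (2 * p - 4))) := by
          rw [one_div_one_div]
        rw [this, ← h5]; field_simp
      have e3 : m - 1 = 2 * p - 4 := by omega
      have h7 := hv.1
      rw [e3] at h7
      have : aseq p β δ (2 * p - 1) + lam - v ≤ aseq p β δ (2 * p - 1) + 2 / lam := by linarith
      exact (mul_le_mul_of_nonneg_left this hκ.le).trans h3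
    · have h3 : aseq p β δ (m + 2) ≤ 0 :=
        (h.aseq_mono (n := 2 * p - 2) (by omega) (by omega)).trans h.a_nonpos
      have h4 : κ * 2 ≤ 1 := by
        rw [le_div_iff₀ (by linarith)] at h1
        nlinarith
      nlinarith
  have e : aseq p β δ (m + 2) + lam = -1 / aseq p β δ m := by linarith
  rw [e] at key
  unfold Ffn
  rw [div_le_iff₀ hpos]
  have : κ * (-1 / aseq p β δ m - v) * (- aseq p β δ m) ≤ 1 * (- aseq p β δ m) :=
    mul_le_mul_of_nonneg_right key (by linarith)
  have e3 : κ * (-1 / aseq p β δ m - v) * (- aseq p β δ m) = κ * (1 + aseq p β δ m * v) := by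
    have := hneg.ne
    field_simp
    ring
  rw [e3] at this
  linarith

lemma right_ok (h : Par p lam α β δ) {κ : ℝ} (h1 : κ ≤ lam / (lam + 2))
    {v : ℝ} (hv0 : 0 ≤ v) (hv1 : v ≤ 1) : κ ≤ Ffn v (lam * α) := by
  have hl := h.lam_gt
  have hr := h.r0_ge
  refine h1.trans ?_
  unfold Ffn
  rw [div_le_div_iff₀ (by linarith) (by nlinarith)]
  nlinarith [mul_nonneg (show 0 ≤ lam * α by linarith) (sub_nonneg.mpr hv1)]

theorem M_eq (h : Par p lam α β δ) {κ : ℝ} (hκ : 0 < κ) (h1 : κ ≤ lam / (lam + 2))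
    (h2 : κ ≤ lam * (2 - α * lam ^ 2) / (4 - lam ^ 2)) :
    mu p lam α β δ {z : ℝ × ℝ | Ffn z.2 z.1 ∈ Ioo (-κ) κ} = ENNReal.ofReal (lam * κ) := by
  have hl := h.lam_gt
  have hl2 := h.lam_lt
  have hB : MeasurableSet (Ioo (-κ) κ) := measurableSet_Ioo
  have hp := h.hp
  rw [h.mu_split hB, ← h.final_sum hκ.le, ← h.gsl_int hκ.le]
  congr 1
  · calc ∫⁻ v in Ioc 0 (lam - 1), sl p lam α β δ (Ioo (-κ) κ) v
        = ∫⁻ v in Ioc 0 (lam - 1), ENNReal.ofReal (2 * κ) := by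
          apply setLIntegral_congr_fun measurableSet_Ioc
          intro v hv
          obtain ⟨m, hm1, hm2, hvm⟩ := h.level_exists (M := 2 * p - 3) (by omega) hv.1
            (by rw [h.Hseq_c]; exact hv.2)
          simp only
          rw [h.sl_eq hB hm1 (by omega) hvm, vol_slice_eq (h.right_ok h1 hv.1.le
            (by linarith [hv.2])), max_eq_right (h.left_ok hκ h1 h2 hm1 hm2 hvm)]
          congr 1; ring
      _ = _ := by rw [setLIntegral_const, Real.volume_Ioc, sub_zero]
  · congr 1
    · apply setLIntegral_congr_fun measurableSet_Ioc
      intro v hv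
      simp only
      rw [h.sl_mid hB hv, vol_slice_eq (h.right_ok h1 (by linarith [hv.1]) (by linarith [hv.2]))]
      rfl
    · apply setLIntegral_congr_fun measurableSet_Ioc
      intro v hv
      simp only
      rw [h.sl_top hB hv, vol_slice_eq (h.right_ok h1 (by linarith [hv.1]) hv.2)]
      rfl

end Par

lemma Tnat_iter_fst (lam α : ℝ) (z : ℝ × ℝ) (n : ℕ) :
    ((Tnat lam α)^[n] z).1 = (Tmap lam α)^[n] z.1 := by
  induction n with
  | zero => rfl
  | succ n ih => rw [Function.iterate_succ_apply', Function.iterate_succ_apply', ← ih]; rfl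

lemma contract_lim {u v : ℕ → ℝ} {lam : ℝ} (hl : 1 < lam) (hu : ∀ n, 0 ≤ u n)
    (huv : ∀ n, u (n + 1) ≤ u n * v n) (hv : ∀ n, v n ≤ 1)
    (hf : ∀ n, ∃ k, n ≤ k ∧ v k ≤ 1 / lam) : Filter.Tendsto u Filter.atTop (nhds 0) := by
  have hanti : Antitone u := antitone_nat_of_succ_le fun n =>
    (huv n).trans (mul_le_of_le_one_right (hu n) (hv n))
  have hbdd : BddBelow (range u) := ⟨0, by rintro _ ⟨n, rfl⟩; exact hu n⟩
  have hlim := tendsto_atTop_ciInf hanti hbdd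
  set l := ⨅ n, u n
  have hl0 : 0 ≤ l := le_ciInf hu
  have hle : ∀ n, l ≤ u n := fun n => ciInf_le hbdd n
  rcases hl0.eq_or_lt with h0 | h0
  · rwa [← h0] at hlim
  · exfalso
    have h1 : l < l * lam := by nlinarith
    obtain ⟨n, hn⟩ := (hlim.eventually (gt_mem_nhds h1)).exists
    obtain ⟨k, hk, hvk⟩ := hf n
    have h2 := huv k
    have h3 : u k < l * lam := lt_of_le_of_lt (hanti hk) hn
    have h4 : u k * v k ≤ u k * (1 / lam) := mul_le_mul_of_nonneg_left hvk (hu k)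
    have h5 : u k * (1 / lam) < l := by
      rw [mul_one_div, div_lt_iff₀ (by linarith)]; exact h3
    linarith [hle (k + 1)]

namespace Par

variable {p : ℕ} {lam α β δ : ℝ}

lemma orbit_mem (h : Par p lam α β δ) {z : ℝ × ℝ} (hz : z ∈ Om p lam α β δ)
    (hne : ∀ n, (Tmap lam α)^[n] z.1 ≠ 0) (n : ℕ) : (Tnat lam α)^[n] z ∈ Om p lam α β δ := by
  induction n with
  | zero => exact hz
  | succ n ih =>
    rw [Function.iterate_succ_apply']
    exact h.Tnat_mem ih (by rw [Tnat_iter_fst]; exact hne n)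

/-- a single step which is not of type `(-1, 1)` contracts -/
lemma step_contract (h : Par p lam α β δ) {z : ℝ × ℝ} (hz : z ∈ Om p lam α β δ) (hne : z.1 ≠ 0)
    (hs : ¬ (z.1 < 0 ∧ dfun lam α z.1 = 1)) : (Tnat lam α z).2 ≤ 1 / lam := by
  obtain ⟨h1, h2, h3, h4⟩ := h.Om_bounds hz
  have hd : 1 ≤ dfun lam α z.1 := h.dfun_ge hne h1 h2
  have hd' : (1 : ℝ) ≤ dfun lam α z.1 := by exact_mod_cast hd
  have hl := h.lam_gt
  unfold Tnat
  simp only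
  apply one_div_le_one_div_of_le h.lam_pos
  rcases lt_or_gt_of_ne hne with ht | ht
  · have hd2 : (2 : ℝ) ≤ dfun lam α z.1 := by
      have : 2 ≤ dfun lam α z.1 := by
        by_contra hc
        exact hs ⟨ht, by omega⟩
      exact_mod_cast this
    rw [Real.sign_of_neg ht]; nlinarith
  · rw [Real.sign_of_pos ht]; nlinarith

lemma freq_contract (h : Par p lam α β δ) {z : ℝ × ℝ} (hz : z ∈ Om p lam α β δ)
    (hne : ∀ n, (Tmap lam α)^[n] z.1 ≠ 0) (n : ℕ) :
    ∃ k, n ≤ k ∧ ((Tnat lam α)^[k + 1] z).2 ≤ 1 / lam := by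
  by_contra hc
  push Not at hc
  have hl := h.lam_gt
  have hl2 := h.lam_lt
  have hall : ∀ k, n ≤ k → (Tmap lam α)^[k] z.1 < 0 ∧ dfun lam α ((Tmap lam α)^[k] z.1) = 1 := by
    intro k hk
    by_contra hcc
    have := h.step_contract (h.orbit_mem hz hne k) (by rw [Tnat_iter_fst]; exact hne k)
      (by rw [Tnat_iter_fst]; exact hcc)
    rw [← Function.iterate_succ_apply' (Tnat lam α)] at this
    linarith [hc k hk]
  have hinc : ∀ j : ℕ, (Tmap lam α)^[n] z.1 + j * (2 - lam) ≤ (Tmap lam α)^[n + j] z.1 := by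
    intro j
    induction j with
    | zero => simp
    | succ j ih =>
      obtain ⟨ht, hd⟩ := hall (n + j) (by omega)
      rw [← add_assoc, Function.iterate_succ_apply', Tmap_of_ne (hne _), hd,
        abs_of_neg (one_div_neg.mpr ht)]
      set t := (Tmap lam α)^[n + j] z.1
      have : 2 ≤ -(1 / t) - t := by
        have e : -(1 / t) - t - 2 = (1 + t) ^ 2 / (-t) := by
          have := ht.ne
          field_simp
          ring
        have : 0 ≤ (1 + t) ^ 2 / (-t) := div_nonneg (sq_nonneg _) (by linarith)
        linarith
      push_cast
      linarith
  obtain ⟨j, hj⟩ := exists_nat_gt (lam / (2 - lam))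
  rw [div_lt_iff₀ (by linarith)] at hj
  have h1 := hinc j
  have h2 := (h.Om_bounds (h.orbit_mem hz hne n)).1
  rw [Tnat_iter_fst] at h2
  have h3 := (hall (n + j) (by omega)).1
  nlinarith [h.α_ge]

/-- orbits on the same vertical fibre are asymptotic -/
lemma fibre_contract (h : Par p lam α β δ) {t v v' : ℝ} (hz : (t, v) ∈ Om p lam α β δ)
    (hz' : (t, v') ∈ Om p lam α β δ) (hne : ∀ n, (Tmap lam α)^[n] t ≠ 0) :
    Filter.Tendsto (fun n => |((Tnat lam α)^[n] (t, v)).2 - ((Tnat lam α)^[n] (t, v')).2|)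
      Filter.atTop (nhds 0) := by
  apply contract_lim (v := fun n => ((Tnat lam α)^[n + 1] (t, v)).2) (lam := lam)
    (by linarith [h.lam_gt]) (fun n => abs_nonneg _)
  · intro n
    have m1 := h.orbit_mem hz hne n
    have m2 := h.orbit_mem hz' hne n
    have m3 := h.Om_bounds (h.orbit_mem hz hne (n + 1))
    have m4 := h.Om_bounds (h.orbit_mem hz' hne (n + 1))
    rw [Function.iterate_succ_apply' _ n (t, v), Function.iterate_succ_apply' _ n (t, v')] at *
    have f1 := Tnat_iter_fst lam α (t, v) n
    have f2 := Tnat_iter_fst lam α (t, v') n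
    simp only at f1 f2
    set w := (Tnat lam α)^[n] (t, v)
    set w' := (Tnat lam α)^[n] (t, v')
    have ne1 : w.1 ≠ 0 := by rw [f1]; exact hne n
    have ne2 : w'.1 ≠ 0 := by rw [f2]; exact hne n
    have d1 := h.den_pos m1 ne1
    have d2 := h.den_pos m2 ne2
    have hs := sign_sq ne1
    have e : (Tnat lam α w).2 - (Tnat lam α w').2 =
        - Real.sign w.1 * (w.2 - w'.2) * ((Tnat lam α w).2 * (Tnat lam α w').2) := by
      unfold Tnat
      simp only
      rw [f2, ← f1] at d2 ⊢
      field_simp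
      ring
    have habs : |Real.sign w.1| = 1 := by
      have : |Real.sign w.1| * |Real.sign w.1| = 1 := by rw [← abs_mul, hs, abs_one]
      nlinarith [abs_nonneg (Real.sign w.1)]
    rw [e, abs_mul, abs_mul, abs_neg, habs, one_mul]
    apply mul_le_mul_of_nonneg_left _ (abs_nonneg _)
    rw [abs_of_nonneg (mul_nonneg m3.2.2.1 m4.2.2.1)]
    exact mul_le_of_le_one_right m3.2.2.1 m4.2.2.2
  · intro n
    exact (h.Om_bounds (h.orbit_mem hz hne (n + 1))).2.2.2
  · intro n
    exact h.freq_contract hz hne n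

variable {x : ℝ}

lemma S_facts (h : Par p lam α β δ) (h1 : lam * (α - 1) ≤ x) (h2 : x ≤ lam * α)
    (hne : ∀ n, (Tmap lam α)^[n] x ≠ 0) (n : ℕ) :
    0 < (Spair lam α x n).1 ∧
      (Spair lam α x n).2 = ((Tnat lam α)^[n] (x, 0)).2 * (Spair lam α x n).1 := by
  induction n with
  | zero => simp [Spair]
  | succ n ih =>
    obtain ⟨ih1, ih2⟩ := ih
    have m1 := h.orbit_mem (h.Om_zero h1 h2) hne n
    have f1 := Tnat_iter_fst lam α (x, 0) n
    simp only at f1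
    have ne1 : ((Tnat lam α)^[n] (x, 0)).1 ≠ 0 := by rw [f1]; exact hne n
    have d1 := h.den_pos m1 ne1
    rw [Function.iterate_succ_apply']
    simp only [Spair, Tnat]
    rw [ih2, f1] at *
    constructor
    · have := mul_pos ih1 d1
      linarith
    · field_simp

lemma x_rel (h : Par p lam α β δ) (hne : ∀ n, (Tmap lam α)^[n] x ≠ 0) (n : ℕ) :
    x * ((Spair lam α x n).1 + (Tmap lam α)^[n] x * (Spair lam α x n).2) =
      (Rpair lam α x n).1 + (Tmap lam α)^[n] x * (Rpair lam α x n).2 := by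
  induction n with
  | zero => simp [Spair, Rpair]
  | succ n ih =>
    rw [Function.iterate_succ_apply', Tmap_of_ne (hne n), abs_one_div_eq]
    simp only [Spair, Rpair]
    have hh := hne n
    set t := (Tmap lam α)^[n] x
    set e := Real.sign t
    field_simp
    linear_combination e * ih

lemma RS_det (h : Par p lam α β δ) (hne : ∀ n, (Tmap lam α)^[n] x ≠ 0) (n : ℕ) :
    |(Rpair lam α x n).1 * (Spair lam α x n).2 - (Rpair lam α x n).2 * (Spair lam α x n).1| = 1 := by
  induction n with
  | zero => simp [Spair, Rpair]
  | succ n ih =>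
    simp only [Spair, Rpair]
    have hs := sign_sq (hne n)
    set e := Real.sign ((Tmap lam α)^[n] x)
    have habs : |e| = 1 := by
      have : |e| * |e| = 1 := by rw [← abs_mul, hs, abs_one]
      nlinarith [abs_nonneg e]
    rw [← ih, ← abs_neg ((Rpair lam α x n).1 * _ - _), ← one_mul |-_|, ← habs, ← abs_mul]
    congr 1
    ring

lemma Theta_eq (h : Par p lam α β δ) (h1 : lam * (α - 1) ≤ x) (h2 : x ≤ lam * α)
    (hne : ∀ n, (Tmap lam α)^[n] x ≠ 0) (n : ℕ) :
    Theta lam α x n = |Ffn ((Tnat lam α)^[n] (x, 0)).2 ((Tnat lam α)^[n] (x, 0)).1| := by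
  obtain ⟨s1, s2⟩ := h.S_facts h1 h2 hne n
  have hx := x_rel h hne n
  have hd := RS_det h hne n
  have hb := h.Om_bounds (h.orbit_mem (h.Om_zero h1 h2) hne n)
  have f1 := Tnat_iter_fst lam α (x, 0) n
  simp only at f1
  unfold Theta Ffn
  rw [f1] at hb ⊢
  set v := ((Tnat lam α)^[n] (x, 0)).2
  set t := (Tmap lam α)^[n] x
  set S := (Spair lam α x n).1
  set S' := (Spair lam α x n).2
  set R := (Rpair lam α x n).1
  set R' := (Rpair lam α x n).2
  have hpos : 0 < 1 + t * v := h.one_add_pos hb.1 hb.2.2.1 hb.2.2.2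
  have e : S ^ 2 * (x - R / S) = - (R * S' - R' * S) * (t / (1 + t * v)) := by
    rw [s2] at hx ⊢
    have e1 : S ^ 2 * (x - R / S) = S * (S * x - R) := by field_simp
    rw [e1, mul_div_assoc', eq_div_iff hpos.ne']
    linear_combination S * hx
  rw [← abs_of_pos (show 0 < S ^ 2 by positivity), ← abs_mul, e, abs_mul, abs_neg, hd, one_mul]

lemma S_mono_inv (h : Par p lam α β δ) (h1 : lam * (α - 1) ≤ x) (h2 : x ≤ lam * α)
    (hne : ∀ n, (Tmap lam α)^[n] x ≠ 0) :
    Filter.Tendsto (fun n => 1 / (Spair lam α x n).1) Filter.atTop (nhds 0) := by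
  have hz := h.Om_zero h1 h2
  apply contract_lim (v := fun n => ((Tnat lam α)^[n + 1] (x, 0)).2) (lam := lam)
    (by linarith [h.lam_gt])
  · intro n
    exact (one_div_pos.mpr (h.S_facts h1 h2 hne n).1).le
  · intro n
    have a := h.S_facts h1 h2 hne n
    obtain ⟨b1, b2⟩ := h.S_facts h1 h2 hne (n + 1)
    have e : (Spair lam α x (n + 1)).2 = (Spair lam α x n).1 := rfl
    rw [e] at b2
    have a1 := a.1
    rw [b2] at a1 ⊢
    have hv : ((Tnat lam α)^[n + 1] (x, 0)).2 ≠ 0 := by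
      intro h0; rw [h0] at a1; simp at a1
    apply le_of_eq
    field_simp
  · intro n
    exact (h.Om_bounds (h.orbit_mem hz hne (n + 1))).2.2.2
  · intro n
    exact h.freq_contract hz hne n

end Par

/-- invariance data for a function on the line -/
structure QInv {γ : Type*} (lam α : ℝ) (K : Subfield ℝ) (Q : ℝ → γ) : Prop where
  hl : lam ∈ K
  ha : α ∈ K
  hper : ∀ x, Q (x + lam) = Q x
  hinv : ∀ x, x ∉ K → lam * (α - 1) < x → x < lam * α → Q |1 / x| = Q x

namespace QInv

variable {γ : Type*} {p : ℕ} {lam α β δ : ℝ} {K : Subfield ℝ} {Q : ℝ → γ}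

lemma ne_of (_hq : QInv lam α K Q) {x y : ℝ} (hx : x ∉ K) (hy : y ∈ K) : x ≠ y := by
  rintro rfl; exact hx hy

lemma sub_per (hq : QInv lam α K Q) (x : ℝ) : Q (x - lam) = Q x := by
  have := hq.hper (x - lam)
  rw [sub_add_cancel] at this
  exact this.symm

lemma add_int (hq : QInv lam α K Q) (x : ℝ) (n : ℤ) : Q (x + n * lam) = Q x := by
  induction n using Int.induction_on with
  | zero => simp
  | succ i ih =>
    have := hq.hper (x + i * lam)
    push_cast at *
    rw [← ih, ← this]; congr 1; ring
  | pred i ih =>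
    have := hq.sub_per (x + (-i : ℤ) * lam)
    push_cast at *
    rw [← ih, ← this]; congr 1; ring

lemma notMem_step (hq : QInv lam α K Q) {x : ℝ} (hx : x ∉ K) : -1 / x - lam ∉ K := by
  intro hc
  apply hx
  have h1 : -1 / x ∈ K := by
    have := K.add_mem hc hq.hl
    rwa [sub_add_cancel] at this
  have h2 := K.inv_mem (K.neg_mem h1)
  rw [neg_div, neg_neg, one_div, inv_inv] at h2
  exact h2

lemma pos_inv (hq : QInv lam α K Q) (h : Par p lam α β δ) {x : ℝ} (hx : x ∉ K) (h0 : 0 < x)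
    (h1 : x < lam * α) : Q (1 / x) = Q x := by
  have := hq.hinv x hx (by nlinarith [h.α_lt, h.lam_pos]) h1
  rwa [abs_of_pos (one_div_pos.mpr h0)] at this

lemma neg_inv (hq : QInv lam α K Q) (h : Par p lam α β δ) {x : ℝ} (hx : x ∉ K) (h0 : x < 0)
    (h1 : lam * (α - 1) < x) : Q (-1 / x) = Q x := by
  have := hq.hinv x hx h1 (by nlinarith [h.α_ge, h.lam_pos])
  rwa [abs_of_neg (one_div_neg.mpr h0), ← neg_div] at this

lemma step (hq : QInv lam α K Q) (h : Par p lam α β δ) {θ : ℝ} (h0 : 0 < θ)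
    (h1 : θ < (2 * p - 2) * β - δ) (hK : - sfn β θ ∉ K) :
    Q (- sfn β θ) = Q (- sfn β (θ - 2 * β)) ∧ - sfn β (θ - 2 * β) ∉ K := by
  have hβ := h.β_pos
  have hpb := h.hβ
  have hd := h.hδ0
  have e : - sfn β (θ - 2 * β) = -1 / (- sfn β θ) - lam := by
    have := h.sfn_unshift (x := θ) (h.sin_pos h0 (by linarith)).ne'
    exact this
  have hneg : - sfn β θ < 0 := by
    unfold sfn
    rw [neg_lt_zero]
    exact div_pos (h.sin_pos h0 (by linarith)) (h.sin_pos (by linarith) (by linarith))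
  have hgt : lam * (α - 1) < - sfn β θ := by
    rw [← h.aseq_one]
    unfold aseq
    apply neg_lt_neg
    have := h.ang_one
    apply h.sfn_lt (by linarith) (by linarith) (by linarith)
  refine ⟨?_, by rw [e]; exact hq.notMem_step hK⟩
  rw [e, hq.sub_per, hq.neg_inv h hK hneg hgt]

lemma chain (hq : QInv lam α K Q) (h : Par p lam α β δ) (j : ℕ) {θ : ℝ}
    (h0 : 2 * β * ((j : ℝ) - 1) < θ)
    (h1 : θ < (2 * p - 2) * β - δ) (hK : - sfn β θ ∉ K) :
    Q (- sfn β θ) = Q (- sfn β (θ - 2 * β * j)) ∧ - sfn β (θ - 2 * β * j) ∉ K := by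
  have hβ := h.β_pos
  induction j with
  | zero => simpa using hK
  | succ j ih =>
    push_cast at h0 ⊢
    obtain ⟨i1, i2⟩ := ih (by linarith)
    obtain ⟨s1, s2⟩ := hq.step h (θ := θ - 2 * β * j) (by linarith)
      (by have : 0 ≤ 2 * β * (j : ℝ) := by positivity
          linarith) i2
    have e : θ - 2 * β * j - 2 * β = θ - 2 * β * (j + 1) := by ring
    rw [e] at s1 s2
    exact ⟨i1.trans s1, s2⟩

/-- `q(ω) = q(-ω)` -/
lemma q_even (hq : QInv lam α K Q) (h : Par p lam α β δ) {ω : ℝ} (h0 : 0 < ω) (h1 : ω < δ)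
    (hK : - sfn β ω ∉ K) (hK' : - sfn β (-ω) ∉ K) : Q (- sfn β ω) = Q (- sfn β (-ω)) := by
  have hβ := h.β_pos
  have hpb := h.hβ
  have hp := h.p_pos
  have hd1 := h.hδ1
  have h4 := h.four_β
  obtain ⟨s1, -⟩ := hq.step h h0 (by nlinarith) hK
  rw [s1]
  have p1 : 0 < Real.sin ω := h.sin_pos h0 (by linarith)
  have p2 : 0 < Real.sin (2 * β - ω) := h.sin_pos (by linarith) (by linarith)
  have e1 : - sfn β (-ω) = Real.sin ω / Real.sin (2 * β - ω) := by
    unfold sfn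
    rw [Real.sin_neg]
    have : -ω + 2 * β = 2 * β - ω := by ring
    rw [this, neg_div, neg_neg]
  have e2 : - sfn β (ω - 2 * β) = 1 / (- sfn β (-ω)) := by
    rw [e1, one_div_div]
    unfold sfn
    have : ω - 2 * β = -(2 * β - ω) := by ring
    rw [sub_add_cancel, this, Real.sin_neg, neg_div, neg_neg]
  rw [e2]
  apply hq.pos_inv h hK'
  · rw [e1]; exact div_pos p1 p2
  · refine lt_of_lt_of_le ?_ h.b_le
    unfold aseq
    rw [h.ang_b]
    apply neg_lt_neg
    apply h.sfn_lt (by linarith) (by linarith) (by linarith)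

lemma to_q (hq : QInv lam α K Q) (h : Par p lam α β δ) {ψ : ℝ}
    (h0 : (2 * p - 2) * β - δ < ψ) (h1 : ψ < (2 * p - 2) * β + δ) (hK : sfn β ψ ∉ K) :
    Q (sfn β ψ) = Q (- sfn β (ψ - (2 * p - 2) * β)) ∧ - sfn β (ψ - (2 * p - 2) * β) ∉ K := by
  have hβ := h.β_pos
  have hpb := h.hβ
  have hp := h.p_pos
  have hd1 := h.hδ1
  have h4 := h.four_β
  have hψ : 0 < ψ := by nlinarith
  have hpos : 0 < sfn β ψ := div_pos (h.sin_pos hψ (by linarith))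
      (h.sin_pos (by linarith) (by linarith))
  have hlt : sfn β ψ < lam * α := by
    have := h.aseq_zero
    have e : lam * α = sfn β (ang p β δ 0) := by
      unfold aseq at this; linarith
    rw [e, h.ang_zero]
    apply h.sfn_lt (by linarith) (by linarith) (by linarith)
  have e : - sfn β (ψ - 2 * β) = -1 / (- sfn β ψ) - lam := by
    have := h.sfn_unshift (x := ψ) (h.sin_pos hψ (by linarith)).ne'
    exact this
  have e1 : -1 / (- sfn β ψ) = 1 / sfn β ψ := by rw [neg_div_neg_eq]
  have hK2 : - sfn β (ψ - 2 * β) ∉ K := by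
    rw [e]
    apply hq.notMem_step
    intro hc
    exact hK (by simpa using K.neg_mem hc)
  have hQ : Q (sfn β ψ) = Q (- sfn β (ψ - 2 * β)) := by
    rw [e, hq.sub_per, e1, hq.pos_inv h hK hpos hlt]
  have hp2 := h.hp
  have hc : ((p - 2 : ℕ) : ℝ) = p - 2 := by push_cast [Nat.cast_sub hp2]; ring
  obtain ⟨c1, c2⟩ := hq.chain h (p - 2) (θ := ψ - 2 * β)
    (by rw [hc]; nlinarith) (by linarith) hK2
  rw [hc] at c1 c2
  have e3 : ψ - 2 * β - 2 * β * (p - 2) = ψ - (2 * p - 2) * β := by ring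
  rw [e3] at c1 c2
  exact ⟨hQ.trans c1, c2⟩

lemma reflect (h : Par p lam α β δ) {ψ : ℝ} (hs : Real.sin (ψ + 2 * β) ≠ 0) :
    lam - sfn β ψ = sfn β ((4 * p - 4) * β - ψ) := by
  have hpb := h.hβ
  have e1 : (4 * (p : ℝ) - 4) * β - ψ = Real.pi - (ψ + 4 * β) := by linear_combination 2 * hpb
  have e2 : Real.pi - (ψ + 4 * β) + 2 * β = Real.pi - (ψ + 2 * β) := by ring
  rw [e1]
  unfold sfn
  rw [e2, Real.sin_pi_sub, Real.sin_pi_sub, eq_div_iff hs, sub_mul, div_mul_cancel₀ _ hs, h.hlam]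
  have e3 : ψ + 4 * β = (ψ + 2 * β) + 2 * β := by ring
  have e4 : Real.sin ψ = Real.sin ((ψ + 2 * β) - 2 * β) := by ring_nf
  rw [e3, e4, Real.sin_add (ψ + 2 * β), Real.sin_sub]
  ring

lemma sfn_continuousOn (h : Par p lam α β δ) :
    ContinuousOn (sfn β) (Icc 0 (Real.pi - 3 * β)) := by
  have hβ := h.β_pos
  unfold sfn
  apply ContinuousOn.div (by fun_prop) (by fun_prop)
  intro x hx
  exact (h.sin_pos (by linarith [hx.1]) (by linarith [hx.2])).ne'

lemma exists_angle (h : Par p lam α β δ) {a b y : ℝ} (ha : 0 ≤ a) (hab : a ≤ b)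
    (hb : b ≤ Real.pi - 3 * β) (h1 : sfn β a < y) (h2 : y < sfn β b) :
    ∃ ψ ∈ Ioo a b, sfn β ψ = y := by
  have := intermediate_value_Ioo hab ((sfn_continuousOn h).mono (Icc_subset_Icc ha hb))
  exact this ⟨h1, h2⟩

lemma symm_mid (hq : QInv lam α K Q) (h : Par p lam α β δ) {y : ℝ} (hK : y ∉ K)
    (h1 : lam * (1 - α) < y) (h2 : y < lam * α) : Q (-y) = Q y := by
  have hβ := h.β_pos
  have hpb := h.hβ
  have hp := h.p_pos
  have hd1 := h.hδ1
  have hd0 := h.hδ0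
  have h4 := h.four_β
  have a0 := h.aseq_zero
  have a1 := h.aseq_one
  unfold aseq at a0 a1
  rw [h.ang_zero] at a0
  rw [h.ang_one] at a1
  have b0 : sfn β (Real.pi / 2 - 2 * β + δ) = lam * α := by linarith
  have b1 : sfn β (Real.pi / 2 - 2 * β - δ) = lam * (1 - α) := by linarith
  obtain ⟨ψ, ⟨hψ1, hψ2⟩, rfl⟩ := exists_angle h (a := Real.pi / 2 - 2 * β - δ)
    (b := Real.pi / 2 - 2 * β + δ) (by linarith) (by linarith) (by linarith)
    (by rw [b1]; exact h1) (by rw [b0]; exact h2)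
  have hs : Real.sin (ψ + 2 * β) ≠ 0 := (h.sin_pos (by linarith) (by linarith)).ne'
  have er := reflect h hs
  have eQ : Q (- sfn β ψ) = Q (sfn β ((4 * p - 4) * β - ψ)) := by
    rw [← er, ← hq.sub_per]
    rw [show lam - sfn β ψ = -sfn β ψ + lam by ring, hq.hper, hq.sub_per]
  have hK2 : sfn β ((4 * p - 4) * β - ψ) ∉ K := by
    rw [← er]
    intro hc
    apply hK
    have := K.sub_mem hq.hl hc
    rwa [sub_sub_cancel] at this
  obtain ⟨t1, k1⟩ := hq.to_q h (ψ := ψ) (by linarith) (by linarith) hK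
  obtain ⟨t2, k2⟩ := hq.to_q h (ψ := (4 * p - 4) * β - ψ) (by linarith) (by linarith) hK2
  have e : (4 * (p : ℝ) - 4) * β - ψ - (2 * p - 2) * β = -(ψ - (2 * p - 2) * β) := by ring
  rw [e] at t2 k2
  rw [eQ, t2, t1]
  set ω := ψ - (2 * p - 2) * β with hω
  rcases lt_trichotomy ω 0 with hlt | heq | hgt
  · have := hq.q_even h (ω := -ω) (by linarith) (by linarith) k2 (by rwa [neg_neg])
    rwa [neg_neg] at this
  · rw [heq, neg_zero]
  · exact (hq.q_even h (ω := ω) (by linarith) (by linarith) k1 k2).symm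

lemma symm (hq : QInv lam α K Q) (h : Par p lam α β δ) {y : ℝ} (hK : y ∉ K) : Q (-y) = Q y := by
  have hl := h.lam_pos
  set n : ℤ := ⌊y / lam + 1 - α⌋ with hn
  set y0 := y - n * lam with hy0
  have f1 : (n : ℝ) ≤ y / lam + 1 - α := Int.floor_le _
  have f2 : y / lam + 1 - α < n + 1 := Int.lt_floor_add_one _
  have g1 : lam * (α - 1) ≤ y0 := by
    have := mul_le_mul_of_nonneg_left f1 hl.le
    have e : lam * (y / lam + 1 - α) = y + lam * (1 - α) := by field_simp; ring
    rw [e] at this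
    linarith
  have g2 : y0 < lam * α := by
    have := mul_lt_mul_of_pos_left f2 hl
    have e : lam * (y / lam + 1 - α) = y + lam * (1 - α) := by field_simp; ring
    rw [e] at this
    linarith
  have hK0 : y0 ∉ K := by
    intro hc
    apply hK
    have := K.add_mem hc (K.mul_mem (intCast_mem K n) hq.hl)
    rwa [hy0, sub_add_cancel] at this
  have q1 : Q y = Q y0 := by
    have := hq.add_int y0 n
    rw [← this]; congr 1; rw [hy0]; ring
  have q2 : Q (-y) = Q (-y0) := by
    have := hq.add_int (-y0) (-n)
    rw [← this]; congr 1; rw [hy0]; push_cast; ring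
  rw [q1, q2]
  have m1 : lam * (1 - α) ∈ K := K.mul_mem hq.hl (K.sub_mem K.one_mem hq.ha)
  have n1 := hq.ne_of hK0 m1
  have n2 := hq.ne_of hK0 (K.neg_mem m1)
  have n0 := hq.ne_of hK0 K.zero_mem
  have hpos : ∀ y1, y1 ∉ K → 0 < y1 → y1 < lam * (1 - α) → Q (-y1) = Q y1 := by
    intro y1 k1 c1 c2
    have k2 : -y1 ∉ K := fun hc => k1 (by simpa using K.neg_mem hc)
    have r1 := hq.pos_inv h k1 c1 (by linarith [h.r0_ge])
    have r2 := hq.neg_inv h k2 (by linarith) (by linarith)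
    rw [neg_div_neg_eq] at r2
    exact r2.symm.trans r1
  rcases lt_or_ge (lam * (1 - α)) y0 with c | c
  · exact hq.symm_mid h hK0 c g2
  · rcases lt_or_gt_of_ne n0 with c2 | c2
    · have k2 : -y0 ∉ K := fun hc => hK0 (by simpa using K.neg_mem hc)
      have : Q (- -y0) = Q (-y0) := hpos (-y0) k2 (by linarith)
        (lt_of_le_of_ne (by linarith) (fun hc => n2 (by linarith)))
      rw [neg_neg] at this
      exact this.symm
    · exact hpos y0 hK0 c2 (lt_of_le_of_ne c n1)

lemma E_step (hq : QInv lam α K Q) (h : Par p lam α β δ) {y : ℝ} (hK : y ∉ K)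
    (h1 : lam * α < y) (h2 : y < 1 / (lam * α)) :
    Q y = Q ((2 * y - lam) / (2 - lam * y)) ∧ (2 * y - lam) / (2 - lam * y) ∉ K := by
  have hβ := h.β_pos
  have hpb := h.hβ
  have hp := h.p_pos
  have hd1 := h.hδ1
  have hd0 := h.hδ0
  have h4 := h.four_β
  have a2 := h.aseq_two
  have a1 := h.aseq_one
  have han2 : ang p β δ 2 = (2 * p - 4) * β + δ := by
    have := Par.ang_succ_succ (p := p) (β := β) (δ := δ) (m := 0)
    have h0 := h.ang_zero
    rw [zero_add] at this
    rw [this, h0]; linear_combination -hpb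
  unfold aseq at a2 a1
  rw [han2] at a2
  rw [h.ang_one] at a1
  obtain ⟨θ, ⟨hθ1, hθ2⟩, hθ⟩ := exists_angle h (a := (2 * p - 4) * β + δ)
    (b := Real.pi / 2 - 2 * β - δ) (y := lam - y) (by nlinarith) (by linarith) (by linarith)
    (by linarith) (by linarith)
  have hy : - sfn β θ = y - lam := by linarith
  have hK1 : - sfn β θ ∉ K := by
    rw [hy]
    intro hc
    apply hK
    have := K.add_mem hc hq.hl
    rwa [sub_add_cancel] at this
  have hp2 := h.hp
  have hc : ((p - 1 : ℕ) : ℝ) = p - 1 := by push_cast [Nat.cast_sub (by omega : 1 ≤ p)]; ring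
  obtain ⟨c1, c2⟩ := hq.chain h (p - 1) (θ := θ) (by rw [hc]; linarith) (by linarith) hK1
  rw [hc] at c1 c2
  have p1 : Real.sin (θ + 2 * β) ≠ 0 :=
    (h.sin_pos (by nlinarith) (by linarith)).ne'
  have hW : θ + 2 * β + 2 * β < Real.pi / 2 + 2 * β := by linarith
  have hW2 : Real.pi / 2 < θ + 2 * β + 2 * β + 2 * β := by nlinarith
  have e : - sfn β (θ - 2 * β * (p - 1)) = (2 * y - lam) / (2 - lam * y) := by
    have ey : y = Real.sin (θ + 2 * β + 2 * β) / Real.sin (θ + 2 * β) := by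
      have : y = lam - sfn β θ := by linarith
      rw [this]; unfold sfn
      rw [eq_div_iff p1, sub_mul, div_mul_cancel₀ _ p1, h.hlam]
      have e4 : Real.sin θ = Real.sin ((θ + 2 * β) - 2 * β) := by ring_nf
      rw [e4, Real.sin_add (θ + 2 * β), Real.sin_sub]
      ring
    have x1 : θ - 2 * β * (p - 1) = (θ + 2 * β) - Real.pi / 2 := by linear_combination -hpb
    have x2 : (θ + 2 * β) - Real.pi / 2 + 2 * β = (θ + 2 * β + 2 * β) - Real.pi / 2 := by ring
    rw [x1]
    unfold sfn
    rw [x2, Real.sin_sub_pi_div_two, Real.sin_sub_pi_div_two, neg_div_neg_eq]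
    set W := θ + 2 * β
    have i1 : 2 * y - lam = 2 * Real.sin (2 * β) * Real.cos W / Real.sin W := by
      rw [ey, eq_div_iff p1, sub_mul, h.hlam, mul_assoc, div_mul_cancel₀ _ p1, Real.sin_add]
      ring
    have i2 : 2 - lam * y = -2 * Real.sin (2 * β) * Real.cos (W + 2 * β) / Real.sin W := by
      rw [ey, eq_div_iff p1, sub_mul, h.hlam, mul_assoc, div_mul_cancel₀ _ p1, Real.sin_add W,
        Real.cos_add W]
      linear_combination (-2 * Real.sin W) * Real.sin_sq_add_cos_sq (2 * β)
    have hs2 := h.sin2β.ne'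
    rw [i1, i2, div_div_div_cancel_right₀ p1, neg_mul, neg_mul, div_neg, mul_div_mul_left]
    positivity
  rw [e, hy, hq.sub_per] at c1
  rw [e] at c2
  exact ⟨c1, c2⟩

lemma inv_pos_aux (hq : QInv lam α K Q) (h : Par p lam α β δ) (n : ℕ) :
    ∀ y : ℝ, y ∉ K → 0 < y → 1 ≤ ((2 + lam) / (2 - lam)) ^ n * |(y - 1) / (y + 1)| →
      Q (1 / y) = Q y := by
  have hl := h.lam_gt
  have hl2 := h.lam_lt
  have hr0 : 0 < lam * α := by linarith [h.r0_ge]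
  have hr1 := h.r0_ge
  induction n with
  | zero =>
    intro y _ hy hh
    exfalso
    rw [pow_zero, one_mul, abs_div, abs_of_pos (by linarith : 0 < y + 1),
      le_div_iff₀ (by linarith), one_mul, le_abs] at hh
    rcases hh with hh | hh <;> linarith
  | succ n ih =>
    intro y hK hy hh
    have rK : lam * α ∈ K := K.mul_mem hq.hl hq.ha
    have hKi : 1 / y ∉ K := by
      intro hc
      apply hK
      have := K.inv_mem hc
      rwa [one_div, inv_inv] at this
    rcases lt_or_gt_of_ne (hq.ne_of hK rK) with c | c
    · exact hq.pos_inv h hK hy c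
    rcases lt_or_gt_of_ne (hq.ne_of hKi rK) with c' | c'
    · have := hq.pos_inv h hKi (one_div_pos.mpr hy) c'
      rw [one_div_one_div] at this
      exact this.symm
    have d1 : y < 1 / (lam * α) := by
      rw [lt_div_iff₀ hr0]
      have := mul_lt_mul_of_pos_right c' hy
      rw [one_div_mul_cancel hy.ne'] at this
      linarith
    have d2 : 1 / y < 1 / (lam * α) := one_div_lt_one_div_of_lt hr0 c
    obtain ⟨s1, k1⟩ := hq.E_step h hK c d1
    obtain ⟨s2, k2⟩ := hq.E_step h hKi c' d2
    have hden : 0 < 2 - lam * y := by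
      have h1 : lam / 2 < 1 / y := lt_of_le_of_lt hr1 c'
      rw [lt_div_iff₀ hy] at h1
      linarith
    have hnum : 0 < 2 * y - lam := by linarith
    have e : (2 * (1 / y) - lam) / (2 - lam * (1 / y)) = 1 / ((2 * y - lam) / (2 - lam * y)) := by
      rw [one_div_div]
      have : 2 - lam * (1 / y) ≠ 0 := by
        have : 2 - lam * (1 / y) = (2 * y - lam) / y := by field_simp
        rw [this]; positivity
      rw [div_eq_div_iff this hnum.ne']
      field_simp
    rw [s1, s2, e]
    apply ih _ k1 (div_pos hnum hden)
    have e2 : ((2 * y - lam) / (2 - lam * y) - 1) / ((2 * y - lam) / (2 - lam * y) + 1) =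
        ((2 + lam) / (2 - lam)) * ((y - 1) / (y + 1)) := by
      have q1 : (2 * y - lam) / (2 - lam * y) - 1 = (2 + lam) * (y - 1) / (2 - lam * y) := by
        rw [div_sub_one hden.ne']; congr 1; ring
      have q2 : (2 * y - lam) / (2 - lam * y) + 1 = (2 - lam) * (y + 1) / (2 - lam * y) := by
        rw [div_add_one hden.ne']; congr 1; ring
      rw [q1, q2, div_div_div_cancel_right₀ hden.ne', mul_div_mul_comm]
    rw [e2, abs_mul, abs_of_pos (div_pos (by linarith) (by linarith) : 0 < (2 + lam) / (2 - lam)),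
      ← mul_assoc, ← pow_succ]
    exact hh

lemma inversion (hq : QInv lam α K Q) (h : Par p lam α β δ) {y : ℝ} (hK : y ∉ K) :
    Q (1 / y) = Q y := by
  have hl := h.lam_gt
  have hl2 := h.lam_lt
  have hpos : ∀ y, y ∉ K → 0 < y → Q (1 / y) = Q y := by
    intro y hK hy
    have h1 := hq.ne_of hK K.one_mem
    have hc : 0 < |(y - 1) / (y + 1)| := by
      rw [abs_pos]
      exact div_ne_zero (sub_ne_zero.mpr h1) (by linarith)
    have hr : 1 < (2 + lam) / (2 - lam) := by
      rw [lt_div_iff₀ (by linarith)]; linarith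
    obtain ⟨n, hn⟩ := pow_unbounded_of_one_lt (1 / |(y - 1) / (y + 1)|) hr
    apply hq.inv_pos_aux h n y hK hy
    rw [div_lt_iff₀ hc] at hn
    exact hn.le
  rcases lt_or_gt_of_ne (hq.ne_of hK K.zero_mem) with c | c
  · have k1 : -y ∉ K := fun hc => hK (by simpa using K.neg_mem hc)
    have k2 : 1 / (-y) ∉ K := by
      intro hc
      apply k1
      have := K.inv_mem hc
      rwa [one_div, inv_inv] at this
    have r := hpos (-y) k1 (by linarith)
    rw [hq.symm h hK] at r
    rw [← r]
    have := hq.symm h k2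
    rw [← this]; congr 1; rw [div_neg, neg_neg]
  · exact hpos y hK c

end QInv

namespace Par

variable {p : ℕ} {lam α β δ : ℝ}

lemma T_notMem {K : Subfield ℝ} (hl : lam ∈ K) {x : ℝ} (hx : x ∉ K) : Tmap lam α x ∉ K := by
  have h0 : x ≠ 0 := by rintro rfl; exact hx K.zero_mem
  rw [Tmap_of_ne h0]
  intro hc
  apply hx
  have h1 : |1 / x| ∈ K := by
    have := K.add_mem hc (K.mul_mem hl (intCast_mem K (dfun lam α x)))
    rwa [sub_add_cancel] at this
  rw [abs_div, abs_one, one_div] at h1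
  have h2 := K.inv_mem h1
  rw [inv_inv] at h2
  rcases abs_choice x with h | h
  · rwa [h] at h2
  · rw [h] at h2
    have := K.neg_mem h2
    rwa [neg_neg] at this

lemma iter_notMem {K : Subfield ℝ} (hl : lam ∈ K) {x : ℝ} (hx : x ∉ K) (n : ℕ) :
    (Tmap lam α)^[n] x ∉ K := by
  induction n with
  | zero => exact hx
  | succ n ih => rw [Function.iterate_succ_apply']; exact T_notMem hl ih

lemma iter_ne {K : Subfield ℝ} (hl : lam ∈ K) {x : ℝ} (hx : x ∉ K) (n : ℕ) :
    (Tmap lam α)^[n] x ≠ 0 := by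
  intro hc
  apply iter_notMem (α := α) hl hx n
  rw [hc]; exact K.zero_mem

lemma hn_inv (h : Par p lam α β δ) {γ : Type*} {K : Subfield ℝ} {Q : ℝ → γ} (hq : QInv lam α K Q)
    {x : ℝ} (hne : ∀ n, (Tmap lam α)^[n] x ≠ 0) (n : ℕ) :
    ∀ u, u ∉ K → Q (((Rpair lam α x n).1 + u * (Rpair lam α x n).2) /
      ((Spair lam α x n).1 + u * (Spair lam α x n).2)) = Q u := by
  induction n with
  | zero => intro u hu; simp [Rpair, Spair]
  | succ n ih =>
    intro u hu
    simp only [Rpair, Spair]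
    set d : ℤ := dfun lam α ((Tmap lam α)^[n] x) with hd
    have hs := sign_sq (hne n)
    set e := Real.sign ((Tmap lam α)^[n] x) with he
    set R := (Rpair lam α x n).1
    set R' := (Rpair lam α x n).2
    set S := (Spair lam α x n).1
    set S' := (Spair lam α x n).2
    have hdK : (d : ℝ) * lam ∈ K := K.mul_mem (intCast_mem K d) hq.hl
    have hg : u + d * lam ∉ K := by
      intro hc
      apply hu
      have := K.sub_mem hc hdK
      rwa [add_sub_cancel_right] at this
    have hg0 : u + d * lam ≠ 0 := by
      intro hc; apply hg; rw [hc]; exact K.zero_mem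
    have hg1 : 1 / (u + d * lam) ∉ K := by
      intro hc
      apply hg
      have := K.inv_mem hc
      rwa [one_div, inv_inv] at this
    have e1 : ((d : ℝ) * lam * R + e * R' + u * R) / ((d : ℝ) * lam * S + e * S' + u * S) =
        (R + e / (u + d * lam) * R') / (S + e / (u + d * lam) * S') := by
      rw [← mul_div_mul_left (R + e / (u + d * lam) * R') (S + e / (u + d * lam) * S') hg0]
      congr 1
      · have : (u + d * lam) * (R + e / (u + d * lam) * R') =
          (u + d * lam) * R + ((u + d * lam) * (e / (u + d * lam))) * R' := by ring
        rw [this, mul_div_cancel₀ _ hg0]; ring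
      · have : (u + d * lam) * (S + e / (u + d * lam) * S') =
          (u + d * lam) * S + ((u + d * lam) * (e / (u + d * lam))) * S' := by ring
        rw [this, mul_div_cancel₀ _ hg0]; ring
    rw [e1]
    have hQ : Q (1 / (u + d * lam)) = Q u := by
      rw [hq.inversion h hg, hq.add_int]
    have he' : e = 1 ∨ e = -1 := by
      rcases Real.sign_apply_eq_of_ne_zero _ (hne n) with h | h <;> simp [he, h]
    rcases he' with he' | he'
    · rw [he', ih _ hg1, hQ]
    · have h2 : (-1 : ℝ) / (u + d * lam) = - (1 / (u + d * lam)) := by ring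
      have hg2 : - (1 / (u + d * lam)) ∉ K := by
        intro hc; apply hg1
        have := K.neg_mem hc
        rwa [neg_neg] at this
      rw [he', h2, ih _ hg2, hq.symm h hg1, hQ]

lemma mkQ (h : Par p lam α β δ) {K : Subfield ℝ} (hl : lam ∈ K) (ha : α ∈ K) {A : Set ℝ}
    (hinv : ∀ x, x ∉ K → lam * (α - 1) ≤ x → x ≤ lam * α → (Tmap lam α x ∈ A ↔ x ∈ A)) :
    QInv lam α K (fun x : ℝ => (x - lam * (⌊x / lam + 1 - α⌋ : ℝ) ∈ A)) := by
  have hlam := h.lam_pos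
  refine ⟨hl, ha, ?_, ?_⟩
  · intro x
    have : (x + lam) / lam + 1 - α = (x / lam + 1 - α) + 1 := by
      rw [add_div, div_self hlam.ne']; ring
    simp only [this, Int.floor_add_one]
    push_cast
    have : x + lam - lam * ((⌊x / lam + 1 - α⌋ : ℝ) + 1) = x - lam * (⌊x / lam + 1 - α⌋ : ℝ) := by
      ring
    rw [this]
  · intro x hx h1 h2
    have h0 : x ≠ 0 := by rintro rfl; exact hx K.zero_mem
    have f0 : ⌊x / lam + 1 - α⌋ = 0 := by
      rw [Int.floor_eq_zero_iff]
      constructor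
      · have : α - 1 ≤ x / lam := by rw [le_div_iff₀ hlam]; linarith
        linarith
      · have : x / lam < α := by rw [div_lt_iff₀ hlam]; linarith
        linarith
    have f1 : |1 / x| - lam * (⌊|1 / x| / lam + 1 - α⌋ : ℝ) = Tmap lam α x := by
      rw [Tmap_of_ne h0, dfun, h.abs_div_eq]
    simp only [f0, f1, Int.cast_zero, mul_zero, sub_zero]
    exact propext (hinv x hx h1.le h2.le)

end Par

namespace Par

variable {p : ℕ} {lam α β δ : ℝ}

/-- inverse branch -/
noncomputable def hbr (lam α x : ℝ) (n : ℕ) (u : ℝ) : ℝ :=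
  ((Rpair lam α x n).1 + u * (Rpair lam α x n).2) / ((Spair lam α x n).1 + u * (Spair lam α x n).2)

lemma den_bd (h : Par p lam α β δ) {x : ℝ} (h1 : lam * (α - 1) ≤ x) (h2 : x ≤ lam * α)
    (hne : ∀ n, (Tmap lam α)^[n] x ≠ 0) (n : ℕ) {u : ℝ} (u1 : lam * (α - 1) ≤ u)
    (u2 : u ≤ lam * α) :
    (Spair lam α x n).1 * (1 - lam / 2) ≤ (Spair lam α x n).1 + u * (Spair lam α x n).2 ∧
    (Spair lam α x n).1 + u * (Spair lam α x n).2 ≤ 2 * (Spair lam α x n).1 := by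
  obtain ⟨s1, s2⟩ := h.S_facts h1 h2 hne n
  have hb := h.Om_bounds (h.orbit_mem (h.Om_zero h1 h2) hne n)
  obtain ⟨-, -, b3, b4⟩ := hb
  rw [s2]
  have := h.one_add_ge u1 b3 b4
  have hr := h.r0_le
  have e : (Spair lam α x n).1 + u * (((Tnat lam α)^[n] (x, 0)).2 * (Spair lam α x n).1) =
      (Spair lam α x n).1 * (1 + u * ((Tnat lam α)^[n] (x, 0)).2) := by ring
  rw [e]
  constructor
  · exact mul_le_mul_of_nonneg_left this s1.le
  · rw [mul_comm 2]
    apply mul_le_mul_of_nonneg_left _ s1.le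
    nlinarith

lemma hbr_diff (h : Par p lam α β δ) {x : ℝ} (hne : ∀ n, (Tmap lam α)^[n] x ≠ 0) (n : ℕ) {u u' : ℝ}
    (d1 : (Spair lam α x n).1 + u * (Spair lam α x n).2 ≠ 0)
    (d2 : (Spair lam α x n).1 + u' * (Spair lam α x n).2 ≠ 0) :
    |hbr lam α x n u - hbr lam α x n u'| = |u - u'| /
      |((Spair lam α x n).1 + u * (Spair lam α x n).2) *
        ((Spair lam α x n).1 + u' * (Spair lam α x n).2)| := by
  have hd := RS_det h hne n
  unfold hbr
  rw [div_sub_div _ _ d1 d2, abs_div]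
  congr 1
  have : ((Rpair lam α x n).1 + u * (Rpair lam α x n).2) *
      ((Spair lam α x n).1 + u' * (Spair lam α x n).2) -
      ((Spair lam α x n).1 + u * (Spair lam α x n).2) *
        ((Rpair lam α x n).1 + u' * (Rpair lam α x n).2) =
      -(u - u') * ((Rpair lam α x n).1 * (Spair lam α x n).2 -
        (Rpair lam α x n).2 * (Spair lam α x n).1) := by ring
  rw [this, abs_mul, hd, abs_neg, mul_one]

lemma hbr_deriv (n : ℕ) {x u : ℝ}
    (d1 : (Spair lam α x n).1 + u * (Spair lam α x n).2 ≠ 0) :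
    HasDerivAt (hbr lam α x n) (-((Rpair lam α x n).1 * (Spair lam α x n).2 -
        (Rpair lam α x n).2 * (Spair lam α x n).1) /
      ((Spair lam α x n).1 + u * (Spair lam α x n).2) ^ 2) u := by
  unfold hbr
  have a1 : HasDerivAt (fun u => (Rpair lam α x n).1 + u * (Rpair lam α x n).2)
      (Rpair lam α x n).2 u := by
    simpa using ((hasDerivAt_id u).mul_const (Rpair lam α x n).2).const_add (Rpair lam α x n).1
  have a2 : HasDerivAt (fun u => (Spair lam α x n).1 + u * (Spair lam α x n).2)
      (Spair lam α x n).2 u := by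
    simpa using ((hasDerivAt_id u).mul_const (Spair lam α x n).2).const_add (Spair lam α x n).1
  have a3 := a1.div a2 d1
  have e : -((Rpair lam α x n).1 * (Spair lam α x n).2 -
        (Rpair lam α x n).2 * (Spair lam α x n).1) =
      (Rpair lam α x n).2 * ((Spair lam α x n).1 + u * (Spair lam α x n).2) -
        ((Rpair lam α x n).1 + u * (Rpair lam α x n).2) * (Spair lam α x n).2 := by ring
  rw [e]
  exact a3

lemma hbr_vol (h : Par p lam α β δ) {x : ℝ} (h1 : lam * (α - 1) ≤ x) (h2 : x ≤ lam * α)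
    (hne : ∀ n, (Tmap lam α)^[n] x ≠ 0) (n : ℕ) {B : Set ℝ} (hB : MeasurableSet B)
    (hBI : B ⊆ Icc (lam * (α - 1)) (lam * α)) :
    ENNReal.ofReal (1 / (4 * (Spair lam α x n).1 ^ 2)) * volume B ≤
      volume (hbr lam α x n '' B) := by
  obtain ⟨s1, s2⟩ := h.S_facts h1 h2 hne n
  have hl2 := h.lam_lt
  have hb : ∀ u ∈ B, 0 < (Spair lam α x n).1 + u * (Spair lam α x n).2 := fun u hu =>
    lt_of_lt_of_le (mul_pos s1 (by linarith)) (h.den_bd h1 h2 hne n (hBI hu).1 (hBI hu).2).1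
  have hinj : InjOn (hbr lam α x n) B := by
    intro u hu u' hu' he
    have := hbr_diff h hne n (hb u hu).ne' (hb u' hu').ne'
    rw [he, sub_self, abs_zero, eq_comm, div_eq_zero_iff] at this
    rcases this with h | h
    · exact sub_eq_zero.mp (abs_eq_zero.mp h)
    · exact absurd (abs_eq_zero.mp h) (mul_pos (hb u hu) (hb u' hu')).ne'
  have key := lintegral_image_eq_lintegral_abs_deriv_mul hB
    (fun u hu => (hbr_deriv (lam := lam) (α := α) n (hb u hu).ne').hasDerivWithinAt) hinj 1
  simp only [Pi.one_apply, lintegral_one, Measure.restrict_apply MeasurableSet.univ, univ_inter,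
    mul_one] at key
  rw [key, ← setLIntegral_const]
  apply setLIntegral_mono' hB
  intro u hu
  apply ENNReal.ofReal_le_ofReal
  rw [abs_div, abs_neg, RS_det h hne n, abs_of_pos (pow_pos (hb u hu) 2)]
  apply one_div_le_one_div_of_le (pow_pos (hb u hu) 2)
  have := (h.den_bd h1 h2 hne n (hBI hu).1 (hBI hu).2).2
  have h3 := hb u hu
  nlinarith

lemma hbr_ball (h : Par p lam α β δ) {x : ℝ} (h1 : lam * (α - 1) ≤ x) (h2 : x < lam * α)
    (hne : ∀ n, (Tmap lam α)^[n] x ≠ 0) (n : ℕ) {u : ℝ} (u1 : lam * (α - 1) ≤ u)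
    (u2 : u ≤ lam * α) :
    hbr lam α x n u ∈ Metric.closedBall x
      (lam / (1 - lam / 2) ^ 2 * (1 / (Spair lam α x n).1) ^ 2) := by
  obtain ⟨s1, s2⟩ := h.S_facts h1 h2.le hne n
  have hl2 := h.lam_lt
  have om := h.Om_bounds (h.orbit_mem (h.Om_zero h1 h2.le) hne n)
  rw [Tnat_iter_fst] at om
  obtain ⟨t1, t2, -, -⟩ := om
  have bt := h.den_bd h1 h2.le hne n t1 t2
  have bu := h.den_bd h1 h2.le hne n u1 u2
  have hpos : 0 < (Spair lam α x n).1 * (1 - lam / 2) := mul_pos s1 (by linarith)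
  have ex : x = hbr lam α x n ((Tmap lam α)^[n] x) := by
    unfold hbr
    rw [eq_div_iff (by linarith [bt.1]), x_rel h hne n]
  rw [Metric.mem_closedBall, Real.dist_eq]
  have := hbr_diff h hne n (u := u) (u' := (Tmap lam α)^[n] x) (by linarith [bu.1])
    (by linarith [bt.1])
  simp only at bt t1 t2
  rw [← ex] at this
  rw [this, abs_of_pos (mul_pos (hpos.trans_le bu.1) (hpos.trans_le bt.1))]
  have e : lam / (1 - lam / 2) ^ 2 * (1 / (Spair lam α x n).1) ^ 2 =
    lam / (((Spair lam α x n).1 * (1 - lam / 2)) * ((Spair lam α x n).1 * (1 - lam / 2))) := by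
    have : 1 - lam / 2 ≠ 0 := by linarith
    rw [div_pow, div_mul_div_comm]
    congr 1 <;> ring
  rw [e]
  apply div_le_div₀ h.lam_pos.le _ (mul_pos hpos hpos)
    (mul_le_mul bu.1 bt.1 hpos.le (by linarith [bu.1]))
  rw [abs_le]
  constructor <;> linarith

theorem dichotomy (h : Par p lam α β δ) {K : Subfield ℝ} (hl : lam ∈ K) (ha : α ∈ K)
    (hKc : (K : Set ℝ).Countable) {A : Set ℝ} (hA : MeasurableSet A)
    (hinv : ∀ x, x ∉ K → lam * (α - 1) ≤ x → x ≤ lam * α → (Tmap lam α x ∈ A ↔ x ∈ A)) :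
    volume (A ∩ Icc (lam * (α - 1)) (lam * α)) = 0 ∨
    volume (Icc (lam * (α - 1)) (lam * α) \ A) = 0 := by
  by_contra hcon
  push Not at hcon
  obtain ⟨hc1, hc2⟩ := hcon
  have hl2 := h.lam_lt
  have hlam := h.lam_pos
  set I := Icc (lam * (α - 1)) (lam * α) with hI
  have hq := h.mkQ hl ha hinv
  have hae : ∀ᵐ x ∂(volume : Measure ℝ), x ∉ K := by
    have := hKc.measure_zero volume
    exact measure_eq_zero_iff_ae_notMem.mp this
  -- choose a density point
  have hdens := Besicovitch.ae_tendsto_measure_inter_div_of_measurableSet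
    (volume : Measure ℝ) hA.compl
  obtain ⟨x, ⟨hxA, hxI⟩, hxd, hxK⟩ : ∃ x ∈ A ∩ I, Filter.Tendsto (fun r => volume
      (Aᶜ ∩ Metric.closedBall x r) / volume (Metric.closedBall x r)) (nhdsWithin 0 (Ioi 0))
        (nhds (Aᶜ.indicator 1 x)) ∧ x ∉ K := by
    by_contra hno
    push Not at hno
    apply hc1
    apply measure_mono_null (t := {x | ¬ (Filter.Tendsto (fun r => volume
      (Aᶜ ∩ Metric.closedBall x r) / volume (Metric.closedBall x r)) (nhdsWithin 0 (Ioi 0))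
        (nhds (Aᶜ.indicator 1 x)) ∧ x ∉ K)})
    · intro x hx hc
      exact hc.2 (hno x hx hc.1)
    · exact ae_iff.mp (hdens.and hae)
  rw [indicator_of_notMem (by simpa using hxA)] at hxd
  have rK : lam * α ∈ K := K.mul_mem hl ha
  have lK : lam * (α - 1) ∈ K := K.mul_mem hl (K.sub_mem ha K.one_mem)
  have hx1 : lam * (α - 1) < x := lt_of_le_of_ne hxI.1 (by rintro rfl; exact hxK lK)
  have hx2 : x < lam * α := lt_of_le_of_ne hxI.2 (by rintro rfl; exact hxK rK)
  have hne := iter_ne (α := α) hl hxK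
  set k := lam / (1 - lam / 2) ^ 2 with hk
  have hkpos : 0 < k := div_pos hlam (pow_pos (by linarith) 2)
  set r : ℕ → ℝ := fun n => k * (1 / (Spair lam α x n).1) ^ 2 with hr
  have hrpos : ∀ n, 0 < r n := fun n =>
    mul_pos hkpos (pow_pos (one_div_pos.mpr (h.S_facts hxI.1 hxI.2 hne n).1) 2)
  have hr0 : Filter.Tendsto r Filter.atTop (nhds 0) := by
    have := ((h.S_mono_inv hxI.1 hxI.2 hne).pow 2).const_mul k
    rw [zero_pow two_ne_zero, mul_zero] at this
    exact this
  have hr1 : Filter.Tendsto r Filter.atTop (nhdsWithin 0 (Ioi 0)) :=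
    tendsto_nhdsWithin_iff.mpr ⟨hr0, Filter.Eventually.of_forall hrpos⟩
  have hlim := hxd.comp hr1
  set B := (I \ A) \ (K : Set ℝ) with hB
  have hBm : MeasurableSet B := (measurableSet_Icc.diff hA).diff hKc.measurableSet
  have hBv : volume B = volume (I \ A) := measure_sdiff_null (hKc.measure_zero volume)
  have hBI : B ⊆ I := fun u hu => hu.1.1
  have hQI : ∀ y, lam * (α - 1) < y → y < lam * α →
      ((y - lam * (⌊y / lam + 1 - α⌋ : ℝ) ∈ A) ↔ y ∈ A) := by
    intro y h1 h2
    have f0 : ⌊y / lam + 1 - α⌋ = 0 := by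
      rw [Int.floor_eq_zero_iff]
      constructor
      · have : α - 1 ≤ y / lam := by rw [le_div_iff₀ hlam]; linarith
        linarith
      · have : y / lam < α := by rw [div_lt_iff₀ hlam]; linarith
        linarith
    simp [f0]
  have hlow : ∀ᶠ n in Filter.atTop, ENNReal.ofReal (1 / (8 * k)) * volume (I \ A) ≤
      volume (Aᶜ ∩ Metric.closedBall x (r n)) / volume (Metric.closedBall x (r n)) := by
    have hsmall : ∀ᶠ n in Filter.atTop, r n < min (x - lam * (α - 1)) (lam * α - x) :=
      hr0.eventually (gt_mem_nhds (lt_min (by linarith) (by linarith)))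
    filter_upwards [hsmall] with n hn
    have hsub : hbr lam α x n '' B ⊆ Aᶜ ∩ Metric.closedBall x (r n) := by
      rintro _ ⟨u, hu, rfl⟩
      have hb := h.hbr_ball hxI.1 hx2 hne n (hBI hu).1 (hBI hu).2
      refine ⟨?_, hb⟩
      have hb' := hb
      rw [Metric.mem_closedBall, Real.dist_eq, abs_le] at hb'
      have m1 := min_le_left (x - lam * (α - 1)) (lam * α - x)
      have m2 := min_le_right (x - lam * (α - 1)) (lam * α - x)
      have hb1 : -(r n) ≤ hbr lam α x n u - x := hb'.1
      have hb2 : hbr lam α x n u - x ≤ r n := hb'.2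
      have q1 := hQI (hbr lam α x n u) (by linarith) (by linarith)
      have uK : u ∉ K := hu.2
      have u1 : lam * (α - 1) < u := lt_of_le_of_ne (hBI hu).1 (by rintro rfl; exact uK lK)
      have u2 : u < lam * α := lt_of_le_of_ne (hBI hu).2 (by rintro rfl; exact uK rK)
      have q2 := hQI u u1 u2
      have q3 := h.hn_inv hq hne n u uK
      intro hc
      exact hu.1.2 (q2.mp (q3 ▸ (q1.mpr hc)))
    have s1 := (h.S_facts hxI.1 hxI.2 hne n).1
    have hv := (h.hbr_vol hxI.1 hxI.2 hne n hBm hBI).trans (measure_mono hsub)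
    rw [Real.volume_closedBall, ENNReal.le_div_iff_mul_le
      (Or.inl (by simpa using hrpos n)) (Or.inl ENNReal.ofReal_ne_top)]
    rw [hBv] at hv
    refine le_trans (le_of_eq ?_) hv
    rw [mul_right_comm, ← ENNReal.ofReal_mul (by positivity)]
    congr 2
    rw [hr]
    field_simp
    norm_num
  have := ge_of_tendsto hlim hlow
  rw [nonpos_iff_eq_zero, mul_eq_zero] at this
  rcases this with h0 | h0
  · rw [ENNReal.ofReal_eq_zero] at h0
    have : 0 < 1 / (8 * k) := by positivity
    linarith
  · exact hc2 h0

lemma exists_K (lam α : ℝ) : ∃ K : Subfield ℝ, lam ∈ K ∧ α ∈ K ∧ (K : Set ℝ).Countable := by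
  refine ⟨Subfield.closure {lam, α}, Subfield.subset_closure (by simp),
    Subfield.subset_closure (by simp), ?_⟩
  have := Subfield.cardinalMk_closure_le_max ({lam, α} : Set ℝ)
  rw [← Cardinal.le_aleph0_iff_set_countable]
  refine this.trans (max_le ?_ le_rfl)
  rw [Cardinal.le_aleph0_iff_set_countable]
  exact (Set.toFinite _).countable

end Par

/-- the upper growth rate of `a` exceeds `c` -/
def Dexc (c : ℝ) (a : ℕ → ℝ) : Prop :=
  ∃ ε : ℝ, 0 < ε ∧ ∃ᶠ N : ℕ in Filter.atTop, (c + ε) * N ≤ a N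

lemma Dexc.congr {c : ℝ} {a b : ℕ → ℝ}
    (hab : Filter.Tendsto (fun N : ℕ => (a N - b N) / N) Filter.atTop (nhds 0)) (ha : Dexc c a) :
    Dexc c b := by
  obtain ⟨ε, hε, hf⟩ := ha
  refine ⟨ε / 2, by positivity, ?_⟩
  have hev : ∀ᶠ N : ℕ in Filter.atTop, (a N - b N) / N < ε / 2 :=
    hab.eventually (gt_mem_nhds (by positivity))
  refine (hf.and_eventually (hev.and (Filter.eventually_gt_atTop 0))).mono ?_
  rintro N ⟨h1, h2, h3⟩
  have h3' : (0 : ℝ) < N := by exact_mod_cast h3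
  rw [div_lt_iff₀ h3'] at h2
  linarith

lemma Dexc.congr_iff {c : ℝ} {a b : ℕ → ℝ}
    (hab : Filter.Tendsto (fun N : ℕ => (a N - b N) / N) Filter.atTop (nhds 0)) :
    Dexc c a ↔ Dexc c b := by
  refine ⟨Dexc.congr hab, Dexc.congr ?_⟩
  have := hab.neg
  rw [neg_zero] at this
  refine this.congr fun N => ?_
  rw [← neg_div, neg_sub]

lemma Dexc_iff_nat {c : ℝ} {a : ℕ → ℝ} : Dexc c a ↔
    ∃ k : ℕ, ∀ n : ℕ, ∃ N : ℕ, n ≤ N ∧ (c + 1 / ((k : ℝ) + 1)) * N ≤ a N := by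
  constructor
  · rintro ⟨ε, hε, hf⟩
    obtain ⟨k, hk⟩ := exists_nat_one_div_lt hε
    refine ⟨k, fun n => ?_⟩
    obtain ⟨N, h1, h2⟩ := Filter.frequently_atTop.mp hf n
    refine ⟨N, h1, le_trans ?_ h2⟩
    apply mul_le_mul_of_nonneg_right _ (Nat.cast_nonneg N)
    linarith
  · rintro ⟨k, hk⟩
    exact ⟨1 / ((k : ℝ) + 1), by positivity, Filter.frequently_atTop.mpr hk⟩

lemma Dexc_measurable {X : Type*} [MeasurableSpace X] {a : X → ℕ → ℝ}
    (ha : ∀ N, Measurable fun x => a x N) (c : ℝ) : MeasurableSet {x | Dexc c (a x)} := by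
  have : {x | Dexc c (a x)} = ⋃ k : ℕ, ⋂ n : ℕ, ⋃ N : ℕ, {x | n ≤ N ∧
      (c + 1 / ((k : ℝ) + 1)) * N ≤ a x N} := by
    ext x
    simp only [mem_ofPred_eq, mem_iUnion, mem_iInter, Dexc_iff_nat]
  rw [this]
  refine MeasurableSet.iUnion fun k => MeasurableSet.iInter fun n => MeasurableSet.iUnion fun N => ?_
  by_cases hn : n ≤ N
  · simp only [hn, true_and]
    exact measurableSet_le measurable_const (ha N)
  · simp [hn]

/-- the class of observables -/
structure Obs (p : ℕ) (lam α β δ : ℝ) (f : ℝ × ℝ → ℝ) : Prop where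
  meas : Measurable f
  bdd : ∃ M : ℝ, ∀ z, |f z| ≤ M
  lip : ∃ C : ℝ, ∀ t v v', (t, v) ∈ Om p lam α β δ → (t, v') ∈ Om p lam α β δ →
    |f (t, v) - f (t, v')| ≤ C * |v - v'|

lemma Obs.neg {p : ℕ} {lam α β δ : ℝ} {f : ℝ × ℝ → ℝ} (hf : Obs p lam α β δ f) :
    Obs p lam α β δ (fun z => - f z) := by
  obtain ⟨M, hM⟩ := hf.bdd
  obtain ⟨C, hC⟩ := hf.lip
  refine ⟨hf.meas.neg, ⟨M, fun z => by rw [abs_neg]; exact hM z⟩, ⟨C, fun t v v' h1 h2 => ?_⟩⟩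
  rw [← abs_neg]
  convert hC t v v' h1 h2 using 2
  ring

lemma birkhoffSum_measurable' {X : Type*} [MeasurableSpace X] {T : X → X} (hT : Measurable T)
    {f : X → ℝ} (hf : Measurable f) (N : ℕ) : Measurable (birkhoffSum T f N) := by
  unfold birkhoffSum
  exact Finset.measurable_fun_sum _ fun i _ => hf.comp (hT.iterate i)

namespace Par

variable {p : ℕ} {lam α β δ : ℝ}

lemma fibre_cesaro (h : Par p lam α β δ) {f : ℝ × ℝ → ℝ} (hf : Obs p lam α β δ f) {t v v' : ℝ}
    (hz : (t, v) ∈ Om p lam α β δ) (hz' : (t, v') ∈ Om p lam α β δ)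
    (hne : ∀ n, (Tmap lam α)^[n] t ≠ 0) :
    Filter.Tendsto (fun N : ℕ => (birkhoffSum (Tnat lam α) f N (t, v) -
      birkhoffSum (Tnat lam α) f N (t, v')) / N) Filter.atTop (nhds 0) := by
  obtain ⟨C, hC⟩ := hf.lip
  have hfc := h.fibre_contract hz hz' hne
  have h1 : Filter.Tendsto (fun n => f ((Tnat lam α)^[n] (t, v)) - f ((Tnat lam α)^[n] (t, v')))
      Filter.atTop (nhds 0) := by
    apply squeeze_zero_norm (a := fun n => C * |((Tnat lam α)^[n] (t, v)).2 -
      ((Tnat lam α)^[n] (t, v')).2|)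
    · intro n
      rw [Real.norm_eq_abs]
      have e1 := Tnat_iter_fst lam α (t, v) n
      have e2 := Tnat_iter_fst lam α (t, v') n
      have m1 := h.orbit_mem hz hne n
      have m2 := h.orbit_mem hz' hne n
      generalize (Tnat lam α)^[n] (t, v) = w at *
      generalize (Tnat lam α)^[n] (t, v') = w' at *
      obtain ⟨w1, w2⟩ := w
      obtain ⟨w1', w2'⟩ := w'
      simp only at e1 e2
      rw [← e1] at e2
      subst e2
      exact hC _ _ _ m1 m2
    · have := hfc.const_mul C
      rwa [mul_zero] at this
  have h2 := h1.cesaro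
  refine h2.congr fun N => ?_
  unfold birkhoffSum
  rw [← Finset.sum_sub_distrib, div_eq_inv_mul]

lemma Dexc_inv (h : Par p lam α β δ) {f : ℝ × ℝ → ℝ} (hf : Obs p lam α β δ f) {K : Subfield ℝ}
    (hl : lam ∈ K) (c : ℝ) {x : ℝ} (hx : x ∉ K) (h1 : lam * (α - 1) ≤ x) (h2 : x ≤ lam * α) :
    Dexc c (fun N => birkhoffSum (Tnat lam α) f N (Tmap lam α x, 0)) ↔
      Dexc c (fun N => birkhoffSum (Tnat lam α) f N (x, 0)) := by
  have hne := iter_ne (α := α) hl hx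
  have hx0 : x ≠ 0 := hne 0
  have hneT := iter_ne (α := α) hl (T_notMem (α := α) hl hx)
  have hm := h.Om_zero h1 h2
  have hm1 : Tnat lam α (x, 0) ∈ Om p lam α β δ := h.Tnat_mem hm hx0
  have hm0 : (Tmap lam α x, (0 : ℝ)) ∈ Om p lam α β δ :=
    h.Om_zero (h.Tmap_ge hx0) (h.Tmap_lt hx0).le
  have e : Tnat lam α (x, 0) = (Tmap lam α x, (Tnat lam α (x, 0)).2) := rfl
  have s1 : Dexc c (fun N => birkhoffSum (Tnat lam α) f N (Tmap lam α x, 0)) ↔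
      Dexc c (fun N => birkhoffSum (Tnat lam α) f N (Tnat lam α (x, 0))) := by
    apply Dexc.congr_iff
    rw [e] at hm1 ⊢
    exact h.fibre_cesaro hf hm0 hm1 hneT
  rw [s1]
  apply Dexc.congr_iff
  obtain ⟨M, hM⟩ := hf.bdd
  apply squeeze_zero_norm (a := fun N : ℕ => (2 * M) / (N : ℝ))
  · intro N
    rw [birkhoffSum_apply_sub_birkhoffSum, norm_div, Real.norm_natCast]
    apply div_le_div_of_nonneg_right _ (Nat.cast_nonneg N)
    have a1 := hM ((Tnat lam α)^[N] (x, 0))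
    have a2 := hM (x, 0)
    rw [Real.norm_eq_abs]
    have := abs_sub (f ((Tnat lam α)^[N] (x, 0))) (f (x, 0))
    linarith
  · exact tendsto_const_div_atTop_nhds_zero_nat _

theorem birkhoff_upper (h : Par p lam α β δ) {f : ℝ × ℝ → ℝ} (hf : Obs p lam α β δ f) {c : ℝ}
    (hc : ∫ z, f z ∂(mu p lam α β δ) < c * (mu p lam α β δ univ).toReal) :
    ∀ᵐ x ∂(volume : Measure ℝ), x ∈ Icc (lam * (α - 1)) (lam * α) → ∀ ε : ℝ, 0 < ε →
      ∀ᶠ N : ℕ in Filter.atTop, birkhoffSum (Tnat lam α) f N (x, 0) < (c + ε) * N := by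
  obtain ⟨K, hl, ha, hKc⟩ := exists_K lam α
  have hfin := h.mu_finite
  have hTm := Tnat_measurable lam α
  set A : Set ℝ := {x | Dexc c (fun N => birkhoffSum (Tnat lam α) f N (x, 0))} with hA
  have hAm : MeasurableSet A := by
    apply Dexc_measurable
    intro N
    exact (birkhoffSum_measurable' hTm hf.meas N).comp (by fun_prop)
  have hae : ∀ᵐ x ∂(volume : Measure ℝ), x ∉ K :=
    measure_eq_zero_iff_ae_notMem.mp (hKc.measure_zero volume)
  have hd := h.dichotomy hl ha hKc hAm (fun x hx h1 h2 => h.Dexc_inv hf hl c hx h1 h2)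
  rcases hd with hd | hd
  · have := measure_eq_zero_iff_ae_notMem.mp hd
    filter_upwards [this] with x hx hxI ε hε
    have hnA : ¬ Dexc c (fun N => birkhoffSum (Tnat lam α) f N (x, 0)) := fun hc => hx ⟨hc, hxI⟩
    by_contra hcon
    apply hnA
    refine ⟨ε, hε, ?_⟩
    rw [Filter.not_eventually] at hcon
    exact hcon.mono fun N hN => not_lt.mp hN
  · exfalso
    have h1 := measure_eq_zero_iff_ae_notMem.mp hd
    have h2 : ∀ᵐ z ∂(mu p lam α β δ), z.1 ∉ Icc (lam * (α - 1)) (lam * α) \ A ∧ z.1 ∉ K := by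
      apply mu_absolutelyContinuous.ae_le
      have q := Measure.quasiMeasurePreserving_fst (μ := (volume : Measure ℝ))
        (ν := (volume : Measure ℝ))
      exact q.ae (h1.and hae)
    obtain ⟨M, hM⟩ := hf.bdd
    have hintf : Integrable f (mu p lam α β δ) :=
      Integrable.of_bound hf.meas.aestronglyMeasurable M (Filter.Eventually.of_forall hM)
    have key := maximal_ergodic h.measurePreserving (f := fun z => f z - c)
      (hf.meas.sub_const c) (hintf.sub (integrable_const c)) (by
        filter_upwards [h2, Om_ae] with z hz hzO
        obtain ⟨t, v⟩ := z
        obtain ⟨hz1, hz2⟩ := hz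
        simp only at hz1 hz2
        have hb := h.Om_bounds hzO
        have htA : t ∈ A := by
          by_contra hh
          exact hz1 ⟨⟨hb.1, hb.2.1⟩, hh⟩
        have htD : Dexc c (fun N => birkhoffSum (Tnat lam α) f N (t, v)) :=
          Dexc.congr (h.fibre_cesaro hf (h.Om_zero hb.1 hb.2.1) hzO (iter_ne hl hz2)) htA
        obtain ⟨ε, hε, hfr⟩ := htD
        obtain ⟨N, hN1, hN2⟩ := Filter.frequently_atTop.mp hfr 1
        refine ⟨N, ?_⟩
        have hN : (1 : ℝ) ≤ N := by exact_mod_cast hN1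
        have e : birkhoffSum (Tnat lam α) (fun z => f z - c) N (t, v) =
            birkhoffSum (Tnat lam α) f N (t, v) - c * N := by
          unfold birkhoffSum
          rw [Finset.sum_sub_distrib, Finset.sum_const, Finset.card_range, nsmul_eq_mul, mul_comm c]
        rw [e]
        nlinarith)
    rw [integral_sub hintf (integrable_const c), integral_const, smul_eq_mul, measureReal_def] at key
    linarith

end Par

/-- piecewise linear cut-off -/
noncomputable def gcut (a b s : ℝ) : ℝ := max 0 (min 1 ((b - s) / (b - a)))

lemma gcut_nonneg (a b s : ℝ) : 0 ≤ gcut a b s := le_max_left _ _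

lemma gcut_le_one (a b s : ℝ) : gcut a b s ≤ 1 := max_le zero_le_one (min_le_left _ _)

lemma gcut_one {a b s : ℝ} (hab : a < b) (hs : s ≤ a) : gcut a b s = 1 := by
  unfold gcut
  have : 1 ≤ (b - s) / (b - a) := by rw [one_le_div (by linarith)]; linarith
  rw [min_eq_left this, max_eq_right zero_le_one]

lemma gcut_zero {a b s : ℝ} (hab : a < b) (hs : b ≤ s) : gcut a b s = 0 := by
  unfold gcut
  have : (b - s) / (b - a) ≤ 0 := div_nonpos_of_nonpos_of_nonneg (by linarith) (by linarith)
  exact max_eq_left (le_trans (min_le_right _ _) this)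

lemma gcut_lip {a b : ℝ} (hab : a < b) (s s' : ℝ) :
    |gcut a b s - gcut a b s'| ≤ |s - s'| / (b - a) := by
  unfold gcut
  refine (abs_max_sub_max_le_max _ _ _ _).trans ?_
  rw [sub_self, abs_zero]
  refine max_le (div_nonneg (abs_nonneg _) (by linarith)) ?_
  refine (abs_min_sub_min_le_max _ _ _ _).trans ?_
  rw [sub_self, abs_zero]
  refine max_le (div_nonneg (abs_nonneg _) (by linarith)) (le_of_eq ?_)
  rw [← sub_div, abs_div, abs_of_pos (by linarith : 0 < b - a), ← abs_neg]
  congr 2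
  ring

/-- the observable -/
noncomputable def gobs (a b : ℝ) (z : ℝ × ℝ) : ℝ := gcut a b |Ffn z.2 z.1|

lemma gobs_measurable (a b : ℝ) : Measurable (gobs a b) := by
  have h1 : Measurable fun z : ℝ × ℝ => |Ffn z.2 z.1| := by
    have : Measurable fun z : ℝ × ℝ => Ffn z.2 z.1 := by unfold Ffn; fun_prop
    exact measurable_norm.comp this
  have h2 : Measurable (gcut a b) := by
    unfold gcut
    exact measurable_const.max (measurable_const.min (by fun_prop))
  exact h2.comp h1

namespace Par

variable {p : ℕ} {lam α β δ : ℝ}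

lemma gobs_obs (h : Par p lam α β δ) {a b : ℝ} (hab : a < b) : Obs p lam α β δ (gobs a b) := by
  refine ⟨gobs_measurable a b, ⟨1, fun z => ?_⟩, ⟨1 / (1 - lam / 2) ^ 2 / (b - a), ?_⟩⟩
  · unfold gobs
    rw [abs_of_nonneg (gcut_nonneg _ _ _)]; exact gcut_le_one _ _ _
  · intro t v v' h1 h2
    unfold gobs
    refine (gcut_lip hab _ _).trans ?_
    rw [div_mul_eq_mul_div]
    apply div_le_div_of_nonneg_right _ (by linarith)
    refine (abs_abs_sub_abs_le _ _).trans ?_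
    simp only
    obtain ⟨b1, b2, b3, b4⟩ := h.Om_bounds h1
    obtain ⟨-, -, c3, c4⟩ := h.Om_bounds h2
    simp only at b1 b2 b3 b4 c3 c4
    have g1 := h.one_add_ge b1 b3 b4
    have g2 := h.one_add_ge b1 c3 c4
    have hl := h.lam_lt
    have hpos : 0 < 1 - lam / 2 := by linarith
    have p1 := h.one_add_pos b1 b3 b4
    have p2 := h.one_add_pos b1 c3 c4
    have e : Ffn v t - Ffn v' t = (t ^ 2 * (v' - v)) / ((1 + t * v) * (1 + t * v')) := by
      unfold Ffn
      rw [div_sub_div _ _ p1.ne' p2.ne']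
      congr 1; ring
    rw [e, abs_div, abs_of_pos (mul_pos p1 p2), abs_mul, abs_of_nonneg (sq_nonneg t),
      abs_sub_comm v' v, div_mul_eq_mul_div, one_mul]
    have ht : t ^ 2 ≤ 1 := by
      have := h.abs_le_r0 b1 b2
      have hr := h.r0_le
      rw [← sq_abs]
      exact pow_le_one₀ (abs_nonneg t) (by linarith)
    apply div_le_div₀ (abs_nonneg _) _ (by positivity) _
    · exact mul_le_of_le_one_left (abs_nonneg _) ht
    · rw [sq]; exact mul_le_mul g1 g2 hpos.le p1.le

lemma upper_le (h : Par p lam α β δ) {f : ℝ × ℝ → ℝ} (hf : Obs p lam α β δ f) {c : ℝ}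
    (hm : 0 < (mu p lam α β δ univ).toReal)
    (hc : ∫ z, f z ∂(mu p lam α β δ) ≤ c * (mu p lam α β δ univ).toReal) :
    ∀ᵐ x ∂(volume : Measure ℝ), x ∈ Icc (lam * (α - 1)) (lam * α) → ∀ ε : ℝ, 0 < ε →
      ∀ᶠ N : ℕ in Filter.atTop, birkhoffSum (Tnat lam α) f N (x, 0) < (c + ε) * N := by
  have : ∀ k : ℕ, ∀ᵐ x ∂(volume : Measure ℝ), x ∈ Icc (lam * (α - 1)) (lam * α) →
      ∀ ε : ℝ, 0 < ε → ∀ᶠ N : ℕ in Filter.atTop,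
        birkhoffSum (Tnat lam α) f N (x, 0) < ((c + 1 / ((k : ℝ) + 1)) + ε) * N := by
    intro k
    apply h.birkhoff_upper hf
    have : (0 : ℝ) < 1 / ((k : ℝ) + 1) := by positivity
    nlinarith
  filter_upwards [ae_all_iff.mpr this] with x hx hxI ε hε
  obtain ⟨k, hk⟩ := exists_nat_one_div_lt (half_pos hε)
  filter_upwards [hx k hxI (ε / 2) (half_pos hε)] with N hN
  refine hN.trans_le (mul_le_mul_of_nonneg_right (by linarith) (Nat.cast_nonneg N))

lemma gobs_int_le (h : Par p lam α β δ) {a b : ℝ} (hb : 0 < b) (hab : a < b) :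
    ∫ z, gobs a b z ∂(mu p lam α β δ) ≤ lam * b := by
  have hfin := h.mu_finite
  have hS : MeasurableSet {z : ℝ × ℝ | Ffn z.2 z.1 ∈ Ioo (-b) b} :=
    FfnSet_measurable measurableSet_Ioo
  have hi : Integrable (indicator {z : ℝ × ℝ | Ffn z.2 z.1 ∈ Ioo (-b) b} fun _ => (1 : ℝ))
      (mu p lam α β δ) := (integrable_const (1 : ℝ)).indicator hS
  have hg : Integrable (gobs a b) (mu p lam α β δ) :=
    Integrable.of_bound (gobs_measurable a b).aestronglyMeasurable 1
      (Filter.Eventually.of_forall fun z => by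
        rw [Real.norm_eq_abs]
        unfold gobs
        rw [abs_of_nonneg (gcut_nonneg _ _ _)]; exact gcut_le_one _ _ _)
  have h1 : ∫ z, gobs a b z ∂(mu p lam α β δ) ≤
      ∫ z, indicator {z : ℝ × ℝ | Ffn z.2 z.1 ∈ Ioo (-b) b} (fun _ => (1 : ℝ)) z
        ∂(mu p lam α β δ) := by
    apply integral_mono hg hi
    intro z
    by_cases hz : Ffn z.2 z.1 ∈ Ioo (-b) b
    · rw [indicator_of_mem (by exact hz)]; exact gcut_le_one _ _ _
    · rw [indicator_of_notMem (by exact hz)]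
      apply le_of_eq
      apply gcut_zero hab
      by_contra hc
      exact hz (abs_lt.mp (not_le.mp hc))
  refine h1.trans ?_
  rw [integral_indicator_const _ hS, smul_eq_mul, mul_one, measureReal_def]
  exact ENNReal.toReal_le_of_le_ofReal (mul_nonneg h.lam_pos.le hb.le) (h.M_upper hb.le)

lemma gobs_int_ge (h : Par p lam α β δ) {a b : ℝ} (ha : 0 < a) (hab : a < b)
    (h1 : a ≤ lam / (lam + 2)) (h2 : a ≤ lam * (2 - α * lam ^ 2) / (4 - lam ^ 2)) :
    lam * a ≤ ∫ z, gobs a b z ∂(mu p lam α β δ) := by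
  have hfin := h.mu_finite
  have hS : MeasurableSet {z : ℝ × ℝ | Ffn z.2 z.1 ∈ Ioo (-a) a} :=
    FfnSet_measurable measurableSet_Ioo
  have hi : Integrable (indicator {z : ℝ × ℝ | Ffn z.2 z.1 ∈ Ioo (-a) a} fun _ => (1 : ℝ))
      (mu p lam α β δ) := (integrable_const (1 : ℝ)).indicator hS
  have hg : Integrable (gobs a b) (mu p lam α β δ) :=
    Integrable.of_bound (gobs_measurable a b).aestronglyMeasurable 1
      (Filter.Eventually.of_forall fun z => by
        rw [Real.norm_eq_abs]
        unfold gobs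
        rw [abs_of_nonneg (gcut_nonneg _ _ _)]; exact gcut_le_one _ _ _)
  have h3 : ∫ z, indicator {z : ℝ × ℝ | Ffn z.2 z.1 ∈ Ioo (-a) a} (fun _ => (1 : ℝ)) z
        ∂(mu p lam α β δ) ≤ ∫ z, gobs a b z ∂(mu p lam α β δ) := by
    apply integral_mono hi hg
    intro z
    by_cases hz : Ffn z.2 z.1 ∈ Ioo (-a) a
    · rw [indicator_of_mem (by exact hz)]
      exact (gcut_one hab (abs_lt.mpr hz).le).ge
    · rw [indicator_of_notMem (by exact hz)]; exact gcut_nonneg _ _ _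
  refine le_trans (le_of_eq ?_) h3
  rw [integral_indicator_const _ hS, smul_eq_mul, mul_one, measureReal_def, h.M_eq ha h1 h2,
    ENNReal.toReal_ofReal (mul_nonneg h.lam_pos.le ha.le)]

/-- main frequency statement -/
theorem frequency (h : Par p lam α β δ) {m L : ℝ} (hm0 : 0 < m)
    (hm : (mu p lam α β δ univ).toReal = m)
    (hL1 : L ≤ lam / (lam + 2)) (hL2 : L ≤ lam * (2 - α * lam ^ 2) / (4 - lam ^ 2)) :
    ∀ᵐ x ∂(volume : Measure ℝ), x ∈ Icc (lam * (α - 1)) (lam * α) →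
      (∀ n : ℕ, (Tmap lam α)^[n] x ≠ 0) →
      ∀ κ : ℝ, 0 < κ → κ ≤ L →
        Filter.Tendsto
          (fun N : ℕ =>
            (((Finset.Icc 1 N).filter fun n => Theta lam α x n < κ).card : ℝ) / N)
          Filter.atTop (nhds (lam * κ / m)) := by
  have U : ∀ ab : ℚ × ℚ, ∀ᵐ x ∂(volume : Measure ℝ), 0 < (ab.2 : ℝ) → (ab.1 : ℝ) < ab.2 →
      x ∈ Icc (lam * (α - 1)) (lam * α) → ∀ ε : ℝ, 0 < ε → ∀ᶠ N : ℕ in Filter.atTop,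
        birkhoffSum (Tnat lam α) (gobs ab.1 ab.2) N (x, 0) < (lam * ab.2 / m + ε) * N := by
    rintro ⟨a, b⟩
    simp only
    by_cases hb : 0 < (b : ℝ)
    · by_cases hab : (a : ℝ) < b
      · have := h.upper_le (h.gobs_obs hab) (c := lam * b / m) (by rw [hm]; exact hm0)
          (by rw [hm, div_mul_cancel₀ _ hm0.ne']; exact h.gobs_int_le hb hab)
        filter_upwards [this] with x hx _ _
        exact hx
      · filter_upwards with x _ hc
        exact absurd hc hab
    · filter_upwards with x hc
      exact absurd hc hb
  have V : ∀ ab : ℚ × ℚ, ∀ᵐ x ∂(volume : Measure ℝ), 0 < (ab.1 : ℝ) → (ab.1 : ℝ) < ab.2 →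
      (ab.1 : ℝ) ≤ L →
      x ∈ Icc (lam * (α - 1)) (lam * α) → ∀ ε : ℝ, 0 < ε → ∀ᶠ N : ℕ in Filter.atTop,
        (lam * ab.1 / m - ε) * N < birkhoffSum (Tnat lam α) (gobs ab.1 ab.2) N (x, 0) := by
    rintro ⟨a, b⟩
    simp only
    by_cases hh : 0 < (a : ℝ) ∧ (a : ℝ) < b ∧ (a : ℝ) ≤ L
    · obtain ⟨ha, hab, haL⟩ := hh
      have := h.upper_le (h.gobs_obs hab).neg (c := -(lam * a / m)) (by rw [hm]; exact hm0)
          (by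
            rw [hm, neg_mul, div_mul_cancel₀ _ hm0.ne', integral_neg]
            exact neg_le_neg (h.gobs_int_ge ha hab (haL.trans hL1) (haL.trans hL2)))
      filter_upwards [this] with x hx _ _ _ hxI ε hε
      filter_upwards [hx hxI ε hε] with N hN
      have e : birkhoffSum (Tnat lam α) (fun z => - gobs a b z) N (x, 0) =
          - birkhoffSum (Tnat lam α) (gobs a b) N (x, 0) := by
        unfold birkhoffSum
        rw [Finset.sum_neg_distrib]
      rw [e] at hN
      linarith
    · filter_upwards with x h1 h2 h3
      exact absurd ⟨h1, h2, h3⟩ hh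
  filter_upwards [ae_all_iff.mpr U, ae_all_iff.mpr V] with x hU hV hxI hne κ hκ hκL
  have hlam := h.lam_pos
  have hTh : ∀ n a b, gobs a b ((Tnat lam α)^[n] (x, 0)) = gcut a b (Theta lam α x n) := by
    intro n a b
    rw [h.Theta_eq hxI.1 hxI.2 hne n]; rfl
  set cnt : ℕ → ℝ := fun N => (((Finset.Icc 1 N).filter fun n => Theta lam α x n < κ).card : ℝ)
    with hcnt
  have hsum : ∀ N, cnt N = ∑ n ∈ Finset.Ico 1 (N + 1), if Theta lam α x n < κ then (1 : ℝ) else 0 := by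
    intro N
    rw [hcnt]
    simp only
    rw [Finset.natCast_card_filter]
    apply Finset.sum_congr _ fun _ _ => rfl
    ext k; simp
  have hB : ∀ N a b, birkhoffSum (Tnat lam α) (gobs a b) (N + 1) (x, 0) =
      gcut a b (Theta lam α x 0) + ∑ n ∈ Finset.Ico 1 (N + 1), gcut a b (Theta lam α x n) := by
    intro N a b
    unfold birkhoffSum
    simp only [hTh]
    rw [Finset.range_eq_Ico, Finset.sum_eq_sum_Ico_succ_bot (by omega)]
  set l := lam * κ / m with hl
  have hl0 : 0 < l := by positivity
  rw [Metric.tendsto_atTop']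
  intro η hη
  -- rational approximations
  obtain ⟨b, hb1, hb2⟩ := exists_rat_btwn (show κ < κ + η / 4 * (m / lam) by
    have : 0 < η / 4 * (m / lam) := by positivity
    linarith)
  obtain ⟨a, ha1, ha2⟩ := exists_rat_btwn hb1
  obtain ⟨a', ha1', ha2'⟩ := exists_rat_btwn (show max 0 (κ - η / 4 * (m / lam)) < κ by
    have : 0 < η / 4 * (m / lam) := by positivity
    exact max_lt hκ (by linarith))
  obtain ⟨b', hb1', hb2'⟩ := exists_rat_btwn ha2'
  have hb3 : lam * b / m < l + η / 4 := by
    have : lam * (κ + η / 4 * (m / lam)) / m = l + η / 4 := by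
      rw [hl]; field_simp
    rw [← this]
    exact div_lt_div_of_pos_right (mul_lt_mul_of_pos_left hb2 hlam) hm0
  have ha3 : l - η / 4 < lam * a' / m := by
    have : lam * (κ - η / 4 * (m / lam)) / m = l - η / 4 := by
      rw [hl]; field_simp
    rw [← this]
    exact div_lt_div_of_pos_right (mul_lt_mul_of_pos_left ((le_max_right _ _).trans_lt ha1') hlam)
      hm0
  have u := hU (a, b) (hκ.trans hb1) ha2 hxI (η / 4) (by positivity)
  have v := hV (a', b') ((le_max_left _ _).trans_lt ha1') hb1' (ha2'.le.trans hκL) hxI (η / 4)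
    (by positivity)
  simp only at u v
  obtain ⟨N1, hN1⟩ := Filter.eventually_atTop.mp u
  obtain ⟨N2, hN2⟩ := Filter.eventually_atTop.mp v
  obtain ⟨N3, hN3⟩ := exists_nat_gt ((l + η + 1) / (η / 2))
  refine ⟨max N1 (max N2 N3), fun N hN => ?_⟩
  have hn1 : N1 ≤ N := (le_max_left _ _).trans hN.le
  have hn2 : N2 ≤ N := ((le_max_left _ _).trans (le_max_right _ _)).trans hN.le
  have hn3 : N3 ≤ N := ((le_max_right _ _).trans (le_max_right _ _)).trans hN.le
  have hN3' : (l + η + 1) < η / 2 * N := by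
    have : (N3 : ℝ) ≤ N := by exact_mod_cast hn3
    have h4 := hN3.trans_le this
    rw [div_lt_iff₀ (by positivity)] at h4
    linarith
  have hNpos : (0 : ℝ) < N := by
    by_contra hc
    have : (0 : ℝ) ≤ N := Nat.cast_nonneg N
    nlinarith
  have u1 := hN1 (N + 1) (by omega)
  have v1 := hN2 (N + 1) (by omega)
  rw [hB] at u1 v1
  push_cast at u1 v1
  have c1 : cnt N ≤ ∑ n ∈ Finset.Ico 1 (N + 1), gcut a b (Theta lam α x n) := by
    rw [hsum]
    apply Finset.sum_le_sum
    intro n _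
    split_ifs with hc
    · exact (gcut_one ha2 (hc.trans ha1).le).ge
    · exact gcut_nonneg _ _ _
  have c2 : ∑ n ∈ Finset.Ico 1 (N + 1), gcut a' b' (Theta lam α x n) ≤ cnt N := by
    rw [hsum]
    apply Finset.sum_le_sum
    intro n _
    split_ifs with hc
    · exact gcut_le_one _ _ _
    · exact (gcut_zero hb1' (hb2'.le.trans (not_lt.mp hc))).le
  have g1 := gcut_nonneg a b (Theta lam α x 0)
  have g2 := gcut_le_one a' b' (Theta lam α x 0)
  have w1 : (lam * b / m + η / 4) * ((N : ℝ) + 1) ≤ (l + η / 2) * (N + 1) :=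
    mul_le_mul_of_nonneg_right (by linarith) (by linarith)
  have w2 : (l - η / 2) * ((N : ℝ) + 1) ≤ (lam * a' / m - η / 4) * (N + 1) :=
    mul_le_mul_of_nonneg_right (by linarith) (by linarith)
  change dist (cnt N / N) l < η
  rw [Real.dist_eq, abs_lt]
  constructor
  · have : l - η < cnt N / N := by
      rw [lt_div_iff₀ hNpos]
      nlinarith
    linarith
  · have : cnt N / N < l + η := by
      rw [div_lt_iff₀ hNpos]
      nlinarith
    linarith

end Par

/-- Proposition 4.3: for even `q ≥ 4`, `1/2 ≤ α ≤ 1/λ` and every `c ≥ 1/ℒ_α`, for almost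
every `x` the asymptotic frequency of `n` with `Θₙ(x) < 1/c` equals `λ C_{q,α}/c`. -/
theorem stmt19 (q : ℕ) (hq : 4 ≤ q) (hqeven : Even q) (lam α : ℝ)
    (hlam : lam = 2 * Real.cos (Real.pi / q))
    (hα1 : 1 / 2 ≤ α) (hα2 : α ≤ 1 / lam)
    (L C : ℝ)
    (hL : L = min (lam / (lam + 2)) (lam * (2 - α * lam ^ 2) / (4 - lam ^ 2)))
    (hC : C = 1 / Real.log ((1 + Real.cos (Real.pi / q)) / Real.sin (Real.pi / q))) :
    ∀ᵐ x ∂(volume : Measure ℝ),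
      x ∈ Icc (lam * (α - 1)) (α * lam) →
      (∀ n : ℕ, (Tmap lam α)^[n] x ≠ 0) →
      ∀ c : ℝ, 1 / L ≤ c →
        Filter.Tendsto
          (fun N : ℕ =>
            (((Finset.Icc 1 N).filter fun n => Theta lam α x n < 1 / c).card : ℝ) / N)
          Filter.atTop (nhds (lam * C / c)) := by
  obtain ⟨p, δ, hpq, h⟩ := exists_par q hq hqeven lam α hlam hα1 hα2
  have hl := h.lam_pos
  have hl2 := h.lam_lt
  have hbf := h.b_formula.2
  have h4 : 0 < 4 - lam ^ 2 := by nlinarith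
  have hL0 : 0 < L := by
    rw [hL]
    exact lt_min (by positivity) (by positivity)
  have hL1 : L ≤ lam / (lam + 2) := by rw [hL]; exact min_le_left _ _
  have hL2 : L ≤ lam * (2 - α * lam ^ 2) / (4 - lam ^ 2) := by rw [hL]; exact min_le_right _ _
  have hfin := h.mu_finite
  have hm0 : 0 < (mu p lam α (Real.pi / q / 2) δ univ).toReal := by
    have h5 := h.M_eq hL0 hL1 hL2
    have h6 : ENNReal.ofReal (lam * L) ≤ mu p lam α (Real.pi / q / 2) δ univ := by
      rw [← h5]; exact measure_mono (subset_univ _)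
    apply ENNReal.toReal_pos _ (measure_ne_top _ _)
    intro hc
    rw [hc, nonpos_iff_eq_zero, ENNReal.ofReal_eq_zero] at h6
    have : 0 < lam * L := by positivity
    linarith
  have hmC : (mu p lam α (Real.pi / q / 2) δ univ).toReal = 1 / C := by
    have e : 2 * (Real.pi / q / 2) = Real.pi / q := by ring
    have hu := h.mu_univ
    rw [e] at hu
    rw [hu] at hm0 ⊢
    have hlog : 0 ≤ Real.log ((1 + Real.cos (Real.pi / q)) / Real.sin (Real.pi / q)) := by
      by_contra hc
      rw [ENNReal.ofReal_of_nonpos (not_le.mp hc).le, ENNReal.toReal_zero] at hm0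
      exact lt_irrefl _ hm0
    rw [ENNReal.toReal_ofReal hlog, hC, one_div_one_div]
  have key := h.frequency hm0 rfl hL1 hL2
  filter_upwards [key] with x hx hxI hne c hc
  have hc0 : 0 < c := lt_of_lt_of_le (one_div_pos.mpr hL0) hc
  have hκ : 1 / c ≤ L := by
    rw [div_le_iff₀ hc0]
    rw [div_le_iff₀ hL0] at hc
    linarith
  have := hx ⟨hxI.1, by linarith [hxI.2]⟩ hne (1 / c) (one_div_pos.mpr hc0) hκ
  rw [hmC] at this
  have e : lam * (1 / c) / (1 / C) = lam * C / c := by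
    rw [div_div_eq_mul_div, div_one]; ring
  rw [e] at this
  exact this
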